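/- arXiv:1707.02269 — 2 statements merged into one kernel-verified Lean document; each statement's English description precedes it below -/
import Mathlib

section
/- Let d ≥ 3 and let Ω ⊂ ℝ^d be a nonempty smooth bounded open set with connected exterior Ω^ext. Then there exists c' > 0 such that for all φ ∈ C_0^∞(closure(Ω^ext)), ∫_{Ω^ext} |∇φ|² dx ≥ c' ∫_{∂Ω} |φ|² dσ. -/
open MeasureTheory Real Set

noncomputable section

def HasSmoothBoundary {d : ℕ} (Ω : Set (EuclideanSpace ℝ (Fin d))) : Prop :=
  ∀ x ∈ frontier Ω, ∃ (U : Set (EuclideanSpace ℝ (Fin d)))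
      (f : EuclideanSpace ℝ (Fin d) → ℝ),
    IsOpen U ∧ x ∈ U ∧ ContDiff ℝ (⊤ : ℕ∞) f ∧ (∀ y ∈ U, fderiv ℝ f y ≠ 0) ∧
    Ω ∩ U = {y | y ∈ U ∧ f y < 0}

open scoped ENNReal NNReal

lemma oneD (g g' : ℝ → ℝ) (hg : ∀ t, HasDerivAt g (g' t) t) (hc : Continuous g')
    (b T : ℝ) (hb : 0 < b) (hT : 0 ≤ T) :
    ENNReal.ofReal (g 0 ^ 2) ≤ ENNReal.ofReal (exp (b*T)) * ENNReal.ofReal (g T ^ 2) +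
      ENNReal.ofReal (1/b) * ∫⁻ t in Ioc 0 T, ENNReal.ofReal (exp (b*t) * g' t ^ 2) := by
  have hgc : Continuous g := continuous_iff_continuousAt.2 fun t => (hg t).continuousAt
  have h1 : ∫ t in (0:ℝ)..T, (2 * g t * g' t * exp (b*t) + g t ^ 2 * (exp (b*t) * b))
      = g T ^ 2 * exp (b*T) - g 0 ^ 2 * exp (b*0) := by
    apply intervalIntegral.integral_eq_sub_of_hasDerivAt (f := fun t => g t ^ 2 * exp (b*t))
    · intro t _
      have h3 : HasDerivAt (fun t => exp (b*t)) (exp (b*t) * b) t := by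
        simpa using ((hasDerivAt_id t).const_mul b).exp
      have := ((hg t).pow 2).mul h3
      refine this.congr_deriv ?_
      simp
    · apply Continuous.intervalIntegrable; fun_prop
  have h2 : 0 ≤ ∫ t in (0:ℝ)..T, ((2 * g t * g' t * exp (b*t) + g t ^ 2 * (exp (b*t) * b))
      + (1/b) * (exp (b*t) * g' t ^ 2)) := by
    apply intervalIntegral.integral_nonneg hT
    intro t _
    have : (2 * g t * g' t * exp (b*t) + g t ^ 2 * (exp (b*t) * b))
        + (1/b) * (exp (b*t) * g' t ^ 2)
      = exp (b*t) / b * (b * g t + g' t)^2 := by field_simp; ring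
    rw [this]; positivity
  rw [intervalIntegral.integral_add (by apply Continuous.intervalIntegrable; fun_prop)
    (by apply Continuous.intervalIntegrable; fun_prop), h1, intervalIntegral.integral_const_mul,
    intervalIntegral.integral_of_le hT] at h2
  have h4 : 0 ≤ ∫ t in Ioc 0 T, exp (b*t) * g' t ^ 2 := by
    apply integral_nonneg; intro t; positivity
  rw [← ofReal_integral_eq_lintegral_ofReal, ← ENNReal.ofReal_mul (by positivity),
    ← ENNReal.ofReal_mul (by positivity), ← ENNReal.ofReal_add (by positivity) (by positivity)]
  · apply ENNReal.ofReal_le_ofReal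
    simp at h2 ⊢
    linarith
  · apply Continuous.integrableOn_Ioc; fun_prop
  · exact Filter.Eventually.of_forall fun t => by positivity

/-- `S` is controlled: the `L²(S, μ)` norm is bounded by the Dirichlet integral on `A`. -/
def Ctrl {d : ℕ} (A : Set (EuclideanSpace ℝ (Fin d))) (μ : Measure (EuclideanSpace ℝ (Fin d)))
    (S : Set (EuclideanSpace ℝ (Fin d))) : Prop :=
  ∃ C : ℝ≥0, ∀ φ : EuclideanSpace ℝ (Fin d) → ℝ, ContDiff ℝ (⊤ : ℕ∞) φ → HasCompactSupport φ →
    ∫⁻ x in S, ENNReal.ofReal (φ x ^ 2) ∂μ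
      ≤ C * ∫⁻ x in A, ENNReal.ofReal (‖fderiv ℝ φ x‖ ^ 2)

variable {d : ℕ}

lemma Ctrl.mono {A S T : Set (EuclideanSpace ℝ (Fin d))} {μ} (hST : S ⊆ T) (h : Ctrl A μ T) :
    Ctrl A μ S := by
  obtain ⟨C, hC⟩ := h
  exact ⟨C, fun φ h1 h2 => (lintegral_mono_set hST).trans (hC φ h1 h2)⟩

lemma Ctrl.union {A S T : Set (EuclideanSpace ℝ (Fin d))} {μ} (h : Ctrl A μ S) (h' : Ctrl A μ T) :
    Ctrl A μ (S ∪ T) := by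
  obtain ⟨C, hC⟩ := h
  obtain ⟨C', hC'⟩ := h'
  refine ⟨C + C', fun φ h1 h2 => (lintegral_union_le _ _ _).trans ?_⟩
  rw [ENNReal.coe_add, add_mul]
  exact add_le_add (hC φ h1 h2) (hC' φ h1 h2)

lemma Ctrl.compact {A S : Set (EuclideanSpace ℝ (Fin d))} {μ} (hS : IsCompact S)
    (h : ∀ x ∈ S, ∃ t ∈ nhdsWithin x S, Ctrl A μ t) : Ctrl A μ S := by
  refine hS.induction_on (p := Ctrl A μ) ⟨0, fun φ _ _ => by simp⟩
    (fun s t hst ht => ht.mono hst) (fun s t hs ht => hs.union ht) h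

lemma meas_grad {φ : EuclideanSpace ℝ (Fin d) → ℝ} (hφ : ContDiff ℝ (⊤ : ℕ∞) φ) :
    Continuous (fun x => ENNReal.ofReal (‖fderiv ℝ φ x‖ ^ 2)) := by
  have : Continuous (fderiv ℝ φ) := hφ.continuous_fderiv (by simp)
  exact ENNReal.continuous_ofReal.comp (by fun_prop)

lemma grad_line {φ : EuclideanSpace ℝ (Fin d) → ℝ} (hφ : ContDiff ℝ (⊤ : ℕ∞) φ)
    (x v : EuclideanSpace ℝ (Fin d)) (t s : ℝ) (ht : 0 ≤ t) (hts : t ≤ s) :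
    ENNReal.ofReal (φ x ^ 2) ≤ ENNReal.ofReal (exp s) * (ENNReal.ofReal (φ (x + t • v) ^ 2) +
      ENNReal.ofReal (‖v‖^2) *
        ∫⁻ τ in Ioc 0 s, ENNReal.ofReal (‖fderiv ℝ φ (x + τ • v)‖ ^ 2)) := by
  have hd : Differentiable ℝ φ := hφ.differentiable (by simp)
  have hc : Continuous (fderiv ℝ φ) := hφ.continuous_fderiv (by simp)
  have := oneD (fun τ => φ (x + τ • v)) (fun τ => fderiv ℝ φ (x + τ • v) v) (fun τ => by
    have h1 : HasDerivAt (fun τ : ℝ => x + τ • v) v τ := by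
      simpa using ((hasDerivAt_id τ).smul_const v).const_add x
    exact (hd (x + τ • v)).hasFDerivAt.comp_hasDerivAt τ h1)
    (by fun_prop) 1 t one_pos ht
  simp only [zero_smul, add_zero, one_mul, div_one, ENNReal.ofReal_one] at this
  refine this.trans ?_
  rw [mul_add]
  gcongr
  rw [← lintegral_const_mul _ (by
    refine Measurable.ennreal_ofReal (Continuous.measurable ?_); fun_prop),
    ← lintegral_const_mul _ (by
    refine Measurable.const_mul (Measurable.ennreal_ofReal (Continuous.measurable ?_)) _; fun_prop)]
  refine (lintegral_mono_set (Ioc_subset_Ioc_right hts)).trans ?_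
  apply setLIntegral_mono' measurableSet_Ioc
  intro τ hτ
  rw [← ENNReal.ofReal_mul (by positivity), ← ENNReal.ofReal_mul (by positivity)]
  apply ENNReal.ofReal_le_ofReal
  have h1 : (fderiv ℝ φ (x + τ • v) v)^2 ≤ ‖v‖^2 * ‖fderiv ℝ φ (x + τ • v)‖^2 := by
    have := (fderiv ℝ φ (x + τ • v)).le_opNorm v
    rw [← sq_abs, ← mul_pow, mul_comm ‖v‖]
    exact pow_le_pow_left₀ (abs_nonneg _) this 2
  have h2 : exp τ ≤ exp s := exp_le_exp.2 hτ.2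
  gcongr

lemma step {A : Set (EuclideanSpace ℝ (Fin d))} (x v : EuclideanSpace ℝ (Fin d)) (r : ℝ)
    (hA : ∀ τ ∈ Icc (0:ℝ) 1, Metric.ball (x + τ • v) r ⊆ A)
    (h : Ctrl A volume (Metric.ball (x + v) r)) : Ctrl A volume (Metric.ball x r) := by
  obtain ⟨C, hC⟩ := h
  refine ⟨(exp 1).toNNReal * (C + (‖v‖^2).toNNReal), fun φ h1 h2 => ?_⟩
  have key : ∀ (F : EuclideanSpace ℝ (Fin d) → ℝ≥0∞) (τ : ℝ),
      ∫⁻ y in Metric.ball x r, F (y + τ • v) = ∫⁻ y in Metric.ball (x + τ • v) r, F y := by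
    intro F τ
    rw [← lintegral_indicator measurableSet_ball, ← lintegral_indicator measurableSet_ball,
      ← lintegral_add_right_eq_self (fun y => (Metric.ball (x + τ • v) r).indicator F y) (τ • v)]
    congr 1
    ext y
    simp [indicator]
  have hg := meas_grad h1
  have hm2 : Continuous (fun p : EuclideanSpace ℝ (Fin d) × ℝ =>
      ENNReal.ofReal (‖fderiv ℝ φ (p.1 + p.2 • v)‖ ^ 2)) :=
    hg.comp (by fun_prop : Continuous fun p : EuclideanSpace ℝ (Fin d) × ℝ => p.1 + p.2 • v)
  have hφc : Continuous φ := h1.continuous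
  calc ∫⁻ y in Metric.ball x r, ENNReal.ofReal (φ y ^ 2)
      ≤ ∫⁻ y in Metric.ball x r, ENNReal.ofReal (exp 1) * (ENNReal.ofReal (φ (y + (1:ℝ) • v) ^ 2) +
        ENNReal.ofReal (‖v‖^2) *
        ∫⁻ τ in Ioc (0:ℝ) 1, ENNReal.ofReal (‖fderiv ℝ φ (y + τ • v)‖ ^ 2)) :=
        lintegral_mono fun y => grad_line h1 y v 1 1 zero_le_one le_rfl
    _ = ENNReal.ofReal (exp 1) * ((∫⁻ y in Metric.ball x r, ENNReal.ofReal (φ (y + (1:ℝ) • v) ^ 2)) +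
        ENNReal.ofReal (‖v‖^2) * ∫⁻ y in Metric.ball x r,
        ∫⁻ τ in Ioc (0:ℝ) 1, ENNReal.ofReal (‖fderiv ℝ φ (y + τ • v)‖ ^ 2)) := by
        rw [lintegral_const_mul' _ _ ENNReal.ofReal_ne_top, lintegral_add_left,
          lintegral_const_mul' _ _ ENNReal.ofReal_ne_top]
        exact Measurable.ennreal_ofReal (Continuous.measurable (by fun_prop))
    _ = ENNReal.ofReal (exp 1) * ((∫⁻ y in Metric.ball (x + v) r, ENNReal.ofReal (φ y ^ 2)) +
        ENNReal.ofReal (‖v‖^2) * ∫⁻ τ in Ioc (0:ℝ) 1, ∫⁻ y in Metric.ball (x + τ • v) r,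
         ENNReal.ofReal (‖fderiv ℝ φ y‖ ^ 2)) := by
        rw [lintegral_lintegral_swap hm2.measurable.aemeasurable,
          key (fun y => ENNReal.ofReal (φ y ^ 2))]
        simp_rw [key (fun y => ENNReal.ofReal (‖fderiv ℝ φ y‖ ^ 2))]
        simp
    _ ≤ ENNReal.ofReal (exp 1) * (C * (∫⁻ x in A, ENNReal.ofReal (‖fderiv ℝ φ x‖ ^ 2)) +
        ENNReal.ofReal (‖v‖^2) * ∫⁻ τ in Ioc (0:ℝ) 1,
          ∫⁻ x in A, ENNReal.ofReal (‖fderiv ℝ φ x‖ ^ 2)) := by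
        refine mul_le_mul' le_rfl (add_le_add ?_ (mul_le_mul' le_rfl ?_))
        · exact hC φ h1 h2
        · exact setLIntegral_mono' measurableSet_Ioc fun τ hτ =>
            lintegral_mono_set (hA τ ⟨hτ.1.le, hτ.2⟩)
    _ = _ := by
        simp only [lintegral_const, Measure.restrict_apply MeasurableSet.univ, univ_inter,
          Real.volume_Ioc, sub_zero, ENNReal.ofReal_one, mul_one]
        simp only [ENNReal.coe_mul, ENNReal.coe_add, ENNReal.ofReal]
        ring

lemma scaling (hd : 3 ≤ d) (F : EuclideanSpace ℝ (Fin d) → ℝ≥0∞) (hF : Measurable F)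
    (τ : ℝ) (hτ : 0 ≤ τ) :
    ∫⁻ x, F (exp τ • x) ≤ ENNReal.ofReal (exp (-3 * τ)) * ∫⁻ x, F x := by
  have h := Measure.map_addHaar_smul (volume : Measure (EuclideanSpace ℝ (Fin d))) (exp_pos τ).ne'
  rw [← lintegral_map (f := F) (g := fun x => exp τ • x) hF (by fun_prop), h, lintegral_smul_measure,
    smul_eq_mul]
  gcongr
  rw [abs_of_pos (by positivity), ← exp_nat_mul, ← exp_neg]
  apply exp_le_exp.2
  have : (3:ℝ) ≤ d := by exact_mod_cast hd
  simp only [finrank_euclideanSpace, Fintype.card_fin]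
  nlinarith

lemma far (hd : 3 ≤ d) {A : Set (EuclideanSpace ℝ (Fin d))} (hAo : IsOpen A) (R M : ℝ) (hR : 0 < R)
    (hA : ∀ x : EuclideanSpace ℝ (Fin d), R < ‖x‖ → x ∈ A) (K : Set (EuclideanSpace ℝ (Fin d)))
    (hKm : MeasurableSet K) (hK : ∀ x ∈ K, R < ‖x‖ ∧ ‖x‖ ≤ M) : Ctrl A volume K := by
  have hfin : (∫⁻ τ in Ioi (0:ℝ), ENNReal.ofReal (exp ((-1/2) * τ))) ≠ ⊤ := by
    have := (integrableOn_exp_mul_Ioi (a := -1/2) (by norm_num) 0)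
    rw [← ofReal_integral_eq_lintegral_ofReal this
      (Filter.Eventually.of_forall fun t => by positivity)]
    exact ENNReal.ofReal_ne_top
  obtain ⟨C, hC⟩ : ∃ C : ℝ≥0, (C : ℝ≥0∞) = _ := ⟨_, ENNReal.coe_toNNReal hfin⟩
  refine ⟨2 * (M^2).toNNReal * C, fun φ h1 h2 => ?_⟩
  have hdiff : Differentiable ℝ φ := h1.differentiable (by simp)
  have hc : Continuous (fderiv ℝ φ) := h1.continuous_fderiv (by simp)
  have hg := meas_grad h1
  obtain ⟨B, hB⟩ : ∃ B : ℝ, ∀ y, B < ‖y‖ → φ y = 0 := by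
    obtain ⟨B, hB⟩ := h2.isCompact.isBounded.exists_norm_le
    refine ⟨B, fun y hy => ?_⟩
    by_contra h
    exact absurd (hB y (subset_tsupport φ h)) (not_le.2 hy)
  set T := max 0 (B / R) with hT
  have hT0 : 0 ≤ T := le_max_left _ _
  set G : EuclideanSpace ℝ (Fin d) → ℝ≥0∞ := fun y => ENNReal.ofReal (‖fderiv ℝ φ y‖ ^ 2) with hG
  have pt : ∀ x ∈ K, ENNReal.ofReal (φ x ^ 2) ≤ 2 * ∫⁻ τ in Ioi (0:ℝ),
      ENNReal.ofReal (M^2 * exp (5/2 * τ)) * G (exp τ • x) := by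
    intro x hx
    obtain ⟨hx1, hx2⟩ := hK x hx
    have := oneD (fun τ => φ (exp τ • x)) (fun τ => fderiv ℝ φ (exp τ • x) (exp τ • x))
      (fun τ => by
        have h1 : HasDerivAt (fun τ : ℝ => exp τ • x) (exp τ • x) τ :=
          (Real.hasDerivAt_exp τ).smul_const x
        exact (hdiff (exp τ • x)).hasFDerivAt.comp_hasDerivAt τ h1)
      (by fun_prop) (1/2) T (by norm_num) hT0
    have hz : φ (exp T • x) = 0 := by
      apply hB
      rw [norm_smul, Real.norm_eq_abs, abs_of_pos (exp_pos _)]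
      have h3 : T + 1 ≤ exp T := add_one_le_exp T
      have h4 : B / R ≤ T := le_max_right _ _
      rw [div_le_iff₀ hR] at h4
      nlinarith [exp_pos T]
    simp only [exp_zero, one_smul, hz] at this
    refine this.trans ?_
    norm_num
    refine mul_le_mul' le_rfl ?_
    refine (lintegral_mono_set Ioc_subset_Ioi_self).trans ?_
    refine lintegral_mono fun τ => ?_
    rw [hG, ← ENNReal.ofReal_mul (by positivity)]
    apply ENNReal.ofReal_le_ofReal
    have h5 := (fderiv ℝ φ (exp τ • x)).le_opNorm x
    have h6 : (fderiv ℝ φ (exp τ • x) x)^2 ≤ ‖fderiv ℝ φ (exp τ • x)‖^2 * M^2 := by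
      rw [← sq_abs, ← mul_pow]
      refine pow_le_pow_left₀ (abs_nonneg _) (h5.trans ?_) 2
      gcongr
    have h7 : exp (5/2 * τ) = exp (1/2 * τ) * exp τ ^ 2 := by
      rw [← exp_nat_mul, ← exp_add]; congr 1; push_cast; ring
    rw [h7, mul_pow]
    calc _ = exp (1/2*τ) * exp τ ^ 2 * (fderiv ℝ φ (exp τ • x) x)^2 := by ring
      _ ≤ exp (1/2*τ) * exp τ ^ 2 * (‖fderiv ℝ φ (exp τ • x)‖^2 * M^2) := by gcongr
      _ = _ := by ring
  have hm2 : Measurable (fun p : EuclideanSpace ℝ (Fin d) × ℝ =>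
      ENNReal.ofReal (M^2 * exp (5/2 * p.2)) * G (exp p.2 • p.1)) := by
    refine Measurable.mul (Measurable.ennreal_ofReal (by fun_prop)) ?_
    exact (hg.comp (by fun_prop :
      Continuous fun p : EuclideanSpace ℝ (Fin d) × ℝ => exp p.2 • p.1)).measurable
  calc ∫⁻ x in K, ENNReal.ofReal (φ x ^ 2)
      ≤ ∫⁻ x in K, 2 * ∫⁻ τ in Ioi (0:ℝ), ENNReal.ofReal (M^2 * exp (5/2 * τ)) * G (exp τ • x) :=
        setLIntegral_mono' hKm pt
    _ = 2 * ∫⁻ τ in Ioi (0:ℝ), ∫⁻ x in K,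
          ENNReal.ofReal (M^2 * exp (5/2 * τ)) * G (exp τ • x) := by
        rw [lintegral_const_mul' _ _ (by simp), lintegral_lintegral_swap hm2.aemeasurable]
    _ ≤ 2 * ∫⁻ τ in Ioi (0:ℝ), ENNReal.ofReal (M^2) * ENNReal.ofReal (exp ((-1/2) * τ)) *
          ∫⁻ x in A, G x := by
        refine mul_le_mul' le_rfl (setLIntegral_mono' measurableSet_Ioi fun τ hτ => ?_)
        have hτ0 : 0 < τ := hτ
        rw [lintegral_const_mul' _ _ ENNReal.ofReal_ne_top]
        have e1 : ∫⁻ x in K, G (exp τ • x) ≤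
            ENNReal.ofReal (exp (-3 * τ)) * ∫⁻ x in A, G x := by
          rw [← lintegral_indicator hAo.measurableSet]
          refine le_trans ?_ (scaling hd _ (hg.measurable.indicator hAo.measurableSet) τ hτ0.le)
          rw [← lintegral_indicator hKm]
          refine lintegral_mono fun x => ?_
          by_cases hx : x ∈ K
          · rw [indicator_of_mem hx, indicator_of_mem]
            apply hA
            rw [norm_smul, Real.norm_eq_abs, abs_of_pos (exp_pos _)]
            have := add_one_le_exp τ
            nlinarith [(hK x hx).1]
          · simp [indicator_of_notMem hx]
        refine (mul_le_mul' le_rfl e1).trans ?_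
        rw [← mul_assoc, ← ENNReal.ofReal_mul (by positivity), ← ENNReal.ofReal_mul (by positivity),
          mul_assoc, ← exp_add]
        apply le_of_eq
        congr 4
        ring
    _ = _ := by
        rw [lintegral_mul_const _ (Measurable.const_mul
          (Measurable.ennreal_ofReal (by fun_prop)) _),
          lintegral_const_mul' _ _ ENNReal.ofReal_ne_top, ← hC]
        simp only [ENNReal.coe_mul, ENNReal.ofReal, hG, ENNReal.coe_ofNat]
        ring

lemma good_all (hd : 3 ≤ d) {A : Set (EuclideanSpace ℝ (Fin d))} (hAo : IsOpen A)
    (hAc : IsPreconnected A) (R : ℝ) (hR : 0 < R)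
    (hA : ∀ x : EuclideanSpace ℝ (Fin d), R < ‖x‖ → x ∈ A) :
    ∀ x ∈ A, ∃ r > 0, Ctrl A volume (Metric.ball x r) := by
  let u : Set (EuclideanSpace ℝ (Fin d)) := {x | ∃ r > 0, Ctrl A volume (Metric.ball x r)}
  have huo : IsOpen u := by
    rw [Metric.isOpen_iff]
    rintro x ⟨r, hr, h⟩
    refine ⟨r / 2, by positivity, fun y hy => ⟨r / 2, by positivity, h.mono ?_⟩⟩
    apply Metric.ball_subset_ball'
    have := Metric.mem_ball.1 hy
    linarith
  refine hAc.subset_of_closure_inter_subset huo ?_ ?_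
  · let x0 : EuclideanSpace ℝ (Fin d) := EuclideanSpace.single ⟨0, by omega⟩ (R + 2)
    have hx0 : ‖x0‖ = R + 2 := by
      simp only [x0, PiLp.norm_single, Real.norm_eq_abs]
      exact abs_of_pos (by linarith)
    refine ⟨x0, hA x0 (by linarith), 1, one_pos, far hd hAo R (R+3) hR hA _ measurableSet_ball ?_⟩
    intro x hx
    rw [mem_ball_iff_norm] at hx
    have h1 := norm_sub_norm_le x x0
    have h2 := norm_sub_norm_le x0 x
    rw [norm_sub_rev] at h2
    constructor <;> linarith
  · rintro x ⟨hx, hxA⟩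
    obtain ⟨ρ, hρ, hball⟩ := Metric.isOpen_iff.1 hAo x hxA
    obtain ⟨y, ⟨r, hr, hy⟩, hxy⟩ := Metric.mem_closure_iff.1 hx (ρ / 2) (by positivity)
    refine ⟨min r (ρ/2), by positivity, step x (y - x) _ ?_ ?_⟩
    · intro τ hτ z hz
      apply hball
      rw [mem_ball_iff_norm] at hz ⊢
      rw [dist_eq_norm, norm_sub_rev] at hxy
      have e : z - x = (z - (x + τ • (y - x))) + τ • (y - x) := by abel
      rw [e]
      refine (norm_add_le _ _).trans_lt ?_
      rw [norm_smul, Real.norm_eq_abs, abs_of_nonneg hτ.1]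
      have := min_le_right r (ρ/2)
      nlinarith [hτ.2, norm_nonneg (y - x)]
    · refine hy.mono ?_
      rw [add_sub_cancel]
      exact Metric.ball_subset_ball (min_le_left _ _)

lemma strip {m : ℕ} (L : EuclideanSpace ℝ (Fin d) ≃L[ℝ] ℝ × (Fin m → ℝ))
    (S : Set (EuclideanSpace ℝ (Fin d))) (K : ℝ≥0)
    (hK : ∀ y ∈ S, ∀ z ∈ S, ‖y - z‖ ≤ K * ‖(L y).2 - (L z).2‖) :
    ∃ C : ℝ≥0, ∀ F : EuclideanSpace ℝ (Fin d) → ℝ≥0∞, Measurable F →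
      ∫⁻ y in S, (∫⁻ t : ℝ, F (y + t • L.symm (1, 0))) ∂(μH[(m:ℝ)]) ≤ C * ∫⁻ x, F x := by
  have hP : Measurable (fun y => (L y).2) := (by fun_prop : Continuous fun y => (L y).2).measurable
  have hmap : Measure.map (fun y => (L y).2) ((μH[(m:ℝ)]).restrict S) ≤
      ((K ^ m : ℝ≥0) : ℝ≥0∞) • (volume : Measure (Fin m → ℝ)) := by
    refine Measure.le_iff.2 fun E hE => ?_
    rw [Measure.map_apply hP hE, Measure.restrict_apply (hP hE)]
    set S' := (fun y => (L y).2) ⁻¹' E ∩ S with hS'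
    have hinj : InjOn (fun y => (L y).2) S' := by
      intro y hy z hz h
      have := hK y hy.2 z hz.2
      simp only at h
      rw [h, sub_self, norm_zero, mul_zero] at this
      exact sub_eq_zero.1 (norm_le_zero_iff.1 this)
    have hleft := hinj.leftInvOn_invFunOn
    have hlip : LipschitzOnWith K (Function.invFunOn (fun y => (L y).2) S')
        ((fun y => (L y).2) '' S') := by
      refine LipschitzOnWith.of_dist_le_mul ?_
      rintro _ ⟨y, hy, rfl⟩ _ ⟨z, hz, rfl⟩
      rw [hleft hy, hleft hz, dist_eq_norm, dist_eq_norm]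
      exact hK y hy.2 z hz.2
    have h1 := hlip.hausdorffMeasure_image_le (d := (m:ℝ)) (by positivity)
    rw [hleft.image_image] at h1
    have h2 : (μH[(m:ℝ)] : Measure (Fin m → ℝ)) = volume := by
      have := hausdorffMeasure_pi_real (ι := Fin m)
      rwa [Fintype.card_fin] at this
    rw [h2] at h1
    refine h1.trans ?_
    rw [Measure.smul_apply, smul_eq_mul, ENNReal.rpow_natCast, ENNReal.coe_pow]
    gcongr
    rintro _ ⟨y, hy, rfl⟩
    exact hy.1
  have hH : (Measure.map L.symm (volume : Measure (ℝ × (Fin m → ℝ)))).IsAddHaarMeasure := by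
    have : (volume : Measure (ℝ × (Fin m → ℝ))).IsAddHaarMeasure := by
      rw [Measure.volume_eq_prod]; infer_instance
    exact L.symm.isAddHaarMeasure_map _
  obtain ⟨c, hc⟩ : ∃ c : ℝ≥0, Measure.map L.symm (volume : Measure (ℝ × (Fin m → ℝ))) =
      c • (volume : Measure (EuclideanSpace ℝ (Fin d))) :=
    ⟨_, Measure.isAddLeftInvariant_eq_smul _ _⟩
  refine ⟨K ^ m * c, fun F hF => ?_⟩
  have hFL : Measurable (fun p : ℝ × (Fin m → ℝ) => F (L.symm p)) :=
    hF.comp L.symm.continuous.measurable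
  set G : (Fin m → ℝ) → ℝ≥0∞ := fun p => ∫⁻ t : ℝ, F (L.symm (t, p)) with hG
  have hGm : Measurable G := hFL.lintegral_prod_left'
  have e1 : ∀ y, ∫⁻ t : ℝ, F (y + t • L.symm (1, 0)) = G ((L y).2) := by
    intro y
    rw [hG]
    simp only
    rw [← lintegral_add_right_eq_self (fun t => F (L.symm (t, (L y).2))) ((L y).1)]
    congr 1
    ext t
    congr 1
    apply L.injective
    ext <;> simp [add_comm]
  simp_rw [e1]
  rw [← lintegral_map (f := G) (g := fun y => (L y).2) hGm hP]
  refine (lintegral_mono' hmap le_rfl).trans ?_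
  rw [lintegral_smul_measure, smul_eq_mul, hG,
    ← lintegral_prod_symm (μ := volume) (ν := volume) (fun p : ℝ × (Fin m → ℝ) => F (L.symm p))
      hFL.aemeasurable, ← Measure.volume_eq_prod,
    ← lintegral_map (f := F) (g := L.symm) hF L.symm.continuous.measurable, hc,
    lintegral_smul_measure, ENNReal.coe_mul, mul_assoc]
  rfl

lemma exists_L {m : ℕ} (g : EuclideanSpace ℝ (Fin (m+1)) →L[ℝ] ℝ) (hg : g ≠ 0) :
    ∃ L : EuclideanSpace ℝ (Fin (m+1)) ≃L[ℝ] ℝ × (Fin m → ℝ), ∀ v, (L v).1 = g v := by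
  obtain ⟨w, hw⟩ : ∃ w, g w ≠ 0 := by
    by_contra! h
    exact hg (ContinuousLinearMap.ext h)
  let f₂ : ℝ →L[ℝ] EuclideanSpace ℝ (Fin (m+1)) :=
    ContinuousLinearMap.toSpanSingleton ℝ ((g w)⁻¹ • w)
  have hr : Function.RightInverse f₂ g := by
    intro t
    simp [f₂, hw]
  let L1 := ContinuousLinearEquiv.equivOfRightInverse g f₂ hr
  have hfin : Module.finrank ℝ (LinearMap.ker (g : EuclideanSpace ℝ (Fin (m+1)) →ₗ[ℝ] ℝ))
      = Module.finrank ℝ (Fin m → ℝ) := by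
    have h1 := L1.toLinearEquiv.finrank_eq
    rw [Module.finrank_prod] at h1
    simp at h1 ⊢
    omega
  let L2 := ContinuousLinearEquiv.ofFinrankEq hfin
  refine ⟨L1.trans ((ContinuousLinearEquiv.refl ℝ ℝ).prodCongr L2), fun v => ?_⟩
  simp [L1]

lemma boundary {m : ℕ} (Ω : Set (EuclideanSpace ℝ (Fin (m+1)))) (hop : IsOpen Ω)
    (hsm : HasSmoothBoundary Ω)
    (hgood : ∀ K ⊆ (closure Ω)ᶜ, IsCompact K → Ctrl (closure Ω)ᶜ volume K)
    (hfr : IsCompact (frontier Ω))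
    (x0 : EuclideanSpace ℝ (Fin (m+1))) (hx0 : x0 ∈ frontier Ω) :
    ∃ t ∈ nhdsWithin x0 (frontier Ω), Ctrl (closure Ω)ᶜ (μH[(m:ℝ)]) t := by
  obtain ⟨U, f, hU, hxU, hf, hdf, hΩ⟩ := hsm x0 hx0
  set A := (closure Ω)ᶜ with hA
  have hAm : MeasurableSet A := isClosed_closure.isOpen_compl.measurableSet
  -- on `U`, points of the closure satisfy `f ≤ 0`, boundary points satisfy `f = 0`
  have hcl : ∀ y ∈ U, y ∈ closure Ω → f y ≤ 0 := by
    intro y hy hyc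
    by_contra! h
    have hn : U ∩ {z | 0 < f z} ∈ nhds y :=
      Filter.inter_mem (hU.mem_nhds hy) ((isOpen_lt continuous_const hf.continuous).mem_nhds h)
    obtain ⟨z, ⟨hz1, hz2⟩, hz3⟩ := mem_closure_iff_nhds.1 hyc _ hn
    have : z ∈ Ω ∩ U := ⟨hz3, hz1⟩
    rw [hΩ] at this
    exact absurd this.2 (not_lt.2 (le_of_lt hz2))
  have hfr0 : ∀ y ∈ U, y ∈ frontier Ω → f y = 0 := by
    intro y hy hyf
    refine le_antisymm (hcl y hy (frontier_subset_closure hyf)) ?_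
    by_contra! h
    have : y ∈ Ω ∩ U := by rw [hΩ]; exact ⟨hy, h⟩
    rw [hop.frontier_eq] at hyf
    exact hyf.2 this.1
  obtain ⟨L, hL⟩ := exists_L (fderiv ℝ f x0) (hdf x0 hxU)
  set n := L.symm (1, 0) with hn
  set N : ℝ≥0 := ‖(L.symm : ℝ × (Fin m → ℝ) →L[ℝ] EuclideanSpace ℝ (Fin (m+1)))‖₊ + 1 with hN
  have hN0 : 0 < N := by positivity
  have hLs : ∀ p, ‖L.symm p‖ ≤ N * ‖p‖ := by
    intro p
    have := (L.symm : ℝ × (Fin m → ℝ) →L[ℝ] EuclideanSpace ℝ (Fin (m+1))).le_opNorm p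
    refine this.trans ?_
    gcongr
    simp [hN]
  have hnN : ‖n‖ ≤ N := by simpa using hLs (1, 0)
  have hgn : fderiv ℝ f x0 n = 1 := by rw [← hL]; simp [hn]
  set ε : ℝ≥0 := (2 * N)⁻¹ with hε
  have hε0 : 0 < ε := by positivity
  have hεN : (ε : ℝ) * N = 1 / 2 := by
    rw [hε]; push_cast; field_simp
  have hstrict : HasStrictFDerivAt f (fderiv ℝ f x0) x0 :=
    hf.contDiffAt.hasStrictFDerivAt (by simp)
  obtain ⟨W, hW, happ⟩ := hstrict.approximates_deriv_on_nhds (c := ε) (Or.inr hε0)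
  obtain ⟨δ, hδ, hball⟩ := Metric.mem_nhds_iff.1 (Filter.inter_mem hW (hU.mem_nhds hxU))
  set S := frontier Ω ∩ Metric.closedBall x0 (δ/2) with hS
  have hSc : IsCompact S := hfr.inter_right Metric.isClosed_closedBall
  have hSW : ∀ y ∈ S, y ∈ W ∧ y ∈ U := fun y hy =>
    hball (Metric.closedBall_subset_ball (by linarith) hy.2)
  set s : ℝ := δ / (4 * N) with hs
  have hs0 : 0 < s := by positivity
  have hmove : ∀ y ∈ S, ∀ t ∈ Icc 0 s, y + t • n ∈ W ∧ y + t • n ∈ U := by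
    intro y hy t ht
    apply hball
    rw [mem_ball_iff_norm]
    have h1 : ‖y - x0‖ ≤ δ / 2 := mem_closedBall_iff_norm.1 hy.2
    have h2 : ‖t • n‖ ≤ s * N := by
      rw [norm_smul, Real.norm_eq_abs, abs_of_nonneg ht.1]
      exact mul_le_mul ht.2 hnN (norm_nonneg _) hs0.le
    have h3 : s * N = δ / 4 := by rw [hs]; field_simp
    have e : y + t • n - x0 = (y - x0) + t • n := by abel
    rw [e]
    refine (norm_add_le _ _).trans_lt ?_
    linarith
  have hext : ∀ y ∈ S, ∀ t ∈ Ioc 0 s, y + t • n ∈ A := by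
    intro y hy t ht hc
    have hm := hmove y hy t ⟨ht.1.le, ht.2⟩
    have h1 := hcl _ hm.2 hc
    have h2 := happ _ hm.1 _ (hSW y hy).1
    rw [hfr0 y (hSW y hy).2 hy.1] at h2
    simp only [add_sub_cancel_left, map_smul, hgn, sub_zero, smul_eq_mul, mul_one, norm_smul,
      Real.norm_eq_abs, abs_of_pos ht.1] at h2
    have h3 := (abs_le.1 h2).1
    have h4 : (ε:ℝ) * (t * ‖n‖) ≤ t * (1/2) := by
      rw [← hεN]
      have : (ε:ℝ) * t * ‖n‖ ≤ ε * t * N := by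
        have := ht.1.le
        gcongr
      linarith
    linarith [ht.1]
  have hanti : ∀ y ∈ S, ∀ z ∈ S, ‖y - z‖ ≤ (2 * N : ℝ≥0) * ‖(L y).2 - (L z).2‖ := by
    intro y hy z hz
    have h2 := happ _ (hSW y hy).1 _ (hSW z hz).1
    rw [hfr0 y (hSW y hy).2 hy.1, hfr0 z (hSW z hz).2 hz.1] at h2
    simp only [sub_self, zero_sub, norm_neg] at h2
    have h3 := hLs (L (y - z))
    rw [L.symm_apply_apply] at h3
    have h4 : ‖L (y - z)‖ ≤ ‖fderiv ℝ f x0 (y - z)‖ + ‖(L y).2 - (L z).2‖ := by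
      rw [Prod.norm_def, hL, map_sub L, Prod.snd_sub]
      exact max_le_add_of_nonneg (norm_nonneg _) (norm_nonneg _)
    have h5 : (N:ℝ) * (ε * ‖y - z‖) = 1/2 * ‖y - z‖ := by rw [← hεN]; ring
    have h6 : (N:ℝ) * ‖L (y - z)‖ ≤ N * (ε * ‖y - z‖ + ‖(L y).2 - (L z).2‖) := by
      gcongr; linarith
    push_cast
    linarith
  obtain ⟨C, hC⟩ := strip L S (2 * N) hanti
  set K := (fun p : EuclideanSpace ℝ (Fin (m+1)) × ℝ => p.1 + p.2 • n) '' (S ×ˢ Icc (s/2) s) with hK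
  have hKc : IsCompact K := (hSc.prod isCompact_Icc).image (by fun_prop)
  have hKA : K ⊆ A := by
    rintro _ ⟨⟨y, t⟩, ⟨hy, ht⟩, rfl⟩
    exact hext y hy t ⟨by linarith [ht.1], ht.2⟩
  obtain ⟨C1, hC1⟩ := hgood K hKA hKc
  refine ⟨S, inter_mem_nhdsWithin _ (Metric.closedBall_mem_nhds _ (by positivity)), ?_⟩
  set c2 : ℝ≥0 := (s/2).toNNReal with hc2
  have hc20 : c2 ≠ 0 := by
    rw [hc2]; simp; linarith
  refine ⟨c2⁻¹ * (exp s).toNNReal * C * (C1 + (‖n‖^2).toNNReal * c2), fun φ h1 h2 => ?_⟩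
  have hg := meas_grad h1
  have hφc : Continuous φ := h1.continuous
  have hφm : Measurable (fun y => ENNReal.ofReal (φ y ^ 2)) :=
    Measurable.ennreal_ofReal (Continuous.measurable (by fun_prop))
  set D := ∫⁻ x in A, ENNReal.ofReal (‖fderiv ℝ φ x‖ ^ 2) with hD
  set F1 := K.indicator (fun y => ENNReal.ofReal (φ y ^ 2)) with hF1
  set F2 := A.indicator (fun y => ENNReal.ofReal (‖fderiv ℝ φ y‖ ^ 2)) with hF2
  have hF1m : Measurable F1 := hφm.indicator hKc.measurableSet
  have hF2m : Measurable F2 := hg.measurable.indicator hAm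
  have hl1 : ∀ y : EuclideanSpace ℝ (Fin (m+1)), Measurable fun t : ℝ => y + t • n := fun y =>
    (by fun_prop : Continuous fun t : ℝ => y + t • n).measurable
  have m1 : ∀ y, Measurable fun t : ℝ => ENNReal.ofReal (φ (y + t • n) ^ 2) :=
    fun y => hφm.comp (hl1 y)
  have m2 : ∀ y, Measurable fun t : ℝ => F1 (y + t • n) := fun y => hF1m.comp (hl1 y)
  have m3 : ∀ y, Measurable fun t : ℝ => F2 (y + t • n) := fun y => hF2m.comp (hl1 y)
  have pt : ∀ y ∈ S, (c2 : ℝ≥0∞) * ENNReal.ofReal (φ y ^ 2) ≤ ENNReal.ofReal (exp s) *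
      ∫⁻ t : ℝ, (F1 (y + t • n) + ENNReal.ofReal (‖n‖^2) * c2 * F2 (y + t • n)) := by
    intro y hy
    have hI : ∫⁻ τ in Ioc 0 s, ENNReal.ofReal (‖fderiv ℝ φ (y + τ • n)‖ ^ 2)
        ≤ ∫⁻ t : ℝ, F2 (y + t • n) := by
      rw [← lintegral_indicator measurableSet_Ioc]
      refine lintegral_mono fun t => ?_
      by_cases ht : t ∈ Ioc 0 s
      · rw [indicator_of_mem ht, hF2, indicator_of_mem (hext y hy t ht)]
      · simp [indicator_of_notMem ht]
    have hJ : ∫⁻ t in Ioc (s/2) s, ENNReal.ofReal (φ (y + t • n) ^ 2)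
        ≤ ∫⁻ t : ℝ, F1 (y + t • n) := by
      rw [← lintegral_indicator measurableSet_Ioc]
      refine lintegral_mono fun t => ?_
      by_cases ht : t ∈ Ioc (s/2) s
      · rw [indicator_of_mem ht, hF1, indicator_of_mem]
        exact ⟨(y, t), ⟨hy, ht.1.le, ht.2⟩, rfl⟩
      · simp [indicator_of_notMem ht]
    have hvol : (volume (Ioc (s/2) s)) = (c2 : ℝ≥0∞) := by
      rw [Real.volume_Ioc, hc2, ENNReal.ofReal]; congr 2; ring
    calc (c2 : ℝ≥0∞) * ENNReal.ofReal (φ y ^ 2)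
        = ∫⁻ t in Ioc (s/2) s, ENNReal.ofReal (φ y ^ 2) := by
          rw [lintegral_const, Measure.restrict_apply MeasurableSet.univ, univ_inter, hvol, mul_comm]
      _ ≤ ∫⁻ t in Ioc (s/2) s, ENNReal.ofReal (exp s) * (ENNReal.ofReal (φ (y + t • n) ^ 2) +
            ENNReal.ofReal (‖n‖^2) *
            ∫⁻ τ in Ioc 0 s, ENNReal.ofReal (‖fderiv ℝ φ (y + τ • n)‖ ^ 2)) :=
          setLIntegral_mono' measurableSet_Ioc fun t ht =>
            grad_line h1 y n t s (by linarith [ht.1]) ht.2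
      _ = ENNReal.ofReal (exp s) * ((∫⁻ t in Ioc (s/2) s, ENNReal.ofReal (φ (y + t • n) ^ 2)) +
            ENNReal.ofReal (‖n‖^2) *
            (∫⁻ τ in Ioc 0 s, ENNReal.ofReal (‖fderiv ℝ φ (y + τ • n)‖ ^ 2)) * c2) := by
          rw [lintegral_const_mul' _ _ ENNReal.ofReal_ne_top,
            lintegral_add_left (m1 y), lintegral_const,
            Measure.restrict_apply MeasurableSet.univ, univ_inter, hvol]
      _ ≤ ENNReal.ofReal (exp s) * ((∫⁻ t : ℝ, F1 (y + t • n)) +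
            ENNReal.ofReal (‖n‖^2) * (∫⁻ t : ℝ, F2 (y + t • n)) * c2) := by
          exact mul_le_mul' le_rfl (add_le_add hJ
            (mul_le_mul' (mul_le_mul' le_rfl hI) le_rfl))
      _ = _ := by
          rw [lintegral_add_left (m2 y), lintegral_const_mul _ (m3 y)]
          ring
  have hc2i : ((c2⁻¹ : ℝ≥0) : ℝ≥0∞) * c2 = 1 := by
    rw [← ENNReal.coe_mul, inv_mul_cancel₀ hc20, ENNReal.coe_one]
  calc ∫⁻ y in S, ENNReal.ofReal (φ y ^ 2) ∂(μH[(m:ℝ)])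
      = ((c2⁻¹ : ℝ≥0) : ℝ≥0∞) * ∫⁻ y in S, c2 * ENNReal.ofReal (φ y ^ 2) ∂(μH[(m:ℝ)]) := by
        rw [lintegral_const_mul _ hφm, ← mul_assoc, hc2i, one_mul]
    _ ≤ ((c2⁻¹ : ℝ≥0) : ℝ≥0∞) * ∫⁻ y in S, ENNReal.ofReal (exp s) *
      (∫⁻ t : ℝ, (F1 (y + t • n) + ENNReal.ofReal (‖n‖^2) * c2 * F2 (y + t • n))) ∂(μH[(m:ℝ)]) :=
        mul_le_mul' le_rfl (setLIntegral_mono' hSc.measurableSet pt)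
    _ ≤ ((c2⁻¹ : ℝ≥0) : ℝ≥0∞) * (ENNReal.ofReal (exp s) *
      (C * ∫⁻ x, (F1 x + ENNReal.ofReal (‖n‖^2) * c2 * F2 x))) := by
        rw [lintegral_const_mul' _ _ ENNReal.ofReal_ne_top]
        exact mul_le_mul' le_rfl (mul_le_mul' le_rfl
          (hC (fun x => F1 x + ENNReal.ofReal (‖n‖^2) * c2 * F2 x) (hF1m.add (hF2m.const_mul _))))
    _ ≤ ((c2⁻¹ : ℝ≥0) : ℝ≥0∞) * (ENNReal.ofReal (exp s) *
      (C * (C1 * D + ENNReal.ofReal (‖n‖^2) * c2 * D))) := by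
        rw [lintegral_add_left hF1m, lintegral_const_mul _ hF2m, hF1, hF2,
          lintegral_indicator hKc.measurableSet, lintegral_indicator hAm]
        exact mul_le_mul' le_rfl (mul_le_mul' le_rfl (mul_le_mul' le_rfl
          (add_le_add (hC1 φ h1 h2) le_rfl)))
    _ = _ := by
        simp only [ENNReal.coe_mul, ENNReal.coe_add, ENNReal.ofReal]
        ring

/-- Let `d ≥ 3` and `Ω ⊂ ℝ^d` be a nonempty smooth bounded open set with connected exterior.
Then there is `c' > 0` such that every smooth compactly supported function `φ` on the closure
of the exterior satisfies `∫_{Ω^ext} |∇φ|² ≥ c' ∫_{∂Ω} |φ|² dσ`, the boundary integral being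
with respect to the surface (`(d-1)`-dimensional Hausdorff) measure. -/
theorem statement1 (d : ℕ) (hd : 3 ≤ d) (Ω : Set (EuclideanSpace ℝ (Fin d)))
    (hne : Ω.Nonempty) (hop : IsOpen Ω) (hbd : Bornology.IsBounded Ω)
    (hsm : HasSmoothBoundary Ω) (hconn : IsConnected ((closure Ω)ᶜ)) :
    ∃ c' > (0 : ℝ), ∀ φ : EuclideanSpace ℝ (Fin d) → ℝ,
      ContDiff ℝ (⊤ : ℕ∞) φ → HasCompactSupport φ →
      (∫ x in (closure Ω)ᶜ, ‖fderiv ℝ φ x‖ ^ 2) ≥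
        c' * ∫ x in frontier Ω, (φ x) ^ 2 ∂(μH[(d : ℝ) - 1]) := by
  obtain ⟨m, rfl⟩ : ∃ m, d = m + 1 := ⟨d - 1, by omega⟩
  have hdm : ((m + 1 : ℕ) : ℝ) - 1 = m := by push_cast; ring
  rw [hdm]
  have hAo : IsOpen (closure Ω)ᶜ := isClosed_closure.isOpen_compl
  have hfr : IsCompact (frontier Ω) :=
    hbd.isCompact_closure.of_isClosed_subset isClosed_frontier frontier_subset_closure
  obtain ⟨R, hR⟩ := hbd.closure.exists_norm_le
  have hgood := good_all hd hAo hconn.isPreconnected (max R 1) (by positivity) (fun x hx hc => by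
    have := hR x hc
    have := le_max_left R 1
    linarith)
  have hcomp : ∀ K ⊆ (closure Ω)ᶜ, IsCompact K → Ctrl (closure Ω)ᶜ volume K := by
    intro K hK hKc
    refine Ctrl.compact hKc fun x hx => ?_
    obtain ⟨r, hr, h⟩ := hgood x (hK hx)
    exact ⟨_, mem_nhdsWithin_of_mem_nhds (Metric.ball_mem_nhds x hr), h⟩
  obtain ⟨C, hC⟩ := Ctrl.compact hfr (boundary Ω hop hsm hcomp hfr)
  refine ⟨((C:ℝ) + 1)⁻¹, by positivity, fun φ h1 h2 => ?_⟩
  have hc : Continuous (fderiv ℝ φ) := h1.continuous_fderiv (by simp)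
  have hint : Integrable (fun x => ‖fderiv ℝ φ x‖ ^ 2) volume := by
    apply Continuous.integrable_of_hasCompactSupport (by fun_prop)
    exact (h2.fderiv ℝ).comp_left (g := fun v => ‖v‖ ^ 2) (by simp)
  have hφc : Continuous φ := h1.continuous
  have h3 := hC φ h1 h2
  rw [← ofReal_integral_eq_lintegral_ofReal hint.integrableOn
    (Filter.Eventually.of_forall fun t => by positivity)] at h3
  have h0 : 0 ≤ ∫ x in (closure Ω)ᶜ, ‖fderiv ℝ φ x‖ ^ 2 := integral_nonneg fun x => by positivity
  have h4 : ∫ x in frontier Ω, (φ x) ^ 2 ∂(μH[(m : ℝ)]) ≤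
      C * ∫ x in (closure Ω)ᶜ, ‖fderiv ℝ φ x‖ ^ 2 := by
    rw [integral_eq_lintegral_of_nonneg_ae (Filter.Eventually.of_forall fun t => sq_nonneg _)
      (by fun_prop : Continuous fun x => φ x ^ 2).measurable.aestronglyMeasurable]
    refine (ENNReal.toReal_mono (by finiteness) h3).trans_eq ?_
    rw [ENNReal.toReal_mul, ENNReal.toReal_ofReal h0, ENNReal.coe_toReal]
  rw [ge_iff_le, inv_mul_le_iff₀ (by positivity)]
  linarith
end
end

section
/- Let Ω ⊂ ℝ² be a smooth bounded open set consisting of N disjoint simply connected components, and let A(r) = |{x ∈ Ω^ext : dist(x,∂Ω) < r}|. Then for almost every r > 0, A'(r) = |{x ∈ Ω^ext : dist(x,∂Ω) = r}| ≤ |∂Ω| + 2πN r. -/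
open MeasureTheory Real Set

noncomputable section

section Helpers

open scoped Pointwise ENNReal NNReal Topology

/-! ### A discrete Euler characteristic inequality on the square grid -/

lemma grid_euler (H R C F : Finset (ℤ × ℤ)) (N : ℕ) (Z : Fin N → ℤ × ℤ)
    (hCH : ∀ z ∈ C, z ∈ H) (hCH' : ∀ z ∈ C, z + (1, 0) ∈ H)
    (hCR : ∀ z ∈ C, z ∈ R) (hCR' : ∀ z ∈ C, z + (0, 1) ∈ R)
    (hZ : ∀ φ : ℤ × ℤ → ℝ, (∀ z ∈ H, φ (z + (0, 1)) = φ z) → (∀ z ∈ R, φ (z + (1, 0)) = φ z) →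
      (∀ i, φ (Z i) = 0) → ∀ z ∈ F, φ z = 0) :
    F.card + C.card ≤ H.card + R.card + N := by
  classical
  let ext : (F → ℝ) →ₗ[ℝ] (ℤ × ℤ → ℝ) :=
    { toFun := fun φ z => if h : z ∈ F then φ ⟨z, h⟩ else 0
      map_add' := by intro a b; ext z; by_cases h : z ∈ F <;> simp [h]
      map_smul' := by intro a b; ext z; by_cases h : z ∈ F <;> simp [h] }
  let s : (C → ℝ) →ₗ[ℝ] (ℤ × ℤ → ℝ) :=
    { toFun := fun c z => ∑ w : C, if (w : ℤ × ℤ).2 = z.2 ∧ (w : ℤ × ℤ).1 < z.1 then c w else 0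
      map_add' := by
        intro a b; ext z
        simp only [Pi.add_apply, ← Finset.sum_add_distrib]
        refine Finset.sum_congr rfl fun w _ => ?_
        split_ifs <;> simp
      map_smul' := by
        intro a b; ext z
        simp only [Pi.smul_apply, smul_eq_mul, Finset.mul_sum, RingHom.id_apply]
        refine Finset.sum_congr rfl fun w _ => ?_
        split_ifs <;> simp }
  let L : ((F → ℝ) × (C → ℝ)) →ₗ[ℝ] ((H → ℝ) × (R → ℝ) × (Fin N → ℝ)) :=
    { toFun := fun p =>
        (fun z => ext p.1 ((z : ℤ × ℤ) + (0, 1)) - ext p.1 z + s p.2 z,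
         fun z => ext p.1 ((z : ℤ × ℤ) + (1, 0)) - ext p.1 z, fun i => ext p.1 (Z i))
      map_add' := by
        intro a b
        refine Prod.ext ?_ (Prod.ext ?_ ?_) <;> ext z <;>
          simp only [Prod.fst_add, Prod.snd_add, map_add, Pi.add_apply] <;> ring
      map_smul' := by
        intro a b
        refine Prod.ext ?_ (Prod.ext ?_ ?_) <;> ext z <;>
          simp only [Prod.smul_fst, Prod.smul_snd, map_smul, Pi.smul_apply, smul_eq_mul,
            RingHom.id_apply] <;> ring }
  have hsec : ∀ (c : C → ℝ) (z : C), s c ((z : ℤ × ℤ) + (1, 0)) - s c z = c z := by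
    intro c z
    change (∑ w : C, _) - (∑ w : C, _) = _
    rw [← Finset.sum_sub_distrib]
    rw [Finset.sum_eq_single z]
    · simp
    · intro w _ hw
      have : (w : ℤ × ℤ) ≠ z := fun h => hw (Subtype.ext h)
      rcases w with ⟨⟨w1, w2⟩, hw'⟩
      rcases z with ⟨⟨z1, z2⟩, hz'⟩
      simp only [ne_eq, Prod.mk.injEq, not_and, Prod.mk_add_mk, add_zero] at this ⊢
      by_cases h2 : w2 = z2
      · have h1 : w1 ≠ z1 := fun h => this h h2
        have : w1 < z1 + 1 ↔ w1 < z1 := by omega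
        simp [this]
      · simp [h2]
    · simp
  have hinj : Function.Injective L := by
    rw [← LinearMap.ker_eq_bot, LinearMap.ker_eq_bot']
    rintro ⟨φ, c⟩ h
    have h1 : ∀ z ∈ H, ext φ (z + (0, 1)) - ext φ z + s c z = 0 := fun z hz =>
      congrFun (congrArg Prod.fst h) ⟨z, hz⟩
    have h2 : ∀ z ∈ R, ext φ (z + (1, 0)) - ext φ z = 0 := fun z hz =>
      congrFun (congrArg (fun q => q.2.1) h) ⟨z, hz⟩
    have h3 : ∀ i, ext φ (Z i) = 0 := fun i => congrFun (congrArg (fun q => q.2.2) h) i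
    have hc : c = 0 := by
      ext z
      have e1 := h1 z (hCH _ z.2)
      have e2 := h1 _ (hCH' _ z.2)
      have e3 := h2 z (hCR _ z.2)
      have e4 := h2 _ (hCR' _ z.2)
      have e5 := hsec c z
      have e6 : (z : ℤ × ℤ) + (1, 0) + (0, 1) = (z : ℤ × ℤ) + (0, 1) + (1, 0) := by abel
      rw [e6] at e2
      simp only [Pi.zero_apply]
      linarith
    have hs0 : s c = 0 := by rw [hc, map_zero]
    have hφ : ∀ z ∈ F, ext φ z = 0 := by
      apply hZ (ext φ)
      · intro z hz
        have := h1 z hz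
        rw [hs0] at this
        simp only [Pi.zero_apply] at this
        linarith
      · intro z hz
        linarith [h2 z hz]
      · exact h3
    have : φ = 0 := by
      ext z
      have := hφ z z.2
      simpa [ext] using this
    rw [this, hc]; rfl
  have := LinearMap.finrank_le_finrank_of_injective hinj
  simp only [Module.finrank_prod, Module.finrank_fintype_fun_eq_card, Fintype.card_coe,
    Fintype.card_fin] at this
  omega


/-- The embedding of the integer lattice. -/
def zr (z : ℤ × ℤ) : ℝ × ℝ := ((z.1 : ℝ), (z.2 : ℝ))

lemma finite_lattice {M : Set (ℝ × ℝ)} (hM : IsCompact M) (x : ℝ × ℝ) :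
    {z : ℤ × ℤ | x + zr z ∈ M}.Finite := by
  obtain ⟨B, hB⟩ := hM.isBounded.exists_norm_le
  apply Set.Finite.subset ((Set.finite_Icc (⌊-B - x.1⌋) (⌈B - x.1⌉)).prod
    (Set.finite_Icc (⌊-B - x.2⌋) (⌈B - x.2⌉)))
  intro z hz
  have h := hB _ hz
  have h1 : |x.1 + z.1| ≤ B := (norm_fst_le (x + zr z)).trans h
  have h2 : |x.2 + z.2| ≤ B := (norm_snd_le (x + zr z)).trans h
  rw [abs_le] at h1 h2
  refine ⟨⟨?_, ?_⟩, ⟨?_, ?_⟩⟩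
  · rw [← Int.cast_le (R := ℝ)]; linarith [Int.floor_le (-B - x.1)]
  · rw [← Int.cast_le (R := ℝ)]; linarith [Int.le_ceil (B - x.1)]
  · rw [← Int.cast_le (R := ℝ)]; linarith [Int.floor_le (-B - x.2)]
  · rw [← Int.cast_le (R := ℝ)]; linarith [Int.le_ceil (B - x.2)]

lemma mem_add_box {K : Set (ℝ × ℝ)} {A B : Set ℝ} {x : ℝ × ℝ} :
    x ∈ K + A ×ˢ B ↔ ∃ y ∈ K, x.1 - y.1 ∈ A ∧ x.2 - y.2 ∈ B := by
  constructor
  · rintro ⟨y, hy, w, hw, rfl⟩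
    exact ⟨y, hy, by simpa using hw.1, by simpa using hw.2⟩
  · rintro ⟨y, hy, h1, h2⟩
    exact ⟨y, hy, x - y, ⟨h1, h2⟩, by simp⟩

lemma grid_point {N : ℕ} (K : Fin N → Set (ℝ × ℝ))
    (hp : ∀ i, IsPreconnected (K i)) (x : ℝ × ℝ)
    (F H R C : Finset (ℤ × ℤ))
    (hF : ∀ z, z ∈ F ↔ x + zr z ∈ (⋃ i, K i) + Icc (0:ℝ) 1 ×ˢ Icc (0:ℝ) 1)
    (hH : ∀ z, z ∈ H ↔ x + zr z ∈ (⋃ i, K i) + Icc (0:ℝ) 1 ×ˢ ({0} : Set ℝ))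
    (hR : ∀ z, z ∈ R ↔ x + zr z ∈ (⋃ i, K i) + ({0} : Set ℝ) ×ˢ Icc (0:ℝ) 1)
    (hC : ∀ z, z ∈ C ↔ x + zr z ∈ (⋃ i, K i)) :
    F.card + C.card ≤ H.card + R.card + N := by
  classical
  simp only [mem_add_box, zr, Prod.fst_add, Prod.snd_add, mem_singleton_iff, mem_Icc] at hF hH hR
  let ζ : ℝ × ℝ → ℤ × ℤ := fun y => (⌈y.1 - x.1⌉, ⌈y.2 - x.2⌉)
  have hCe : ∀ z ∈ C, ∃ y ∈ ⋃ i, K i, y.1 = x.1 + z.1 ∧ y.2 = x.2 + z.2 := fun z hz =>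
    ⟨_, (hC z).1 hz, rfl, rfl⟩
  refine grid_euler H R C F N
    (fun i => if h : (K i).Nonempty then ζ h.some else 0) ?_ ?_ ?_ ?_ ?_
  · intro z hz
    obtain ⟨y, hy, h1, h2⟩ := hCe z hz
    exact (hH z).2 ⟨y, hy, ⟨by linarith, by linarith⟩, by linarith⟩
  · intro z hz
    obtain ⟨y, hy, h1, h2⟩ := hCe z hz
    refine (hH _).2 ⟨y, hy, ⟨?_, ?_⟩, ?_⟩ <;> push_cast [Prod.fst_add, Prod.snd_add] <;> linarith
  · intro z hz
    obtain ⟨y, hy, h1, h2⟩ := hCe z hz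
    exact (hR z).2 ⟨y, hy, by linarith, ⟨by linarith, by linarith⟩⟩
  · intro z hz
    obtain ⟨y, hy, h1, h2⟩ := hCe z hz
    refine (hR _).2 ⟨y, hy, ?_, ⟨?_, ?_⟩⟩ <;> push_cast [Prod.fst_add, Prod.snd_add] <;> linarith
  · intro φ hφH hφR hφZ
    -- the value at a point of `K` does not depend on the closed cell
    have key : ∀ y ∈ ⋃ i, K i, ∀ z : ℤ × ℤ, 0 ≤ x.1 + z.1 - y.1 → x.1 + z.1 - y.1 ≤ 1 →
        0 ≤ x.2 + z.2 - y.2 → x.2 + z.2 - y.2 ≤ 1 → φ z = φ (ζ y) := by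
      intro y hy z h1 h2 h3 h4
      have c1 := Int.le_ceil (y.1 - x.1)
      have c2 := Int.ceil_lt_add_one (y.1 - x.1)
      have c3 := Int.le_ceil (y.2 - x.2)
      have c4 := Int.ceil_lt_add_one (y.2 - x.2)
      set a := ⌈y.1 - x.1⌉ with ha
      set b := ⌈y.2 - x.2⌉ with hb
      have hζ : ζ y = (a, b) := rfl
      have hz1 : z.1 = a ∨ z.1 = a + 1 := by
        have l1 : (a : ℝ) - 1 < z.1 := by linarith
        have l2 : (z.1 : ℝ) ≤ a + 1 := by linarith
        have l1' : a - 1 < z.1 := by exact_mod_cast l1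
        have l2' : z.1 ≤ a + 1 := by exact_mod_cast l2
        omega
      have hz2 : z.2 = b ∨ z.2 = b + 1 := by
        have l1 : (b : ℝ) - 1 < z.2 := by linarith
        have l2 : (z.2 : ℝ) ≤ b + 1 := by linarith
        have l1' : b - 1 < z.2 := by exact_mod_cast l1
        have l2' : z.2 ≤ b + 1 := by exact_mod_cast l2
        omega
      obtain ⟨z1, z2⟩ := z
      simp only at hz1 hz2 h1 h2 h3 h4
      rw [hζ]
      have top : z2 = b + 1 → φ (z1, b + 1) = φ (z1, b) := by
        intro hz2
        rw [hz2] at h4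
        push_cast at h4
        have : (z1, b) ∈ H := (hH _).2 ⟨y, hy, ⟨h1, h2⟩, by simp only; linarith⟩
        simpa using hφH _ this
      have right : z1 = a + 1 → φ (a + 1, b) = φ (a, b) := by
        intro hz1
        rw [hz1] at h2
        push_cast at h2
        have : (a, b) ∈ R := (hR _).2 ⟨y, hy, by simp only; linarith,
          ⟨by simp only; linarith, by simp only; linarith⟩⟩
        simpa using hφR _ this
      rcases hz2 with hz2 | hz2
      · rcases hz1 with hz1 | hz1
        · rw [hz1, hz2]
        · rw [hz2, hz1, right hz1]
      · rw [hz2, top hz2]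
        rcases hz1 with hz1 | hz1
        · rw [hz1]
        · rw [hz1, right hz1]
    have hconst : ∀ i, ∀ y ∈ K i, ∀ y' ∈ K i, φ (ζ y) = φ (ζ y') := by
      intro i
      have hlc : ∀ y0 ∈ K i, ∀ᶠ y in 𝓝[K i] y0, φ (ζ y) = φ (ζ y0) := by
        intro y0 hy0
        have e1 : ∀ᶠ y : ℝ × ℝ in 𝓝 y0, (⌈y0.1 - x.1⌉ : ℝ) - 1 < y.1 - x.1 :=
          (continuous_fst.sub continuous_const).continuousAt.eventually
            (lt_mem_nhds (show (⌈y0.1 - x.1⌉ : ℝ) - 1 < y0.1 - x.1 by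
              linarith [Int.ceil_lt_add_one (y0.1 - x.1)]))
        have e2 : ∀ᶠ y : ℝ × ℝ in 𝓝 y0, (⌈y0.2 - x.2⌉ : ℝ) - 1 < y.2 - x.2 :=
          (continuous_snd.sub continuous_const).continuousAt.eventually
            (lt_mem_nhds (show (⌈y0.2 - x.2⌉ : ℝ) - 1 < y0.2 - x.2 by
              linarith [Int.ceil_lt_add_one (y0.2 - x.2)]))
        have e3 : ∀ᶠ y : ℝ × ℝ in 𝓝 y0, y.1 - x.1 < ⌊y0.1 - x.1⌋ + 1 :=
          (continuous_fst.sub continuous_const).continuousAt.eventually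
            (gt_mem_nhds (by exact Int.lt_floor_add_one (y0.1 - x.1)))
        have e4 : ∀ᶠ y : ℝ × ℝ in 𝓝 y0, y.2 - x.2 < ⌊y0.2 - x.2⌋ + 1 :=
          (continuous_snd.sub continuous_const).continuousAt.eventually
            (gt_mem_nhds (by exact Int.lt_floor_add_one (y0.2 - x.2)))
        have aux : ∀ s s0 : ℝ, (⌈s0⌉ : ℝ) - 1 < s → s < ⌊s0⌋ + 1 →
            0 ≤ (⌈s⌉ : ℝ) - s0 ∧ (⌈s⌉ : ℝ) - s0 ≤ 1 := by
          intro s s0 g1 g2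
          have k1 : ⌈s0⌉ ≤ ⌈s⌉ := by
            have : ((⌈s0⌉ - 1 : ℤ) : ℝ) < s := by push_cast; exact g1
            have := Int.lt_ceil.2 this
            omega
          have k2 : ⌈s⌉ ≤ ⌊s0⌋ + 1 := Int.ceil_le.2 (by push_cast; exact g2.le)
          have k1' : (⌈s0⌉ : ℝ) ≤ ⌈s⌉ := by exact_mod_cast k1
          have k2' : (⌈s⌉ : ℝ) ≤ ⌊s0⌋ + 1 := by exact_mod_cast k2
          constructor
          · linarith [Int.le_ceil s0]
          · linarith [Int.floor_le s0]
        filter_upwards [nhdsWithin_le_nhds e1, nhdsWithin_le_nhds e2, nhdsWithin_le_nhds e3,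
          nhdsWithin_le_nhds e4] with y g1 g2 g3 g4
        obtain ⟨a1, a2⟩ := aux _ _ g1 g3
        obtain ⟨b1, b2⟩ := aux _ _ g2 g4
        apply key y0 (mem_iUnion.2 ⟨i, hy0⟩) (ζ y) <;> simp only [ζ] <;> linarith
      intro y hy y' hy'
      have hcont : ContinuousOn (fun w => decide (φ (ζ w) = φ (ζ y'))) (K i) := by
        intro y0 hy0
        refine tendsto_nhds_of_eventually_eq ?_
        filter_upwards [hlc y0 hy0] with w hw
        rw [hw]
      have := (hp i).constant hcont hy hy'
      simpa using this
    intro z hz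
    obtain ⟨y, hy, ⟨h1, h2⟩, h3, h4⟩ := (hF z).1 hz
    rw [key y hy z h1 h2 h3 h4]
    obtain ⟨i, hi⟩ := mem_iUnion.1 hy
    have hne : (K i).Nonempty := ⟨y, hi⟩
    rw [hconst i y hi _ hne.some_mem]
    simpa [hne] using hφZ i


lemma vol_lattice {M : Set (ℝ × ℝ)} (hM : MeasurableSet M) :
    volume M = ∫⁻ x in Ico (0:ℝ) 1 ×ˢ Ico (0:ℝ) 1, ∑' z : ℤ × ℤ,
      M.indicator (fun _ => (1 : ℝ≥0∞)) (x + zr z) := by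
  set Q : Set (ℝ × ℝ) := Ico (0:ℝ) 1 ×ˢ Ico (0:ℝ) 1 with hQ
  have hQm : MeasurableSet Q := measurableSet_Ico.prod measurableSet_Ico
  have hpm : ∀ z, MeasurableSet ((fun x => x + zr z) ⁻¹' M) := fun z =>
    (measurable_id.add_const _) hM
  rw [lintegral_tsum]
  swap
  · intro z
    have : (fun x => M.indicator (fun _ => (1 : ℝ≥0∞)) (x + zr z))
        = ((fun x => x + zr z) ⁻¹' M).indicator (fun _ => 1) := by
      ext x; rfl
    rw [this]
    exact (measurable_const.indicator (hpm z)).aemeasurable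
  have h1 : ∀ z : ℤ × ℤ, ∫⁻ x in Q, M.indicator (fun _ => (1 : ℝ≥0∞)) (x + zr z)
      = volume (M ∩ (fun x => x - zr z) ⁻¹' Q) := by
    intro z
    have : (fun x => M.indicator (fun _ => (1 : ℝ≥0∞)) (x + zr z))
        = ((fun x => x + zr z) ⁻¹' M).indicator (fun _ => 1) := by
      ext x; rfl
    rw [this, lintegral_indicator (hpm z), setLIntegral_one, Measure.restrict_apply (hpm z),
      ← measure_preimage_add_right volume (zr z) (M ∩ (fun x => x - zr z) ⁻¹' Q)]
    congr 1
    ext x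
    simp
  simp_rw [h1]
  rw [← measure_iUnion]
  · congr 1
    ext x
    simp only [mem_iUnion, mem_inter_iff, mem_preimage, exists_and_left]
    refine ⟨fun hx => ⟨hx, (⌊x.1⌋, ⌊x.2⌋), ?_⟩, fun hx => hx.1⟩
    simp only [hQ, zr, mem_prod, Prod.fst_sub, Prod.snd_sub, mem_Ico, sub_nonneg]
    refine ⟨⟨Int.floor_le _, ?_⟩, ⟨Int.floor_le _, ?_⟩⟩
    · linarith [Int.lt_floor_add_one x.1]
    · linarith [Int.lt_floor_add_one x.2]
  · intro z w hzw
    refine Set.disjoint_left.2 fun x hx hx' => hzw ?_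
    obtain ⟨-, ⟨a1, a2⟩, ⟨b1, b2⟩⟩ := hx
    obtain ⟨-, ⟨c1, c2⟩, ⟨d1, d2⟩⟩ := hx'
    simp only [zr, Prod.fst_sub, Prod.snd_sub] at *
    have e1 : ⌊x.1⌋ = z.1 := Int.floor_eq_iff.2 ⟨by linarith, by linarith⟩
    have e2 : ⌊x.2⌋ = z.2 := Int.floor_eq_iff.2 ⟨by linarith, by linarith⟩
    have e3 : ⌊x.1⌋ = w.1 := Int.floor_eq_iff.2 ⟨by linarith, by linarith⟩
    have e4 : ⌊x.2⌋ = w.2 := Int.floor_eq_iff.2 ⟨by linarith, by linarith⟩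
    exact Prod.ext (e1 ▸ e3) (e2 ▸ e4)
  · intro z
    exact hM.inter ((measurable_id.sub_const _) hQm)

lemma tsum_lattice {M : Set (ℝ × ℝ)} (x : ℝ × ℝ) (F : Finset (ℤ × ℤ))
    (hF : ∀ z, z ∈ F ↔ x + zr z ∈ M) :
    ∑' z : ℤ × ℤ, M.indicator (fun _ => (1 : ℝ≥0∞)) (x + zr z) = (F.card : ℝ≥0∞) := by
  rw [tsum_eq_sum (s := F)]
  · rw [Finset.sum_congr rfl (g := fun _ => (1 : ℝ≥0∞))]
    · simp
    · intro z hz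
      exact indicator_of_mem ((hF z).1 hz) _
  · intro z hz
    exact indicator_of_notMem (fun h => hz ((hF z).2 h)) _

lemma square_ineq {N : ℕ} (K : Fin N → Set (ℝ × ℝ)) (hc : ∀ i, IsCompact (K i))
    (hp : ∀ i, IsPreconnected (K i)) :
    volume ((⋃ i, K i) + Icc (0:ℝ) 1 ×ˢ Icc (0:ℝ) 1) + volume (⋃ i, K i) ≤
      volume ((⋃ i, K i) + Icc (0:ℝ) 1 ×ˢ ({0} : Set ℝ)) +
      volume ((⋃ i, K i) + ({0} : Set ℝ) ×ˢ Icc (0:ℝ) 1) + N := by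
  have hK : IsCompact (⋃ i, K i) := isCompact_iUnion hc
  have hI : IsCompact (Icc (0:ℝ) 1) := isCompact_Icc
  have h0 : IsCompact ({0} : Set ℝ) := isCompact_singleton
  have c1 := hK.add (hI.prod hI)
  have c2 := hK.add (hI.prod h0)
  have c3 := hK.add (h0.prod hI)
  have meas : ∀ {M : Set (ℝ × ℝ)}, MeasurableSet M → Measurable fun x => ∑' z : ℤ × ℤ,
      M.indicator (fun _ => (1 : ℝ≥0∞)) (x + zr z) := by
    intro M hM
    refine Measurable.tsum fun z => ?_
    exact (measurable_const.indicator hM).comp (measurable_id.add_const _)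
  rw [vol_lattice c1.measurableSet, vol_lattice c2.measurableSet, vol_lattice c3.measurableSet,
    vol_lattice hK.measurableSet, ← lintegral_add_left (meas c1.measurableSet),
    ← lintegral_add_left (meas c2.measurableSet)]
  have hN : (N : ℝ≥0∞) = ∫⁻ x in Ico (0:ℝ) 1 ×ˢ Ico (0:ℝ) 1, (N : ℝ≥0∞) := by
    rw [setLIntegral_const, Measure.volume_eq_prod, Measure.prod_prod]
    simp
  rw [hN, ← lintegral_add_right _ measurable_const]
  refine lintegral_mono fun x => ?_
  have f1 := finite_lattice c1 x
  have f2 := finite_lattice c2 x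
  have f3 := finite_lattice c3 x
  have f4 := finite_lattice hK x
  obtain ⟨F, m1⟩ : ∃ F : Finset (ℤ × ℤ), ∀ z, z ∈ F ↔
      x + zr z ∈ (⋃ i, K i) + Icc (0:ℝ) 1 ×ˢ Icc (0:ℝ) 1 :=
    ⟨f1.toFinset, fun z => f1.mem_toFinset⟩
  obtain ⟨H, m2⟩ : ∃ F : Finset (ℤ × ℤ), ∀ z, z ∈ F ↔
      x + zr z ∈ (⋃ i, K i) + Icc (0:ℝ) 1 ×ˢ ({0} : Set ℝ) :=
    ⟨f2.toFinset, fun z => f2.mem_toFinset⟩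
  obtain ⟨R, m3⟩ : ∃ F : Finset (ℤ × ℤ), ∀ z, z ∈ F ↔
      x + zr z ∈ (⋃ i, K i) + ({0} : Set ℝ) ×ˢ Icc (0:ℝ) 1 :=
    ⟨f3.toFinset, fun z => f3.mem_toFinset⟩
  obtain ⟨C, m4⟩ : ∃ F : Finset (ℤ × ℤ), ∀ z, z ∈ F ↔ x + zr z ∈ (⋃ i, K i) :=
    ⟨f4.toFinset, fun z => f4.mem_toFinset⟩
  have := grid_point K hp x F H R C m1 m2 m3 m4
  simp only [tsum_lattice x F m1, tsum_lattice x H m2, tsum_lattice x R m3, tsum_lattice x C m4]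
  exact_mod_cast this


/-! ### Linear images and the mixed second difference -/

/-- The plane. -/
abbrev E2 := EuclideanSpace ℝ (Fin 2)

/-- Coordinates on the plane. -/
def coordE : E2 ≃L[ℝ] ℝ × ℝ :=
  LinearEquiv.toContinuousLinearEquiv
  { toFun := fun x => (x 0, x 1)
    invFun := fun p => !₂[p.1, p.2]
    map_add' := by intro x y; rfl
    map_smul' := by intro c x; rfl
    left_inv := by intro x; ext i; fin_cases i <;> rfl
    right_inv := by intro p; rfl }

lemma coordE_apply (x : E2) : coordE x = (x 0, x 1) := rfl

lemma coordE_mp : MeasurePreserving coordE (volume : Measure E2) (volume : Measure (ℝ × ℝ)) := by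
  have h := (volume_preserving_finTwoArrow ℝ).comp (PiLp.volume_preserving_ofLp (Fin 2))
  exact h

lemma coordE_vol (s : Set E2) : volume (coordE '' s) = volume s := by
  have e : MeasurableEmbedding coordE := coordE.toHomeomorph.measurableEmbedding
  rw [← coordE_mp.measure_preimage_emb e, preimage_image_eq _ coordE.injective]

/-- The linear map with the two given columns. -/
def colMap (a b : E2) : (ℝ × ℝ) →L[ℝ] (ℝ × ℝ) :=
  (ContinuousLinearMap.fst ℝ ℝ ℝ).smulRight (coordE a) +
    (ContinuousLinearMap.snd ℝ ℝ ℝ).smulRight (coordE b)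

lemma colMap_apply (a b : E2) (p : ℝ × ℝ) : colMap a b p = coordE (p.1 • a + p.2 • b) := by
  simp [colMap]

lemma colMap_det (a b : E2) : (colMap a b).det = a 0 * b 1 - a 1 * b 0 := by
  have : ((colMap a b : (ℝ × ℝ) →L[ℝ] (ℝ × ℝ)) : (ℝ × ℝ) →ₗ[ℝ] (ℝ × ℝ)) =
      Matrix.toLin (Module.Basis.finTwoProd ℝ) (Module.Basis.finTwoProd ℝ)
        !![a 0, b 0; a 1, b 1] := by
    refine LinearMap.ext fun p => ?_
    rw [Matrix.toLin_finTwoProd_apply]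
    simp [colMap_apply, coordE_apply, mul_comm]
  rw [ContinuousLinearMap.det, this, LinearMap.det_toLin, Matrix.det_fin_two_of]
  ring

lemma vol_lin (a b : E2) (s : Set (ℝ × ℝ)) :
    volume ((fun p : ℝ × ℝ => p.1 • a + p.2 • b) '' s) =
      ENNReal.ofReal |a 0 * b 1 - a 1 * b 0| * volume s := by
  rw [← coordE_vol, ← colMap_det, ← Measure.addHaar_image_continuousLinearMap, image_image]
  congr 1

lemma mixed_ineq {N : ℕ} (K : Fin N → Set E2) (hc : ∀ i, IsCompact (K i))
    (hp : ∀ i, IsPreconnected (K i)) (a b : E2) (hab : a 0 * b 1 - a 1 * b 0 ≠ 0) :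
    volume ((⋃ i, K i) + segment ℝ 0 a + segment ℝ 0 b) + volume (⋃ i, K i) ≤
      volume ((⋃ i, K i) + segment ℝ 0 a) + volume ((⋃ i, K i) + segment ℝ 0 b) +
        N * ENNReal.ofReal |a 0 * b 1 - a 1 * b 0| := by
  set L : ℝ × ℝ → E2 := fun p => p.1 • a + p.2 • b with hL
  set D := a 0 * b 1 - a 1 * b 0 with hD
  let G : E2 → ℝ × ℝ := fun x => ((x 0 * b 1 - x 1 * b 0) / D, (a 0 * x 1 - a 1 * x 0) / D)
  have hGc : Continuous G := by fun_prop
  have hLG : ∀ x, L (G x) = x := by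
    intro x
    ext i
    fin_cases i <;> simp [hL, G] <;> field_simp <;> simp only [hD] <;> ring
  have hLadd : ∀ s t : Set (ℝ × ℝ), L '' (s + t) = L '' s + L '' t := by
    intro s t
    have : ∀ p q, L (p + q) = L p + L q := by intro p q; simp [hL]; module
    let f : (ℝ × ℝ) →+ E2 := ⟨⟨L, by simp [hL]⟩, this⟩
    exact Set.image_add f
  have hI : L '' (Icc (0:ℝ) 1 ×ˢ ({0} : Set ℝ)) = segment ℝ 0 a := by
    rw [segment_eq_image]
    ext x
    simp [hL]
  have hJ : L '' (({0} : Set ℝ) ×ˢ Icc (0:ℝ) 1) = segment ℝ 0 b := by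
    rw [segment_eq_image]
    ext x
    simp [hL]
  have hQ : (Icc (0:ℝ) 1 ×ˢ Icc (0:ℝ) 1) = Icc (0:ℝ) 1 ×ˢ ({0} : Set ℝ) +
      ({0} : Set ℝ) ×ˢ Icc (0:ℝ) 1 := by
    rw [Set.prod_add_prod_comm]
    simp
  have hLK : L '' (⋃ i, G '' K i) = ⋃ i, K i := by
    rw [image_iUnion]
    congr 1
    ext1 i
    rw [image_image]
    simp [hLG]
  have main := square_ineq (fun i => G '' K i) (fun i => (hc i).image hGc)
    (fun i => (hp i).image _ hGc.continuousOn)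
  have e1 : volume ((⋃ i, K i) + segment ℝ 0 a + segment ℝ 0 b) = ENNReal.ofReal |D| *
      volume ((⋃ i, G '' K i) + Icc (0:ℝ) 1 ×ˢ Icc (0:ℝ) 1) := by
    rw [← vol_lin, ← hL, hQ, hLadd, hLadd, hI, hJ, hLK, add_assoc]
  have e2 : volume ((⋃ i, K i) + segment ℝ 0 a) = ENNReal.ofReal |D| *
      volume ((⋃ i, G '' K i) + Icc (0:ℝ) 1 ×ˢ ({0} : Set ℝ)) := by
    rw [← vol_lin, ← hL, hLadd, hI, hLK]
  have e3 : volume ((⋃ i, K i) + segment ℝ 0 b) = ENNReal.ofReal |D| *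
      volume ((⋃ i, G '' K i) + ({0} : Set ℝ) ×ˢ Icc (0:ℝ) 1) := by
    rw [← vol_lin, ← hL, hLadd, hJ, hLK]
  have e4 : volume (⋃ i, K i) = ENNReal.ofReal |D| * volume (⋃ i, G '' K i) := by
    rw [← vol_lin, ← hL, hLK]
  rw [e1, e2, e3, e4, mul_comm (N : ℝ≥0∞), ← mul_add, ← mul_add, ← mul_add]
  gcongr

/-- A union of `N` compact preconnected sets. -/
def NC (N : ℕ) (S : Set E2) : Prop :=
  ∃ K : Fin N → Set E2, (∀ i, IsCompact (K i)) ∧ (∀ i, IsPreconnected (K i)) ∧ S = ⋃ i, K i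

lemma NC.compact {N : ℕ} {S : Set E2} (h : NC N S) : IsCompact S := by
  obtain ⟨K, hc, -, rfl⟩ := h
  exact isCompact_iUnion hc

lemma NC.add {N : ℕ} {S T : Set E2} (h : NC N S) (hT : IsCompact T) (hT' : IsPreconnected T) :
    NC N (S + T) := by
  obtain ⟨K, hc, hp, rfl⟩ := h
  refine ⟨fun i => K i + T, fun i => (hc i).add hT, fun i => ?_, Set.iUnion_add _ _⟩
  have e : K i + T = (fun p : E2 × E2 => p.1 + p.2) '' (K i ×ˢ T) := by
    rw [← Set.image2_add, Set.image_prod]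
  show IsPreconnected (K i + T)
  rw [e]
  exact ((hp i).prod hT').image _ continuous_add.continuousOn

lemma seg_compact (a : E2) : IsCompact (segment ℝ 0 a) := by
  rw [segment_eq_image]
  exact isCompact_Icc.image (by fun_prop)

lemma seg_conn (a : E2) : IsPreconnected (segment ℝ 0 a) :=
  (convex_segment 0 a).isPreconnected

lemma NC.add_seg {N : ℕ} {S : Set E2} (h : NC N S) (a : E2) : NC N (S + segment ℝ 0 a) :=
  h.add (seg_compact a) (seg_conn a)

/-- The planar determinant. -/
def det2 (a b : E2) : ℝ := a 0 * b 1 - a 1 * b 0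

lemma det2_self (a : E2) : det2 a a = 0 := by simp [det2, mul_comm]

lemma same_dir {S : Set E2} (hS : IsCompact S) (a : E2) :
    volume.real (S + segment ℝ 0 a + segment ℝ 0 a) + volume.real S ≤
      volume.real (S + segment ℝ 0 a) + volume.real (S + segment ℝ 0 a) := by
  set T := S + segment ℝ 0 a with hT
  have hTc : IsCompact T := hS.add (seg_compact a)
  have hUc : IsCompact (T + segment ℝ 0 a) := hTc.add (seg_compact a)
  have h0 : (0 : E2) ∈ segment ℝ 0 a := left_mem_segment ℝ 0 a
  have hST : S ⊆ T := fun x hx => ⟨x, hx, 0, h0, by simp⟩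
  have hTU : T ⊆ T + segment ℝ 0 a := fun x hx => ⟨x, hx, 0, h0, by simp⟩
  have hsub : (T + segment ℝ 0 a) \ T ⊆ (fun x => x + a) '' (T \ S) := by
    rintro x ⟨⟨y, ⟨s, hs, u, hu, rfl⟩, w, hw, rfl⟩, hx⟩
    rw [segment_eq_image] at hu hw
    obtain ⟨α, hα, rfl⟩ := hu
    obtain ⟨β, hβ, rfl⟩ := hw
    simp only [smul_zero, zero_add] at *
    have hgt : 1 < α + β := by
      by_contra hle
      refine hx ⟨s, hs, (α + β) • a, ?_, by simp [add_smul, add_assoc]⟩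
      rw [segment_eq_image]
      exact ⟨α + β, ⟨by linarith [hα.1, hβ.1], by linarith⟩, by simp⟩
    refine ⟨s + α • a + β • a - a, ⟨⟨s, hs, (α + β - 1) • a, ?_, ?_⟩, ?_⟩, by simp⟩
    · rw [segment_eq_image]
      exact ⟨α + β - 1, ⟨by linarith, by linarith [hα.2, hβ.2]⟩, by simp⟩
    · simp only; module
    · intro hmem
      refine hx ⟨_, hmem, a, right_mem_segment ℝ 0 a, by simp⟩
  have hfin : ∀ {M : Set E2}, IsCompact M → volume M ≠ ⊤ := fun h => h.measure_lt_top.ne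
  have h1 : volume.real ((T + segment ℝ 0 a) \ T) ≤ volume.real (T \ S) := by
    have : volume ((T + segment ℝ 0 a) \ T) ≤ volume (T \ S) := by
      refine (measure_mono hsub).trans ?_
      rw [image_add_right, measure_preimage_add_right]
    exact ENNReal.toReal_mono ((measure_mono sdiff_subset).trans_lt hTc.measure_lt_top).ne this
  rw [measureReal_sdiff hTU hTc.measurableSet (hfin hUc), 
    measureReal_sdiff hST hS.measurableSet (hfin hTc)] at h1
  linarith

lemma mixed_real {N : ℕ} {S : Set E2} (h : NC N S) (a b : E2) (hab : a = b ∨ det2 a b ≠ 0) :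
    volume.real (S + segment ℝ 0 a + segment ℝ 0 b) + volume.real S ≤
      volume.real (S + segment ℝ 0 a) + volume.real (S + segment ℝ 0 b) + N * |det2 a b| := by
  rcases hab with rfl | hab
  · have := same_dir h.compact a
    simpa [det2_self] using this
  have c0 := h.compact
  have c1 := (h.add_seg a).compact
  have c2 := (h.add_seg b).compact
  have c3 := ((h.add_seg a).add_seg b).compact
  obtain ⟨K, hc, hp, rfl⟩ := h
  have := mixed_ineq K hc hp a b hab
  have hf : (N : ℝ≥0∞) * ENNReal.ofReal |a 0 * b 1 - a 1 * b 0| ≠ ⊤ :=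
    ENNReal.mul_ne_top (by simp) (by simp)
  have h2 := ENNReal.toReal_mono (ENNReal.add_ne_top.2 ⟨ENNReal.add_ne_top.2
    ⟨c1.measure_lt_top.ne, c2.measure_lt_top.ne⟩, hf⟩) this
  rw [ENNReal.toReal_add c3.measure_lt_top.ne c0.measure_lt_top.ne, 
    ENNReal.toReal_add (ENNReal.add_ne_top.2 ⟨c1.measure_lt_top.ne, c2.measure_lt_top.ne⟩) hf,
    ENNReal.toReal_add c1.measure_lt_top.ne c2.measure_lt_top.ne] at h2
  simpa [Measure.real, det2] using h2

/-- Partial zonotope. -/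
def zon (a : ℕ → E2) (m : ℕ) : Set E2 := ∑ k ∈ Finset.range m, segment ℝ 0 (a k)

lemma zon_zero (a : ℕ → E2) : zon a 0 = 0 := by simp [zon]

lemma zon_succ (a : ℕ → E2) (m : ℕ) : zon a (m+1) = zon a m + segment ℝ 0 (a m) := by
  simp [zon, Finset.sum_range_succ]

lemma zon_compact (a : ℕ → E2) (m : ℕ) : IsCompact (zon a m) := by
  induction m with
  | zero => rw [zon_zero]; exact isCompact_singleton
  | succ m ih => rw [zon_succ]; exact ih.add (seg_compact _)

lemma zon_convex (a : ℕ → E2) (m : ℕ) : Convex ℝ (zon a m) := by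
  induction m with
  | zero => rw [zon_zero]; exact convex_singleton 0
  | succ m ih => rw [zon_succ]; exact ih.add (convex_segment _ _)

lemma NC.add_zon {N : ℕ} {S : Set E2} (h : NC N S) (a : ℕ → E2) (m : ℕ) : NC N (S + zon a m) :=
  h.add (zon_compact a m) (zon_convex a m).isPreconnected

lemma zon_step {N : ℕ} {S : Set E2} (h : NC N S) (a : ℕ → E2) (b : E2) (m : ℕ)
    (hab : ∀ k < m, a k = b ∨ det2 (a k) b ≠ 0) :
    volume.real (S + zon a m + segment ℝ 0 b) + volume.real S ≤
      volume.real (S + zon a m) + volume.real (S + segment ℝ 0 b) +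
        ∑ k ∈ Finset.range m, N * |det2 (a k) b| := by
  induction m with
  | zero => simp [zon_zero, add_comm]
  | succ m ih =>
    have h1 := ih fun k hk => hab k (hk.trans (Nat.lt_succ_self _))
    have h2 := mixed_real (h.add_zon a m) (a m) b (hab m (Nat.lt_succ_self _))
    rw [zon_succ, Finset.sum_range_succ, ← add_assoc]
    linarith

lemma zon_double {N : ℕ} {S : Set E2} (h : NC N S) (a : ℕ → E2) (m : ℕ)
    (hab : ∀ j < m, ∀ k < m, a k = a j ∨ det2 (a k) (a j) ≠ 0) :
    volume.real (S + zon a m + zon a m) + volume.real S ≤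
      volume.real (S + zon a m) + volume.real (S + zon a m) +
        ∑ j ∈ Finset.range m, ∑ k ∈ Finset.range m, N * |det2 (a k) (a j)| := by
  suffices H : ∀ n ≤ m, volume.real (S + zon a m + zon a n) + volume.real S ≤
      volume.real (S + zon a m) + volume.real (S + zon a n) +
        ∑ j ∈ Finset.range n, ∑ k ∈ Finset.range m, N * |det2 (a k) (a j)| from H m le_rfl
  intro n hn
  induction n with
  | zero => simp [zon_zero]
  | succ n ih =>
    have h1 := ih (by omega)
    have h2 := zon_step (h.add_zon a n) a (a n) m (hab n (by omega))
    rw [zon_succ, Finset.sum_range_succ, ← add_assoc (S + zon a m), ← add_assoc S (zon a n),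
      ← add_assoc]
    rw [add_right_comm S (zon a n) (zon a m)] at h2
    linarith

lemma integral_abs_cos (φ : ℝ) : ∫ x in (0:ℝ)..π, |cos (φ - x)| = 2 := by
  have h1 : ∫ x in (0:ℝ)..π, |cos (φ - x)| = ∫ x in (φ - π)..(φ - π) + π, |cos x| := by
    rw [intervalIntegral.integral_comp_sub_left (fun x => |cos x|)]
    simp
  have hper : Function.Periodic (fun x => |cos x|) π := by
    intro x; simp [cos_add_pi]
  rw [h1, hper.intervalIntegral_add_eq (φ - π) (-(π/2))]
  have h2 : ∫ x in (-(π/2))..(-(π/2) + π), |cos x| = ∫ x in (-(π/2))..(π/2), cos x := by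
    rw [show -(π/2) + π = π/2 by ring]
    refine intervalIntegral.integral_congr fun x hx => ?_
    rw [uIcc_of_le (by linarith [pi_pos])] at hx
    exact abs_of_nonneg (cos_nonneg_of_mem_Icc hx)
  rw [h2, integral_cos]
  simp; norm_num

lemma cos_riemann (φ : ℝ) (m : ℕ) (hm : 0 < m) :
    |(π / m) * ∑ k ∈ Finset.range m, |cos (φ - k * (π / m))| - 2| ≤ π ^ 2 / m := by
  have hm' : (0:ℝ) < m := by exact_mod_cast hm
  set d := π / m with hd
  have hd0 : 0 < d := by positivity
  have hc : Continuous fun x : ℝ => |cos (φ - x)| := by fun_prop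
  have hsum := intervalIntegral.sum_integral_adjacent_intervals (f := fun x => |cos (φ - x)|)
    (μ := volume) (a := fun k : ℕ => k * d) (n := m) (fun k _ => hc.intervalIntegrable _ _)
  have e : (m : ℝ) * d = π := by rw [hd]; field_simp
  simp only [Nat.cast_zero, zero_mul, e, integral_abs_cos] at hsum
  rw [← hsum, Finset.mul_sum, ← Finset.sum_sub_distrib]
  refine (Finset.abs_sum_le_sum_abs _ _).trans ?_
  have : ∀ k ∈ Finset.range m, |d * |cos (φ - k * d)| -
      (∫ x in ((k:ℕ) * d)..(((k + 1 : ℕ) : ℝ) * d), |cos (φ - x)|)| ≤ d * d := by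
    intro k _
    have hle : (k:ℝ) * d ≤ ((k+1:ℕ):ℝ) * d := by push_cast; nlinarith
    have hlen : ((k+1:ℕ):ℝ) * d - (k:ℝ) * d = d := by push_cast; ring
    have e1 : d * |cos (φ - k * d)| =
        ∫ x in ((k:ℕ) * d)..(((k + 1 : ℕ) : ℝ) * d), |cos (φ - k * d)| := by
      rw [intervalIntegral.integral_const, hlen]; simp
    rw [e1, ← intervalIntegral.integral_sub (by simp) (hc.intervalIntegrable _ _)]
    have := intervalIntegral.norm_integral_le_of_norm_le_const (a := (k:ℕ) * d)
      (b := ((k + 1 : ℕ) : ℝ) * d) (f := fun x => |cos (φ - k * d)| - |cos (φ - x)|) (C := d) ?_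
    · rw [hlen, abs_of_pos hd0] at this
      exact this
    · intro x hx
      rw [uIoc_of_le hle] at hx
      rw [norm_eq_abs]
      refine (abs_abs_sub_abs_le_abs_sub _ _).trans ?_
      have hlip : |cos (φ - k * d) - cos (φ - x)| ≤ |(φ - k * d) - (φ - x)| := by
        have := Real.lipschitzWith_cos.dist_le_mul (φ - k * d) (φ - x)
        simp only [Real.dist_eq, NNReal.coe_one, one_mul] at this
        exact this
      refine hlip.trans ?_
      rw [abs_le]
      constructor <;> linarith [hx.1, hx.2]
  refine (Finset.sum_le_sum this).trans ?_
  simp only [Finset.sum_const, Finset.card_range, nsmul_eq_mul]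
  rw [hd]
  apply le_of_eq
  field_simp

lemma zon_inner_le (a : ℕ → E2) (u : E2) (m : ℕ) : ∀ z ∈ zon a m,
    inner ℝ u (z - (1/2 : ℝ) • ∑ k ∈ Finset.range m, a k) ≤
      (1/2) * ∑ k ∈ Finset.range m, |inner ℝ u (a k)| := by
  induction m with
  | zero => intro z hz; rw [zon_zero] at hz; simp [Set.mem_zero.1 hz]
  | succ m ih =>
    intro z hz
    rw [zon_succ] at hz
    obtain ⟨y, hy, w, hw, rfl⟩ := hz
    rw [segment_eq_image] at hw
    obtain ⟨t, ht, rfl⟩ := hw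
    have h1 := ih y hy
    rw [Finset.sum_range_succ, Finset.sum_range_succ]
    have e : y + ((1 - t) • (0:E2) + t • a m) - (1/2 : ℝ) • (∑ k ∈ Finset.range m, a k + a m) =
      (y - (1/2 : ℝ) • ∑ k ∈ Finset.range m, a k) + (t - 1/2) • a m := by module
    simp only [e, inner_add_right, inner_smul_right]
    have h2 : (t - 1/2) * inner ℝ u (a m) ≤ (1/2) * |inner ℝ u (a m)| := by
      refine (le_abs_self _).trans ?_
      rw [abs_mul]
      gcongr
      rw [abs_le]; constructor <;> linarith [ht.1, ht.2]
    linarith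

lemma zon_inner_eq (a : ℕ → E2) (u : E2) (m : ℕ) : ∃ z ∈ zon a m,
    inner ℝ u (z - (1/2 : ℝ) • ∑ k ∈ Finset.range m, a k) =
      (1/2) * ∑ k ∈ Finset.range m, |inner ℝ u (a k)| := by
  induction m with
  | zero => exact ⟨0, by simp [zon_zero], by simp⟩
  | succ m ih =>
    obtain ⟨y, hy, h1⟩ := ih
    obtain ⟨t, ht, h2⟩ : ∃ t ∈ Icc (0:ℝ) 1, (t - 1/2) * inner ℝ u (a m) =
        (1/2) * |inner ℝ u (a m)| := by
      rcases le_total 0 (inner ℝ u (a m)) with h | h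
      · exact ⟨1, by simp, by rw [abs_of_nonneg h]; ring⟩
      · exact ⟨0, by simp, by rw [abs_of_nonpos h]; ring⟩
    refine ⟨y + ((1 - t) • (0:E2) + t • a m), ?_, ?_⟩
    · rw [zon_succ, segment_eq_image]
      exact ⟨y, hy, _, ⟨t, ht, rfl⟩, rfl⟩
    rw [Finset.sum_range_succ, Finset.sum_range_succ]
    have e : y + ((1 - t) • (0:E2) + t • a m) - (1/2 : ℝ) • (∑ k ∈ Finset.range m, a k + a m) =
      (y - (1/2 : ℝ) • ∑ k ∈ Finset.range m, a k) + (t - 1/2) • a m := by module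
    rw [e, inner_add_right, inner_smul_right, h1, h2]
    ring

/-- The generators of the approximating zonotope. -/
def gen (h : ℝ) (m : ℕ) (k : ℕ) : E2 :=
  !₂[h * (π / m) * cos (k * (π / m)), h * (π / m) * sin (k * (π / m))]

lemma exists_polar (u : E2) : ∃ φ : ℝ, u 0 = ‖u‖ * cos φ ∧ u 1 = ‖u‖ * sin φ := by
  refine ⟨Complex.arg ⟨u 0, u 1⟩, ?_, ?_⟩
  · have h : ‖u‖ = ‖(⟨u 0, u 1⟩ : ℂ)‖ := by
      rw [EuclideanSpace.norm_eq, Complex.norm_def, Complex.normSq_apply]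
      simp [Fin.sum_univ_two, sq]
    rw [h, Complex.norm_mul_cos_arg]
  · have h : ‖u‖ = ‖(⟨u 0, u 1⟩ : ℂ)‖ := by
      rw [EuclideanSpace.norm_eq, Complex.norm_def, Complex.normSq_apply]
      simp [Fin.sum_univ_two, sq]
    rw [h, Complex.norm_mul_sin_arg]

lemma inner_E2 (u v : E2) : inner ℝ u v = u 0 * v 0 + u 1 * v 1 := by
  simp [PiLp.inner_apply, Fin.sum_univ_two, mul_comm]

lemma gen_sum (h : ℝ) (hh : 0 ≤ h) (m : ℕ) (hm : 0 < m) (u : E2) :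
    |∑ k ∈ Finset.range m, |inner ℝ u (gen h m k)| - 2 * h * ‖u‖| ≤ h * ‖u‖ * (π ^ 2 / m) := by
  obtain ⟨φ, h0, h1⟩ := exists_polar u
  have e : ∀ k ∈ Finset.range m, |inner ℝ u (gen h m k)| =
      h * ‖u‖ * (π / m) * |cos (φ - k * (π / m))| := by
    intro k _
    have hm' : (0:ℝ) < m := by exact_mod_cast hm
    have : inner ℝ u (gen h m k) = h * ‖u‖ * (π / m) * cos (φ - k * (π / m)) := by
      rw [inner_E2, h0, h1, cos_sub]
      simp [gen]
      ring
    rw [this, abs_mul, abs_of_nonneg (by positivity)]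
  rw [Finset.sum_congr rfl e, ← Finset.mul_sum]
  have := cos_riemann φ m hm
  rw [show h * ‖u‖ * (π / m) * ∑ k ∈ Finset.range m, |cos (φ - k * (π / m))| - 2 * h * ‖u‖ =
    (h * ‖u‖) * ((π / m) * ∑ k ∈ Finset.range m, |cos (φ - k * (π / m))| - 2) by ring, abs_mul,
    abs_of_nonneg (by positivity)]
  gcongr

lemma gen_det_ne (h : ℝ) (hh : 0 < h) (m : ℕ) (j k : ℕ) (hj : j < m) (hk : k < m) :
    gen h m k = gen h m j ∨ det2 (gen h m k) (gen h m j) ≠ 0 := by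
  rcases eq_or_ne k j with rfl | hne
  · exact Or.inl rfl
  right
  have hm' : (0:ℝ) < m := by exact_mod_cast (Nat.zero_lt_of_lt hj)
  have e : det2 (gen h m k) (gen h m j) = (h * (π/m))^2 * sin (j * (π/m) - k * (π / m)) := by
    rw [sin_sub]; simp [det2, gen]; ring
  rw [e]
  refine mul_ne_zero (by positivity) ?_
  have hd : 0 < π / m := by positivity
  have emd : (m:ℝ) * (π/m) = π := by field_simp
  have hj' : (j:ℝ) * (π/m) < π := by nth_rewrite 2 [← emd]; gcongr
  have hk' : (k:ℝ) * (π/m) < π := by nth_rewrite 2 [← emd]; gcongr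
  have p1 : 0 ≤ (j:ℝ) * (π/m) := by positivity
  have p2 : 0 ≤ (k:ℝ) * (π/m) := by positivity
  rw [Ne, sin_eq_zero_iff_of_lt_of_lt (by linarith) (by linarith), ← sub_mul]
  refine mul_ne_zero ?_ hd.ne'
  rw [sub_ne_zero]
  exact_mod_cast hne.symm

lemma gen_det_sum (h : ℝ) (hh : 0 ≤ h) (m : ℕ) (hm : 0 < m) (N : ℕ) :
    ∑ j ∈ Finset.range m, ∑ k ∈ Finset.range m, N * |det2 (gen h m k) (gen h m j)| ≤
      N * (h ^ 2 * π * (2 + π ^ 2 / m)) := by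
  have hm' : (0:ℝ) < m := by exact_mod_cast hm
  have : ∀ j ∈ Finset.range m, ∑ k ∈ Finset.range m, N * |det2 (gen h m k) (gen h m j)| ≤
      N * ((h * (π / m)) * (h * (2 + π ^ 2 / m))) := by
    intro j _
    rw [← Finset.mul_sum]
    gcongr
    set u : E2 := !₂[h * (π/m) * sin (j * (π/m)), - (h * (π/m) * cos (j * (π/m)))] with hu
    have hn : ‖u‖ = h * (π / m) := by
      rw [EuclideanSpace.norm_eq, Real.sqrt_eq_iff_mul_self_eq (by positivity) (by positivity)]
      simp [hu, Fin.sum_univ_two]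
      have := sin_sq_add_cos_sq (j * (π/m))
      linear_combination ((h * (π/m))^2) * this
    have e : ∀ k ∈ Finset.range m, |det2 (gen h m k) (gen h m j)| = |inner ℝ u (gen h m k)| := by
      intro k _
      rw [inner_E2]
      congr 1
      simp [det2, gen, hu]; ring
    rw [Finset.sum_congr rfl e]
    have := (abs_le.1 (gen_sum h hh m hm u)).2
    rw [hn] at this
    linarith
  refine (Finset.sum_le_sum this).trans (le_of_eq ?_)
  simp only [Finset.sum_const, Finset.card_range, nsmul_eq_mul]
  field_simp

lemma zon_sub_ball (h : ℝ) (hh : 0 ≤ h) (m : ℕ) (hm : 0 < m) :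
    zon (gen h m) m ⊆ Metric.closedBall ((1/2 : ℝ) • ∑ k ∈ Finset.range m, gen h m k)
      (h * (1 + π ^ 2 / (2 * m))) := by
  intro z hz
  rw [Metric.mem_closedBall, dist_eq_norm]
  set w := z - (1/2 : ℝ) • ∑ k ∈ Finset.range m, gen h m k with hw
  have h1 := zon_inner_le (gen h m) w m z hz
  rw [← hw, real_inner_self_eq_norm_sq] at h1
  have h2 := (abs_le.1 (gen_sum h hh m hm w)).2
  by_contra hlt
  push Not at hlt
  have hpos : 0 < ‖w‖ := lt_of_le_of_lt (by positivity) hlt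
  have h3 : ‖w‖ * (h * (1 + π ^ 2 / (2 * m))) < ‖w‖ * ‖w‖ := by gcongr
  have e : π ^ 2 / (2 * m) = (π ^ 2 / m) / 2 := by field_simp
  rw [e] at h3
  nlinarith

lemma ball_sub_zon (h : ℝ) (hh : 0 ≤ h) (m : ℕ) (hm : 0 < m) :
    Metric.closedBall ((1/2 : ℝ) • ∑ k ∈ Finset.range m, gen h m k)
      (h * (1 - π ^ 2 / (2 * m))) ⊆ zon (gen h m) m := by
  intro x hx
  by_contra hxz
  obtain ⟨f, s, hf1, hf2⟩ := geometric_hahn_banach_closed_point (zon_convex (gen h m) m)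
    (zon_compact (gen h m) m).isClosed hxz
  set u := (InnerProductSpace.toDual ℝ E2).symm f with hu
  have hfu : ∀ y, f y = inner ℝ u y := fun y => by simp [hu]
  set p := (1/2 : ℝ) • ∑ k ∈ Finset.range m, gen h m k with hp
  obtain ⟨z, hz, hz2⟩ := zon_inner_eq (gen h m) u m
  have h1 := hf1 z hz
  rw [hfu] at h1 hf2
  rw [← hp, inner_sub_right] at hz2
  rw [Metric.mem_closedBall, dist_eq_norm] at hx
  have h2 := real_inner_le_norm u (x - p)
  rw [inner_sub_right] at h2
  have h3 := (abs_le.1 (gen_sum h hh m hm u)).1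
  have e : π ^ 2 / (2 * m) = (π ^ 2 / m) / 2 := by field_simp
  rw [e] at hx
  have h4 : ‖u‖ * ‖x - p‖ ≤ ‖u‖ * (h * (1 - π ^ 2 / m / 2)) := by gcongr
  nlinarith

/-- The area of the tubular neighbourhood. -/
def tube (K : Set E2) (t : ℝ) : ℝ := volume.real (K + Metric.closedBall (0:E2) t)

lemma cball_conn (x : E2) (t : ℝ) : IsPreconnected (Metric.closedBall x t) :=
  (convex_closedBall x t).isPreconnected

lemma NC.tube_second {N : ℕ} {K : Set E2} (hK : NC N K) {t h : ℝ} (ht : 0 ≤ t) (hh : 0 < h)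
    (m : ℕ) (hm : 0 < m) (hη : π ^ 2 / (2 * m) < 1) :
    tube K (t + 2 * (h * (1 - π ^ 2 / (2 * m)))) + tube K t ≤
      2 * tube K (t + h * (1 + π ^ 2 / (2 * m))) + N * (h ^ 2 * π * (2 + π ^ 2 / m)) := by
  have hm' : (0:ℝ) < m := by exact_mod_cast hm
  have hS : NC N (K + Metric.closedBall (0:E2) t) :=
    hK.add (isCompact_closedBall _ _) (cball_conn _ _)
  have h1 := zon_double hS (gen h m) m (fun j hj k hk => gen_det_ne h hh m j k hj hk)
  have h2 := gen_det_sum h hh.le m hm N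
  set p : E2 := (1/2 : ℝ) • ∑ k ∈ Finset.range m, gen h m k with hp
  set S := K + Metric.closedBall (0:E2) t with hSdef
  set Z := zon (gen h m) m with hZ
  set η := π ^ 2 / (2 * m) with hηd
  have hη0 : 0 ≤ η := by positivity
  have hfin : ∀ s, volume (K + Metric.closedBall (0:E2) s) ≠ ⊤ := fun s =>
    (hK.compact.add (isCompact_closedBall _ _)).measure_lt_top.ne
  have vt : ∀ (q : E2) (M : Set E2), volume.real ({q} + M) = volume.real M := by
    intro q M
    simp only [Measure.real, singleton_add, image_add_left, measure_preimage_add]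
  have cb : ∀ s : ℝ, Metric.closedBall p s = {p} + Metric.closedBall (0:E2) s := by
    intro s; simp
  have i1 : volume.real (S + Z) ≤ tube K (t + h * (1 + η)) := by
    have hsub : S + Z ⊆ {p} + (K + Metric.closedBall (0:E2) (t + h * (1 + η))) := by
      have : Z ⊆ {p} + Metric.closedBall (0:E2) (h * (1 + η)) := by
        rw [← cb]; exact zon_sub_ball h hh.le m hm
      refine (Set.add_subset_add_left this).trans (le_of_eq ?_)
      rw [hSdef, add_left_comm, add_assoc, closedBall_add_closedBall ht (by positivity), add_zero]
    rw [tube, ← vt p (K + _)]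
    refine measureReal_mono hsub ?_
    have := ((isCompact_singleton (x := p)).add
      (hK.compact.add (isCompact_closedBall (0:E2) (t + h * (1 + η))))).measure_lt_top (μ := volume)
    exact this.ne
  have i2 : tube K (t + 2 * (h * (1 - η))) ≤ volume.real (S + Z + Z) := by
    have hsub : {p} + ({p} + (K + Metric.closedBall (0:E2) (t + 2 * (h * (1 - η))))) ⊆
        S + Z + Z := by
      have : {p} + Metric.closedBall (0:E2) (h * (1 - η)) ⊆ Z := by
        rw [← cb]; exact ball_sub_zon h hh.le m hm
      refine subset_trans (le_of_eq ?_) (Set.add_subset_add (Set.add_subset_add_left this) this)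
      have hr : 0 ≤ h * (1 - η) := mul_nonneg hh.le (by linarith)
      have e : Metric.closedBall (0:E2) (t + 2 * (h * (1 - η))) = Metric.closedBall (0:E2) t +
          Metric.closedBall (0:E2) (h * (1 - η)) + Metric.closedBall (0:E2) (h * (1 - η)) := by
        rw [closedBall_add_closedBall ht hr, closedBall_add_closedBall (by positivity) hr]
        congr 1
        · simp
        · ring
      rw [e, hSdef]
      generalize Metric.closedBall (0:E2) (h * (1 - η)) = B
      generalize Metric.closedBall (0:E2) t = C
      abel
    rw [tube, ← vt p, ← vt p]
    refine measureReal_mono hsub ?_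
    exact (((hS.add_zon _ m).add_zon (gen h m) m).compact).measure_lt_top.ne
  have i3 : volume.real S = tube K t := rfl
  linarith

lemma tube_eq {K : Set E2} (hK : IsCompact K) {t : ℝ} (ht : 0 ≤ t) :
    tube K t = volume.real (Metric.cthickening t K) := by
  rw [tube, hK.add_closedBall_zero ht]

lemma tube_rightcont {K : Set E2} (hK : IsCompact K) {t : ℝ} (ht : 0 ≤ t) {u : ℕ → ℝ}
    (hu : Filter.Tendsto u Filter.atTop (𝓝 0)) (hu0 : ∀ᶠ n in Filter.atTop, 0 ≤ u n) :
    Filter.Tendsto (fun n => tube K (t + u n)) Filter.atTop (𝓝 (tube K t)) := by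
  have hS : IsCompact (K + Metric.closedBall (0:E2) t) := hK.add (isCompact_closedBall _ _)
  have h1 := (tendsto_measure_cthickening_of_isCompact (μ := volume) hS).comp hu
  have h2 := (ENNReal.tendsto_toReal hS.measure_lt_top.ne).comp h1
  refine h2.congr' ?_
  filter_upwards [hu0] with n hn
  simp only [Function.comp, tube, Measure.real]
  rw [← hS.add_closedBall_zero hn, add_assoc, closedBall_add_closedBall ht hn, add_zero]

lemma NC.tube_second' {N : ℕ} {K : Set E2} (hK : NC N K) {t h : ℝ} (ht : 0 ≤ t) (hh : 0 < h) :
    tube K (t + 2 * h) + tube K t ≤ 2 * tube K (t + h) + N * (h ^ 2 * π * 2) := by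
  set η : ℕ → ℝ := fun m => π ^ 2 / (2 * m) with hη
  have hη0 : Filter.Tendsto η Filter.atTop (𝓝 0) := by
    have := tendsto_const_div_atTop_nhds_zero_nat (π ^ 2 / 2)
    refine this.congr fun n => ?_
    simp only [hη]; rw [div_div]
  set g : ℕ → ℝ := fun m => h / (1 - η m) with hg
  have hg0 : Filter.Tendsto g Filter.atTop (𝓝 h) := by
    have : Filter.Tendsto g Filter.atTop (𝓝 (h / (1 - 0))) :=
      tendsto_const_nhds.div (tendsto_const_nhds.sub hη0) (by norm_num)
    simpa using this
  have hlt : ∀ᶠ m in Filter.atTop, η m < 1 := hη0.eventually (gt_mem_nhds one_pos)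
  have hpos : ∀ m, 0 ≤ η m := fun m => by positivity
  have hu : Filter.Tendsto (fun m => g m * (1 + η m) - h) Filter.atTop (𝓝 0) := by
    have : Filter.Tendsto (fun m => g m * (1 + η m) - h) Filter.atTop (𝓝 (h * (1 + 0) - h)) :=
      (hg0.mul (tendsto_const_nhds.add hη0)).sub tendsto_const_nhds
    simpa using this
  have hu0 : ∀ᶠ m in Filter.atTop, 0 ≤ g m * (1 + η m) - h := by
    filter_upwards [hlt] with m hm
    have : h ≤ g m := by
      rw [hg]; simp only; rw [le_div_iff₀ (by linarith)]; nlinarith [hpos m]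
    nlinarith [hpos m]
  have hT := tube_rightcont hK.compact (t := t + h) (by positivity) hu hu0
  have hlim : Filter.Tendsto (fun m => 2 * tube K (t + h + (g m * (1 + η m) - h)) +
      N * (g m ^ 2 * π * (2 + 2 * η m))) Filter.atTop
      (𝓝 (2 * tube K (t + h) + N * (h ^ 2 * π * (2 + 2 * 0)))) :=
    (hT.const_mul 2).add ((((hg0.pow 2).mul_const π).mul
      (tendsto_const_nhds.add (hη0.const_mul 2))).const_mul _)
  have := ge_of_tendsto hlim (b := tube K (t + 2 * h) + tube K t) ?_
  · simpa using this
  filter_upwards [hlt, Filter.eventually_gt_atTop 0] with m hm hm0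
  have hm' : (0:ℝ) < m := by exact_mod_cast hm0
  have h1 : 0 < 1 - η m := by linarith
  have := hK.tube_second ht (h := g m) (by positivity) m hm0 hm
  have e1 : g m * (1 - π ^ 2 / (2 * m)) = h := by
    show h / (1 - η m) * (1 - η m) = h
    field_simp
  rw [e1] at this
  have e2 : t + h + (g m * (1 + η m) - h) = t + g m * (1 + π ^ 2 / (2 * m)) := by
    simp only [hη]; ring
  have e3 : 2 * η m = π ^ 2 / m := by simp only [hη]; field_simp
  rw [e2, e3]
  exact this

lemma NC.tube_telescope {N : ℕ} {K : Set E2} (hK : NC N K) {h : ℝ} (hh : 0 < h) (n : ℕ) :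
    tube K ((n + 1) * h) - tube K (n * h) ≤ tube K h - tube K 0 + 2 * π * N * (n * h) * h := by
  induction n with
  | zero => simp
  | succ n ih =>
    have := hK.tube_second' (t := n * h) (by positivity) hh
    rw [show (n:ℝ) * h + 2 * h = ((n + 1 : ℕ) + 1) * h by push_cast; ring,
      show (n:ℝ) * h + h = (n + 1) * h by ring] at this
    push_cast at this ⊢
    nlinarith

/-! ### One-dimensional area formula -/

lemma area_piece_upper {c c' : ℝ → E2} {s : Set ℝ} {A : ℝ →L[ℝ] E2} {ε : ℝ≥0}
    (hA : ApproximatesLinearOn c A s ε) (hm : Measurable c')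
    (h : ∀ x ∈ s, ‖c' x - A 1‖ ≤ 2 * ε) :
    μH[1] (c '' s) ≤ ∫⁻ x in s, (‖c' x‖ₑ + 3 * ε) := by
  set L : ℝ≥0 := ‖A 1‖₊ + ε with hL
  have hlip : LipschitzOnWith L c s := by
    refine LipschitzOnWith.of_dist_le_mul fun x hx y hy => ?_
    rw [dist_eq_norm, dist_eq_norm]
    have h1 := hA x hx y hy
    have h2 : A (x - y) = (x - y) • A 1 := by rw [← A.map_smul]; simp
    have h3 : ‖c x - c y‖ ≤ ‖c x - c y - A (x - y)‖ + ‖A (x - y)‖ := by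
      simpa using norm_add_le (c x - c y - A (x - y)) (A (x - y))
    rw [h2, norm_smul] at h3
    rw [h2] at h1
    simp only [hL, NNReal.coe_add, coe_nnnorm]
    linarith
  have h1 := hlip.hausdorffMeasure_image_le (d := 1) zero_le_one
  rw [hausdorffMeasure_real, ENNReal.rpow_one, ← setLIntegral_const] at h1
  refine h1.trans (setLIntegral_mono (by fun_prop) fun x hx => ?_)
  have h4 : ‖A 1‖₊ ≤ ‖c' x‖₊ + 2 * ε := by
    rw [← NNReal.coe_le_coe]
    push_cast
    have := norm_sub_norm_le (A 1) (c' x)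
    rw [norm_sub_rev] at this
    linarith [h x hx]
  have : L ≤ ‖c' x‖₊ + 3 * ε := by
    rw [hL]; calc _ ≤ ‖c' x‖₊ + 2 * ε + ε := by gcongr
      _ = _ := by ring
  calc (L : ℝ≥0∞) ≤ ((‖c' x‖₊ + 3 * ε : ℝ≥0) : ℝ≥0∞) := by exact_mod_cast this
    _ = _ := by push_cast; rfl

lemma area_piece_lower {c c' : ℝ → E2} {s : Set ℝ} {A : ℝ →L[ℝ] E2} {ε : ℝ≥0}
    (hs : MeasurableSet s) (hA : ApproximatesLinearOn c A s ε)
    (h : ∀ x ∈ s, ‖c' x - A 1‖ ≤ 2 * ε) :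
    ∫⁻ x in s, ‖c' x‖ₑ ≤ μH[1] (c '' s) + 3 * ε * volume s := by
  have hle : ∀ x ∈ s, ‖c' x‖ ≤ ‖A 1‖ + 2 * ε := by
    intro x hx
    linarith [norm_sub_norm_le (c' x) (A 1), h x hx]
  rcases le_or_gt ‖A 1‖₊ ε with hcase | hcase
  · calc ∫⁻ x in s, ‖c' x‖ₑ ≤ ∫⁻ x in s, 3 * (ε : ℝ≥0∞) := by
          refine setLIntegral_mono measurable_const fun x hx => ?_
          have : ‖c' x‖₊ ≤ 3 * ε := by
            rw [← NNReal.coe_le_coe] at hcase ⊢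
            push_cast at *
            linarith [hle x hx]
          have h2 : ((‖c' x‖₊ : ℝ≥0) : ℝ≥0∞) ≤ ((3 * ε : ℝ≥0) : ℝ≥0∞) := by exact_mod_cast this
          calc ‖c' x‖ₑ = (‖c' x‖₊ : ℝ≥0∞) := rfl
            _ ≤ _ := h2
            _ = _ := by push_cast; rfl
      _ = 3 * ε * volume s := setLIntegral_const _ _
      _ ≤ _ := le_add_self
  set L : ℝ≥0 := ‖A 1‖₊ - ε with hL
  have hL0 : 0 < L := tsub_pos_of_lt hcase
  have hLr : (L : ℝ) = ‖A 1‖ - ε := by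
    rw [hL, NNReal.coe_sub hcase.le]; simp
  have hanti : ∀ x ∈ s, ∀ y ∈ s, (L : ℝ) * |x - y| ≤ ‖c x - c y‖ := by
    intro x hx y hy
    have h1 := hA x hx y hy
    have h2 : A (x - y) = (x - y) • A 1 := by rw [← A.map_smul]; simp
    have h3 : ‖A (x - y)‖ ≤ ‖c x - c y - A (x - y)‖ + ‖c x - c y‖ := by
      have := norm_sub_norm_le (A (x - y)) (c x - c y)
      rw [norm_sub_rev (A (x - y))] at this
      linarith
    rw [h2, norm_smul, Real.norm_eq_abs] at h3
    rw [h2, Real.norm_eq_abs] at h1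
    rw [hLr]
    linarith
  have hinj : InjOn c s := by
    intro x hx y hy hxy
    have := hanti x hx y hy
    rw [hxy, sub_self, norm_zero] at this
    have h0 : 0 < (L:ℝ) := hL0
    have h2 : |x - y| ≤ 0 := by nlinarith [abs_nonneg (x - y)]
    exact sub_eq_zero.1 (abs_eq_zero.1 (le_antisymm h2 (abs_nonneg _)))
  set g := Function.invFunOn c s with hg
  have hgl : LeftInvOn g c s := hinj.leftInvOn_invFunOn
  have hlip : LipschitzOnWith L⁻¹ g (c '' s) := by
    refine LipschitzOnWith.of_dist_le_mul ?_
    rintro _ ⟨x, hx, rfl⟩ _ ⟨y, hy, rfl⟩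
    rw [hgl hx, hgl hy, dist_eq_norm, dist_eq_norm, NNReal.coe_inv, inv_mul_eq_div,
      le_div_iff₀ (by exact_mod_cast hL0), mul_comm]
    exact hanti x hx y hy
  have h1 := hlip.hausdorffMeasure_image_le (d := 1) zero_le_one
  rw [hgl.image_image, hausdorffMeasure_real, ENNReal.rpow_one] at h1
  have h2 : L * volume s ≤ μH[1] (c '' s) := by
    calc (L:ℝ≥0∞) * volume s ≤ L * ((L⁻¹ : ℝ≥0) * μH[1] (c '' s)) := by gcongr
      _ = _ := by
        rw [← mul_assoc, ENNReal.coe_inv hL0.ne', ENNReal.mul_inv_cancel (by simpa using hL0.ne')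
          (by simp), one_mul]
  calc ∫⁻ x in s, ‖c' x‖ₑ ≤ ∫⁻ x in s, ((L : ℝ≥0∞) + 3 * ε) := by
        refine setLIntegral_mono measurable_const fun x hx => ?_
        have : ‖c' x‖₊ ≤ L + 3 * ε := by
          rw [← NNReal.coe_le_coe]
          push_cast
          rw [hLr]
          linarith [hle x hx]
        calc ‖c' x‖ₑ = (‖c' x‖₊ : ℝ≥0∞) := rfl
          _ ≤ ((L + 3 * ε : ℝ≥0) : ℝ≥0∞) := by exact_mod_cast this
          _ = _ := by push_cast; rfl
    _ = L * volume s + 3 * ε * volume s := by rw [setLIntegral_const, add_mul]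
    _ ≤ _ := by gcongr

/-- Decomposition into pieces. -/
lemma area_decomp {c c' : ℝ → E2} {s : Set ℝ} (hs : MeasurableSet s) (hm : Measurable c')
    (hd : ∀ x ∈ s, HasDerivWithinAt c (c' x) s x) {ε : ℝ≥0} (hε : 0 < ε) :
    ∃ (t : ℕ × ℕ → Set ℝ) (A : ℕ × ℕ → ℝ →L[ℝ] E2), Pairwise (Function.onFun Disjoint t) ∧
      (∀ n, MeasurableSet (t n)) ∧ s = ⋃ n, t n ∧
      (∀ n, ApproximatesLinearOn c (A n) (t n) ε) ∧
      (∀ n, ∀ x ∈ t n, ‖c' x - A n 1‖ ≤ 2 * ε) := by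
  set q := TopologicalSpace.denseSeq E2 with hq
  set B : ℕ → Set E2 := disjointed fun j => Metric.ball (q j) ε with hB
  have hBm : ∀ j, MeasurableSet (B j) :=
    fun j => MeasurableSet.disjointed (fun j => measurableSet_ball) j
  have hBd : Pairwise (Function.onFun Disjoint B) := disjoint_disjointed _
  have hBu : ∀ y, ∃ j, y ∈ B j := by
    intro y
    have : y ∈ ⋃ j, B j := by
      rw [hB, iUnion_disjointed]
      have := (TopologicalSpace.denseRange_denseSeq E2).exists_dist_lt y (ε := ε)
        (by exact_mod_cast hε)
      obtain ⟨j, hj⟩ := this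
      exact mem_iUnion.2 ⟨j, hj⟩
    exact mem_iUnion.1 this
  have hBs : ∀ j, B j ⊆ Metric.ball (q j) ε := fun j => disjointed_subset _ j
  set sj : ℕ → Set ℝ := fun j => s ∩ c' ⁻¹' (B j) with hsj
  have hex : ∀ j, ∃ (t : ℕ → Set ℝ) (A : ℕ → ℝ →L[ℝ] E2),
      Pairwise (Function.onFun Disjoint t) ∧
        (∀ n, MeasurableSet (t n)) ∧ (sj j ⊆ ⋃ n, t n) ∧
            (∀ n, ApproximatesLinearOn c (A n) (sj j ∩ t n) ε) ∧
              ((sj j).Nonempty → ∀ n, ∃ y ∈ sj j, A n = ContinuousLinearMap.toSpanSingleton ℝ (c' y)) := fun j =>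
    exists_partition_approximatesLinearOn_of_hasFDerivWithinAt c (sj j)
      (fun x => ContinuousLinearMap.toSpanSingleton ℝ (c' x))
      (fun x hx => ((hd x hx.1).mono inter_subset_left).hasFDerivWithinAt) (fun _ => ε)
      (fun _ => hε.ne')
  choose t A htd htm htu htA htn using hex
  refine ⟨fun p => sj p.1 ∩ t p.1 p.2, fun p => A p.1 p.2, ?_, ?_, ?_, fun p => htA p.1 p.2, ?_⟩
  · rintro ⟨j, n⟩ ⟨k, m⟩ hne
    refine Set.disjoint_left.2 fun x hx hx' => ?_
    have hjk : j = k := by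
      by_contra hjk
      exact Set.disjoint_left.1 (hBd hjk) hx.1.2 hx'.1.2
    subst hjk
    have hnm : n = m := by
      by_contra hnm
      exact Set.disjoint_left.1 (htd j hnm) hx.2 hx'.2
    exact hne (by rw [hnm])
  · exact fun p => (hs.inter (hm (hBm _))).inter (htm _ _)
  · ext x
    constructor
    · intro hx
      obtain ⟨j, hj⟩ := hBu (c' x)
      obtain ⟨n, hn⟩ := mem_iUnion.1 (htu j ⟨hx, hj⟩)
      exact mem_iUnion.2 ⟨(j, n), ⟨hx, hj⟩, hn⟩
    · intro hx
      obtain ⟨p, hp⟩ := mem_iUnion.1 hx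
      exact hp.1.1
  · rintro ⟨j, n⟩ x ⟨hx, -⟩
    obtain ⟨y, hy, e⟩ := htn j ⟨x, hx⟩ n
    simp only [e, ContinuousLinearMap.toSpanSingleton_apply, one_smul]
    have h1 : dist (c' x) (q j) < ε := hBs j hx.2
    have h2 : dist (c' y) (q j) < ε := hBs j hy.2
    rw [← dist_eq_norm]
    linarith [dist_triangle_right (c' x) (c' y) (q j)]

lemma area_formula {c c' : ℝ → E2} {s : Set ℝ} (hs : MeasurableSet s) (hm : Measurable c')
    (hd : ∀ x ∈ s, HasDerivWithinAt c (c' x) s x) (hfin : volume s ≠ ⊤) (hinj : InjOn c s) :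
    μH[1] (c '' s) = ∫⁻ x in s, ‖c' x‖ₑ := by
  have key : ∀ ε : ℝ≥0, 0 < ε → μH[1] (c '' s) ≤ (∫⁻ x in s, ‖c' x‖ₑ) + 3 * ε * volume s ∧
      ∫⁻ x in s, ‖c' x‖ₑ ≤ μH[1] (c '' s) + 3 * ε * volume s := by
    intro ε hε
    obtain ⟨t, A, htd, htm, hst, htA, htc⟩ := area_decomp hs hm hd hε
    constructor
    · calc μH[1] (c '' s) = μH[1] (⋃ n, c '' t n) := by rw [hst, image_iUnion]
        _ ≤ ∑' n, μH[1] (c '' t n) := measure_iUnion_le _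
        _ ≤ ∑' n, ∫⁻ x in t n, (‖c' x‖ₑ + 3 * ε) :=
          ENNReal.tsum_le_tsum fun n => area_piece_upper (htA n) hm (htc n)
        _ = ∫⁻ x in s, (‖c' x‖ₑ + 3 * ε) := by
          rw [hst, lintegral_iUnion htm htd]
        _ = _ := by rw [lintegral_add_right _ measurable_const, setLIntegral_const]
    · have hcont : ContinuousOn c s := fun x hx => (hd x hx).continuousWithinAt
      have hsub : ∀ n, t n ⊆ s := fun n => by rw [hst]; exact subset_iUnion _ _
      calc ∫⁻ x in s, ‖c' x‖ₑ = ∑' n, ∫⁻ x in t n, ‖c' x‖ₑ := by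
            nth_rewrite 1 [hst]; rw [lintegral_iUnion htm htd]
        _ ≤ ∑' n, (μH[1] (c '' t n) + 3 * ε * volume (t n)) :=
          ENNReal.tsum_le_tsum fun n => area_piece_lower (htm n) (htA n) (htc n)
        _ = μH[1] (⋃ n, c '' t n) + 3 * ε * volume (⋃ n, t n) := by
          rw [ENNReal.tsum_add, measure_iUnion _ _, ENNReal.tsum_mul_left, measure_iUnion htd htm]
          · intro n m hnm
            refine Set.disjoint_left.2 ?_
            rintro _ ⟨x, hx, rfl⟩ ⟨y, hy, hxy⟩
            rw [hinj (hsub m hy) (hsub n hx) hxy] at hy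
            exact Set.disjoint_left.1 (htd hnm) hx hy
          · exact fun n => (htm n).image_of_continuousOn_injOn (hcont.mono (hsub n))
              (hinj.mono (hsub n))
        _ = _ := by rw [← image_iUnion, ← hst]
  have hlim : ∀ a : ℝ≥0∞, Filter.Tendsto (fun ε : ℝ≥0 => a + 3 * ε * volume s) (𝓝[>] 0)
      (𝓝 (a)) := by
    intro a
    have h1 : Filter.Tendsto (fun ε : ℝ≥0 => (ε : ℝ≥0∞)) (𝓝[>] 0) (𝓝 0) := by
      have : Filter.Tendsto (fun ε : ℝ≥0 => (ε : ℝ≥0∞)) (𝓝 0) (𝓝 ((0:ℝ≥0) : ℝ≥0∞)) :=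
        ENNReal.continuous_coe.tendsto 0
      exact this.mono_left nhdsWithin_le_nhds
    have h2 := ENNReal.Tendsto.mul_const (ENNReal.Tendsto.const_mul h1 
      (Or.inr (by norm_num : (3:ℝ≥0∞) ≠ ⊤))) (Or.inr hfin) (b := volume s)
    have := (tendsto_const_nhds (x := a)).add h2
    simpa using this
  refine le_antisymm ?_ ?_
  · refine ge_of_tendsto (hlim _) ?_
    filter_upwards [self_mem_nhdsWithin] with ε hε using (key ε hε).1
  · refine ge_of_tendsto (hlim _) ?_
    filter_upwards [self_mem_nhdsWithin] with ε hε using (key ε hε).2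

/-! ### Normal coordinates in one chart -/

/-- A piece of the boundary of `K` with unit normal field. -/
structure Chart (K : Set E2) where
  a : ℝ
  b : ℝ
  C : ℝ
  γ : ℝ → E2
  ν : ℝ → E2
  mγ : Measurable γ
  mν : Measurable ν
  dγ : ∀ s ∈ Ioo a b, DifferentiableAt ℝ γ s
  dν : ∀ s ∈ Ioo a b, DifferentiableAt ℝ ν s
  bγ : ∀ s ∈ Ioo a b, ‖deriv γ s‖ ≤ C
  bν : ∀ s ∈ Ioo a b, ‖deriv ν s‖ ≤ C
  inj : InjOn γ (Ioo a b)
  nν : ∀ s ∈ Ioo a b, ‖ν s‖ = 1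
  oγ : ∀ s ∈ Ioo a b, inner ℝ (deriv γ s) (ν s) = 0
  oν : ∀ s ∈ Ioo a b, inner ℝ (deriv ν s) (ν s) = 0
  np : ∀ x, 0 < Metric.infDist x K → ∀ s ∈ Ioo a b, dist x (γ s) = Metric.infDist x K →
    x = γ s + Metric.infDist x K • ν s

namespace Chart

variable {K : Set E2} (c : Chart K) (E : Set ℝ)

/-- Normal coordinates. -/
def Phi (p : ℝ × ℝ) : E2 := c.γ p.1 + p.2 • c.ν p.1

/-- Parameters whose foot point is nearest. -/
def S : Set (ℝ × ℝ) := {p | p.1 ∈ E ∧ 0 < p.2 ∧ Metric.infDist (c.Phi p) K = p.2}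

/-- Parameters which can be extended. -/
def So : Set (ℝ × ℝ) := {p | p.1 ∈ E ∧ 0 < p.2 ∧ ∃ q : ℚ, p.2 < q ∧
  Metric.infDist (c.Phi (p.1, (q : ℝ))) K = q}

lemma measurable_Phi : Measurable c.Phi := by
  unfold Phi
  exact (c.mγ.comp measurable_fst).add (measurable_snd.smul (c.mν.comp measurable_fst))

lemma measurableSet_S (hE : MeasurableSet E) : MeasurableSet (c.S E) := by
  refine (measurable_fst hE).inter ((measurableSet_lt measurable_const measurable_snd).inter ?_)
  exact measurableSet_eq_fun (c.measurable_Phi.infDist) measurable_snd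

lemma measurableSet_So (hE : MeasurableSet E) : MeasurableSet (c.So E) := by
  refine (measurable_fst hE).inter ((measurableSet_lt measurable_const measurable_snd).inter ?_)
  have : {p : ℝ × ℝ | ∃ q : ℚ, p.2 < q ∧ Metric.infDist (c.Phi (p.1, (q : ℝ))) K = q} =
      ⋃ q : ℚ, {p : ℝ × ℝ | p.2 < q} ∩
        {p : ℝ × ℝ | Metric.infDist (c.Phi (p.1, (q : ℝ))) K = q} := by
    ext p; simp
  refine MeasurableSet.congr (MeasurableSet.iUnion fun q => ?_) this.symm
  refine (measurableSet_lt measurable_snd measurable_const).inter ?_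
  refine measurableSet_eq_fun ?_ measurable_const
  exact (c.measurable_Phi.comp (measurable_fst.prodMk measurable_const)).infDist

variable {E}

lemma S_down (hE : E ⊆ Ioo c.a c.b) (hγ : ∀ s ∈ E, c.γ s ∈ K)
    {s t q : ℝ} (ht : 0 < t) (htq : t ≤ q) (h : (s, q) ∈ c.S E) : (s, t) ∈ c.S E := by
  obtain ⟨h1, h2, h3⟩ := h
  simp only at h1 h2 h3
  refine ⟨h1, ht, le_antisymm ?_ ?_⟩
  · refine (Metric.infDist_le_dist_of_mem (hγ s h1)).trans ?_
    simp [Phi, dist_eq_norm, norm_smul, c.nν s (hE h1), abs_of_pos ht]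
  · have := Metric.infDist_le_infDist_add_dist (s := K) (x := c.Phi (s, q)) (y := c.Phi (s, t))
    have e : dist (c.Phi (s, q)) (c.Phi (s, t)) = q - t := by
      simp only [Phi, dist_eq_norm]
      rw [show c.γ s + q • c.ν s - (c.γ s + t • c.ν s) = (q - t) • c.ν s by module, norm_smul,
        c.nν s (hE h1), mul_one, Real.norm_eq_abs, abs_of_nonneg (by linarith)]
    rw [e, h3] at this
    show t ≤ _
    linarith

lemma So_sub_S (hE : E ⊆ Ioo c.a c.b) (hγ : ∀ s ∈ E, c.γ s ∈ K)
    : c.So E ⊆ c.S E := by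
  rintro ⟨s, t⟩ ⟨h1, h2, q, h3, h4⟩
  exact c.S_down hE hγ h2 h3.le ⟨h1, lt_trans h2 h3, h4⟩

lemma So_uniq (hE : E ⊆ Ioo c.a c.b) (hγ : ∀ s ∈ E, c.γ s ∈ K)
    {s t : ℝ} (h : (s, t) ∈ c.So E) {z : E2} (hz : z ∈ K)
    (hd : dist (c.Phi (s, t)) z ≤ t) : z = c.γ s := by
  obtain ⟨h1, h2, q, h3, h4⟩ := h
  simp only at h1 h2 h3 h4
  set x := c.Phi (s, t) with hx
  have hn := c.nν s (hE h1)
  set w := x - z with hw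
  have e1 : c.Phi (s, (q:ℝ)) - z = ((q:ℝ) - t) • c.ν s + w := by
    simp only [hw, hx, Phi]; module
  have h5 : (q:ℝ) ≤ ‖((q:ℝ) - t) • c.ν s + w‖ := by
    rw [← e1, ← dist_eq_norm]
    exact h4.symm.le.trans (Metric.infDist_le_dist_of_mem hz)
  have hw1 : ‖w‖ ≤ t := by rwa [dist_eq_norm] at hd
  have h6 : ‖((q:ℝ) - t) • c.ν s + w‖ ^ 2 =
      ((q:ℝ) - t)^2 + 2 * (((q:ℝ) - t) * inner ℝ (c.ν s) w) + ‖w‖ ^ 2 := by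
    rw [norm_add_sq_real, inner_smul_left, norm_smul, hn]
    simp
  have h7 : (q:ℝ) ^ 2 ≤ ‖((q:ℝ) - t) • c.ν s + w‖ ^ 2 :=
    pow_le_pow_left₀ (by linarith) h5 2
  have hw2 : ‖w‖ ^ 2 ≤ t ^ 2 := pow_le_pow_left₀ (norm_nonneg _) hw1 2
  have h8 : t ≤ inner ℝ (c.ν s) w := by
    have : ((q:ℝ) - t) * t ≤ ((q:ℝ) - t) * inner ℝ (c.ν s) w := by nlinarith
    exact le_of_mul_le_mul_left this (by linarith)
  have h9 : ‖w - t • c.ν s‖ ^ 2 = ‖w‖ ^ 2 - 2 * (t * inner ℝ (c.ν s) w) + t ^ 2 := by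
    rw [norm_sub_sq_real, inner_smul_right, norm_smul, hn, real_inner_comm]
    simp
  have h10 : ‖w - t • c.ν s‖ ^ 2 ≤ 0 := by nlinarith
  have h11 : w - t • c.ν s = 0 := by
    rw [← norm_eq_zero]
    exact pow_eq_zero_iff (two_ne_zero) |>.1 (le_antisymm h10 (sq_nonneg _))
  have : w - t • c.ν s = c.γ s - z := by simp only [hw, hx, Phi]; module
  rw [this, sub_eq_zero] at h11
  exact h11.symm

lemma dist_Phi (hE : E ⊆ Ioo c.a c.b) {s t : ℝ} (hs : s ∈ E) (ht : 0 < t) : dist (c.Phi (s, t)) (c.γ s) = t := by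
  simp [Phi, dist_eq_norm, norm_smul, c.nν s (hE hs), abs_of_pos ht]

lemma So_inj (hE : E ⊆ Ioo c.a c.b) (hγ : ∀ s ∈ E, c.γ s ∈ K)
    : InjOn c.Phi (c.So E) := by
  rintro ⟨s, t⟩ h ⟨s', t'⟩ h' hh
  have h1 := (c.So_sub_S hE hγ h)
  have h1' := (c.So_sub_S hE hγ h')
  have e : t = t' := by
    have e1 := h1.2.2
    have e2 := h1'.2.2
    simp only at e1 e2
    rw [← e1, ← e2, hh]
  have := c.So_uniq hE hγ h (hγ s' h'.1) (by
    rw [hh, c.dist_Phi hE h'.1 h'.2.1, e])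
  have e3 : s' = s := c.inj (hE h'.1) (hE h.1) this
  rw [e3, e]

lemma null_diff (hE : E ⊆ Ioo c.a c.b) (hγ : ∀ s ∈ E, c.γ s ∈ K)
    (hEm : MeasurableSet E) : volume (c.S E \ c.So E) = 0 := by
  rw [Measure.volume_eq_prod, Measure.measure_prod_null
    ((c.measurableSet_S E hEm).diff (c.measurableSet_So E hEm))]
  filter_upwards with s
  have : (Prod.mk s ⁻¹' (c.S E \ c.So E)).Subsingleton := by
    have key : ∀ t t', (s, t) ∈ c.S E \ c.So E → (s, t') ∈ c.S E \ c.So E → ¬ t < t' := by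
      intro t t' h h' hlt
      obtain ⟨q, hq1, hq2⟩ := exists_rat_btwn hlt
      have hq := c.S_down hE hγ (lt_trans h.1.2.1 hq1) hq2.le h'.1
      exact h.2 ⟨h.1.1, h.1.2.1, q, hq1, hq.2.2⟩
    intro t ht t' ht'
    exact le_antisymm (not_lt.1 (key _ _ ht' ht)) (not_lt.1 (key _ _ ht ht'))
  exact this.measure_zero _

end Chart

namespace Chart

variable {K : Set E2} (c : Chart K) {E : Set ℝ}

/-- The Jacobian. -/
def J (p : ℝ × ℝ) : ℝ≥0∞ := ‖deriv c.γ p.1 + p.2 • deriv c.ν p.1‖ₑ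

lemma measurable_J : Measurable c.J := by
  unfold J
  exact (((measurable_deriv _).comp measurable_fst).add
    (measurable_snd.smul ((measurable_deriv _).comp measurable_fst))).enorm

/-- The length of the extendable part of the parallel curve. -/
def len (E : Set ℝ) (t : ℝ) : ℝ≥0∞ := ∫⁻ s, (c.So E).indicator c.J (s, t)

lemma len_eq (hE : MeasurableSet E) (t : ℝ) :
    c.len E t = ∫⁻ s in {s | (s, t) ∈ c.So E}, c.J (s, t) := by
  have hm : MeasurableSet {s | (s, t) ∈ c.So E} :=
    (measurable_id.prodMk measurable_const) (c.measurableSet_So E hE)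
  rw [← lintegral_indicator hm]
  rfl

lemma measurable_len (hE : MeasurableSet E) : Measurable (c.len E) :=
  (c.measurable_J.indicator (c.measurableSet_So E hE)).lintegral_prod_left'

lemma hasDerivAt_Phi {s : ℝ} (hs : s ∈ Ioo c.a c.b) (t : ℝ) :
    HasDerivAt (fun s => c.Phi (s, t)) (deriv c.γ s + t • deriv c.ν s) s :=
  (c.dγ s hs).hasDerivAt.add ((c.dν s hs).hasDerivAt.const_smul t)

lemma hasFDerivAt_Phi {p : ℝ × ℝ} (hs : p.1 ∈ Ioo c.a c.b) :
    HasFDerivAt (fun p => coordE (c.Phi p))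
      (colMap (deriv c.γ p.1 + p.2 • deriv c.ν p.1) (c.ν p.1)) p := by
  have h1 : HasFDerivAt (fun p : ℝ × ℝ => c.γ p.1) _ p :=
    ((c.dγ p.1 hs).hasDerivAt.hasFDerivAt.comp p hasFDerivAt_fst)
  have h2 : HasFDerivAt (fun p : ℝ × ℝ => c.ν p.1) _ p :=
    ((c.dν p.1 hs).hasDerivAt.hasFDerivAt.comp p hasFDerivAt_fst)
  have h3 := h1.add ((hasFDerivAt_snd (p := p) (𝕜 := ℝ)).smul h2)
  have h4 := coordE.hasFDerivAt.comp p h3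
  refine h4.congr_fderiv ?_
  ext <;> simp [colMap_apply] 

lemma abs_det {s t : ℝ} (hs : s ∈ Ioo c.a c.b) :
    ENNReal.ofReal |(colMap (deriv c.γ s + t • deriv c.ν s) (c.ν s)).det| = c.J (s, t) := by
  rw [J, colMap_det, ← ofReal_norm]
  congr 1
  simp only
  set v := deriv c.γ s + t • deriv c.ν s with hv
  have ho : inner ℝ v (c.ν s) = 0 := by
    rw [hv, inner_add_left, inner_smul_left, c.oγ s hs, c.oν s hs]; simp
  have hn := c.nν s hs
  set u := c.ν s
  rw [inner_E2] at ho
  have e1 : ‖v‖ ^ 2 = v 0 ^ 2 + v 1 ^ 2 := by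
    rw [EuclideanSpace.norm_sq_eq]; simp [Fin.sum_univ_two]
  have e2 : ‖u‖ ^ 2 = u 0 ^ 2 + u 1 ^ 2 := by
    rw [EuclideanSpace.norm_sq_eq]; simp [Fin.sum_univ_two]
  rw [hn] at e2
  rw [← abs_of_nonneg (norm_nonneg v), ← sq_eq_sq_iff_abs_eq_abs, e1]
  linear_combination (-(v 0 ^ 2 + v 1 ^ 2)) * e2 - (v 0 * u 0 + v 1 * u 1) * ho

lemma vol_So (hE : E ⊆ Ioo c.a c.b) (hγ : ∀ s ∈ E, c.γ s ∈ K) (hEm : MeasurableSet E)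
    {T : Set ℝ} (hT : MeasurableSet T) :
    volume (c.Phi '' (c.So E ∩ Prod.snd ⁻¹' T)) = ∫⁻ t in T, c.len E t := by
  have hm : MeasurableSet (c.So E ∩ Prod.snd ⁻¹' T) :=
    (c.measurableSet_So E hEm).inter (measurable_snd hT)
  have h1 := lintegral_abs_det_fderiv_eq_addHaar_image (volume : Measure (ℝ × ℝ)) hm
    (f := fun p => coordE (c.Phi p))
    (f' := fun p => colMap (deriv c.γ p.1 + p.2 • deriv c.ν p.1) (c.ν p.1))
    (fun p hp => (c.hasFDerivAt_Phi (hE hp.1.1)).hasFDerivWithinAt)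
    (coordE.injective.comp_injOn ((c.So_inj hE hγ).mono inter_subset_left))
  rw [← coordE_vol, image_image, ← h1,
    setLIntegral_congr_fun (g := c.J) hm (fun p hp => c.abs_det (hE hp.1.1)),
    ← lintegral_indicator hm, Measure.volume_eq_prod,
    lintegral_prod_symm' _ (c.measurable_J.indicator hm), ← lintegral_indicator hT]
  refine lintegral_congr fun t => ?_
  by_cases ht : t ∈ T
  · rw [indicator_of_mem ht, len]
    refine lintegral_congr fun s => ?_
    by_cases hs : (s, t) ∈ c.So E
    · rw [indicator_of_mem hs, indicator_of_mem (show (s, t) ∈ c.So E ∩ Prod.snd ⁻¹' T from ⟨hs, ht⟩)]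
    · rw [indicator_of_notMem hs, indicator_of_notMem fun h => hs h.1]
  · rw [indicator_of_notMem ht]
    have : ∀ s, (c.So E ∩ Prod.snd ⁻¹' T).indicator c.J (s, t) = 0 := fun s =>
      indicator_of_notMem (fun h => ht h.2) _
    simp [this]

lemma measurableSet_image_So (hE : E ⊆ Ioo c.a c.b) (hγ : ∀ s ∈ E, c.γ s ∈ K)
    (hEm : MeasurableSet E) {T : Set ℝ} (hT : MeasurableSet T) :
    MeasurableSet (c.Phi '' (c.So E ∩ Prod.snd ⁻¹' T)) := by
  have hm : MeasurableSet (c.So E ∩ Prod.snd ⁻¹' T) :=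
    (c.measurableSet_So E hEm).inter (measurable_snd hT)
  refine hm.image_of_measurable_injOn c.measurable_Phi ((c.So_inj hE hγ).mono inter_subset_left)

lemma vol_null (hE : E ⊆ Ioo c.a c.b) (hγ : ∀ s ∈ E, c.γ s ∈ K) (hEm : MeasurableSet E) :
    volume (c.Phi '' (c.S E \ c.So E)) = 0 := by
  rw [← coordE_vol, image_image]
  refine addHaar_image_eq_zero_of_differentiableOn_of_addHaar_eq_zero volume
    (f := fun p => coordE (c.Phi p)) ?_ (c.null_diff hE hγ hEm)
  exact fun p hp => (c.hasFDerivAt_Phi (hE hp.1.1)).differentiableAt.differentiableWithinAt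

lemma haus_So (hE : E ⊆ Ioo c.a c.b) (hγ : ∀ s ∈ E, c.γ s ∈ K) (hEm : MeasurableSet E) (t : ℝ) :
    μH[1] (c.Phi '' (c.So E ∩ Prod.snd ⁻¹' {t})) = c.len E t := by
  have hm : MeasurableSet {s | (s, t) ∈ c.So E} :=
    (measurable_id.prodMk measurable_const) (c.measurableSet_So E hEm)
  have e : c.Phi '' (c.So E ∩ Prod.snd ⁻¹' {t}) =
      (fun s => c.Phi (s, t)) '' {s | (s, t) ∈ c.So E} := by
    ext x
    constructor
    · rintro ⟨⟨s, t'⟩, ⟨h1, h2⟩, rfl⟩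
      simp only [mem_preimage, mem_singleton_iff] at h2
      subst h2
      exact ⟨s, h1, rfl⟩
    · rintro ⟨s, h1, rfl⟩
      exact ⟨(s, t), ⟨h1, rfl⟩, rfl⟩
  rw [e, c.len_eq hEm]
  refine area_formula (c' := fun s => deriv c.γ s + t • deriv c.ν s) hm ?_ ?_ ?_ ?_
  · exact (measurable_deriv _).add ((measurable_deriv _).const_smul t)
  · exact fun s hs => (c.hasDerivAt_Phi (hE hs.1) t).hasDerivWithinAt
  · have : {s | (s, t) ∈ c.So E} ⊆ Ioo c.a c.b := fun s hs => hE hs.1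
    exact ((measure_mono this).trans_lt (by simp)).ne
  · intro s hs s' hs' h
    have := c.So_inj hE hγ hs hs' h
    exact (Prod.mk.inj this).1

lemma haus_null (hE : E ⊆ Ioo c.a c.b) (hγ : ∀ s ∈ E, c.γ s ∈ K) (hEm : MeasurableSet E) :
    ∀ᵐ t : ℝ, μH[1] (c.Phi '' ((c.S E \ c.So E) ∩ Prod.snd ⁻¹' {t})) = 0 := by
  have h0 := c.null_diff hE hγ hEm
  have hm := (c.measurableSet_S E hEm).diff (c.measurableSet_So E hEm)
  rw [Measure.volume_eq_prod, ← Measure.prod_swap, Measure.map_apply measurable_swap hm,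
    Measure.measure_prod_null (measurable_swap hm)] at h0
  filter_upwards [h0] with t ht
  have e : c.Phi '' ((c.S E \ c.So E) ∩ Prod.snd ⁻¹' {t}) =
      (fun s => c.Phi (s, t)) '' {s | (s, t) ∈ c.S E \ c.So E} := by
    ext x
    constructor
    · rintro ⟨⟨s, t'⟩, ⟨h1, h2⟩, rfl⟩
      simp only [mem_preimage, mem_singleton_iff] at h2
      subst h2
      exact ⟨s, h1, rfl⟩
    · rintro ⟨s, h1, rfl⟩
      exact ⟨(s, t), ⟨h1, rfl⟩, rfl⟩
  rw [e]
  have hC : ∀ s ∈ Ioo c.a c.b, ‖deriv c.γ s + t • deriv c.ν s‖₊ ≤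
      (c.C + |t| * c.C).toNNReal := by
    intro s hs
    rw [← NNReal.coe_le_coe]
    refine le_trans ?_ (Real.le_coe_toNNReal _)
    simp only [coe_nnnorm]
    refine (norm_add_le _ _).trans ?_
    rw [norm_smul, Real.norm_eq_abs]
    gcongr
    · exact c.bγ s hs
    · exact c.bν s hs
  have hl := (convex_Ioo c.a c.b).lipschitzOnWith_of_nnnorm_hasDerivWithin_le
    (f := fun s => c.Phi (s, t)) (f' := fun s => deriv c.γ s + t • deriv c.ν s)
    (fun s hs => (c.hasDerivAt_Phi hs t).hasDerivWithinAt) hC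
  have hsub : {s | (s, t) ∈ c.S E \ c.So E} ⊆ Ioo c.a c.b := fun s hs => hE hs.1.1
  have h2 := (hl.mono hsub).hausdorffMeasure_image_le (d := 1) zero_le_one
  rw [hausdorffMeasure_real, ENNReal.rpow_one] at h2
  refine le_antisymm (h2.trans ?_) zero_le
  have : volume {s | (s, t) ∈ c.S E \ c.So E} = 0 := ht
  rw [this, mul_zero]

lemma haus_E (hE : E ⊆ Ioo c.a c.b) (hEm : MeasurableSet E) :
    μH[1] (c.γ '' E) = ∫⁻ s in E, ‖deriv c.γ s‖ₑ := by
  refine area_formula hEm (measurable_deriv _) ?_ ?_ (c.inj.mono hE)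
  · exact fun s hs => (c.dγ s (hE hs)).hasDerivAt.hasDerivWithinAt
  · exact ((measure_mono hE).trans_lt (by simp)).ne

lemma haus_E_lt (hE : E ⊆ Ioo c.a c.b) (hEm : MeasurableSet E) : μH[1] (c.γ '' E) < ⊤ := by
  rw [c.haus_E hE hEm]
  calc ∫⁻ s in E, ‖deriv c.γ s‖ₑ ≤ ∫⁻ s in E, ENNReal.ofReal c.C := by
        refine setLIntegral_mono measurable_const fun s hs => ?_
        rw [← ofReal_norm]
        exact ENNReal.ofReal_le_ofReal (c.bγ s (hE hs))
    _ = ENNReal.ofReal c.C * volume E := setLIntegral_const _ _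
    _ < ⊤ := ENNReal.mul_lt_top ENNReal.ofReal_lt_top ((measure_mono hE).trans_lt (by simp))

lemma len_le (hE : E ⊆ Ioo c.a c.b) (hEm : MeasurableSet E) {t : ℝ} (ht : 0 ≤ t) :
    c.len E t ≤ μH[1] (c.γ '' E) + ENNReal.ofReal (t * (|c.C| * |c.b - c.a|)) := by
  rw [c.len_eq hEm, c.haus_E hE hEm]
  calc ∫⁻ s in {s | (s, t) ∈ c.So E}, c.J (s, t) ≤ ∫⁻ s in E, c.J (s, t) :=
        lintegral_mono_set fun s hs => hs.1
    _ ≤ ∫⁻ s in E, (‖deriv c.γ s‖ₑ + ENNReal.ofReal (t * |c.C|)) := by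
        refine setLIntegral_mono (by fun_prop) fun s hs => ?_
        refine (enorm_add_le _ _).trans ?_
        gcongr
        rw [← ofReal_norm]
        refine ENNReal.ofReal_le_ofReal ?_
        rw [norm_smul, Real.norm_eq_abs, abs_of_nonneg ht]
        gcongr
        exact (c.bν s (hE hs)).trans (le_abs_self _)
    _ = (∫⁻ s in E, ‖deriv c.γ s‖ₑ) + ENNReal.ofReal (t * |c.C|) * volume E := by
        rw [lintegral_add_right _ measurable_const, setLIntegral_const]
    _ ≤ _ := by
        refine add_le_add le_rfl ?_
        rw [← mul_assoc, ENNReal.ofReal_mul (p := t * |c.C|) (by positivity)]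
        refine mul_le_mul' le_rfl ?_
        refine (measure_mono hE).trans ?_
        rw [Real.volume_Ioo]
        exact ENNReal.ofReal_le_ofReal (le_abs_self _)

end Chart

/-! ### The coarea formula for the distance function -/

lemma coarea {K Γ : Set E2} (hK : IsCompact K) (hKn : K.Nonempty) (hΓ : IsCompact Γ)
    (hΓK : Γ ⊆ K)
    (hnear : ∀ x, 0 < Metric.infDist x K → ∀ z ∈ K, dist x z = Metric.infDist x K → z ∈ Γ)
    (hch : ∀ p ∈ Γ, ∃ (c : Chart K) (W : Set E2), IsOpen W ∧ p ∈ W ∧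
      Γ ∩ W ⊆ c.γ '' Ioo c.a c.b) :
    ∃ (g : ℝ → ℝ≥0∞) (C : ℝ), Measurable g ∧ 0 ≤ C ∧
      (∀ T : Set ℝ, MeasurableSet T → T ⊆ Ioi 0 →
        volume {x | Metric.infDist x K ∈ T} = ∫⁻ t in T, g t) ∧
      (∀ᵐ t : ℝ, 0 < t → μH[1] {x | Metric.infDist x K = t} = g t) ∧
      (∀ t, 0 ≤ t → g t ≤ μH[1] Γ + ENNReal.ofReal (t * C)) ∧ μH[1] Γ < ⊤ := by
  classical
  haveI : Nonempty (Chart K) := ⟨{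
    a := 0, b := 0, C := 0, γ := fun _ => 0, ν := fun _ => 0
    mγ := measurable_const, mν := measurable_const
    dγ := by simp, dν := by simp, bγ := by simp, bν := by simp, inj := by simp [InjOn]
    nν := by simp, oγ := by simp, oν := by simp, np := by simp }⟩
  choose! c W hWo hpW hWs using hch
  obtain ⟨F, hFΓ, hF⟩ := hΓ.elim_nhds_subcover W (fun p hp => (hWo p hp).mem_nhds (hpW p hp))
  set n := F.card
  let e : Fin n ≃ F := F.equivFin.symm
  let ch : Fin n → Chart K := fun k => c (e k).1
  let W' : Fin n → Set E2 := fun k => W (e k).1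
  let P : Fin n → Set E2 := fun k => (Γ ∩ W' k) \ ⋃ j : Fin n, ⋃ (_ : j < k), W' j
  have heΓ : ∀ k, (e k).1 ∈ Γ := fun k => hFΓ _ (e k).2
  have hW'o : ∀ k, IsOpen (W' k) := fun k => hWo _ (heΓ k)
  have hPm : ∀ k, MeasurableSet (P k) := fun k =>
    (hΓ.measurableSet.inter (hW'o k).measurableSet).diff
      (MeasurableSet.iUnion fun j => MeasurableSet.iUnion fun _ => (hW'o j).measurableSet)
  have hPΓ : ∀ k, P k ⊆ Γ := fun k x hx => hx.1.1
  have hPd : ∀ j k, j ≠ k → ∀ x, x ∈ P j → x ∈ P k → False := by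
    have : ∀ j k, j < k → ∀ x, x ∈ P j → x ∈ P k → False := by
      intro j k hjk x hj hk
      exact hk.2 (mem_iUnion.2 ⟨j, mem_iUnion.2 ⟨hjk, hj.1.2⟩⟩)
    intro j k hjk x hj hk
    rcases lt_or_gt_of_ne hjk with h | h
    · exact this j k h x hj hk
    · exact this k j h x hk hj
  have hPu : ∀ x ∈ Γ, ∃ k, x ∈ P k := by
    intro x hx
    have hex : ∃ k, x ∈ W' k := by
      obtain ⟨p, hp, hxp⟩ := mem_iUnion₂.1 (hF hx)
      refine ⟨e.symm ⟨p, hp⟩, ?_⟩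
      simpa [W'] using hxp
    have hne : (Finset.univ.filter fun k => x ∈ W' k).Nonempty := by
      obtain ⟨k, hk⟩ := hex
      exact ⟨k, by simpa using hk⟩
    set k := (Finset.univ.filter fun k => x ∈ W' k).min' hne
    refine ⟨k, ⟨hx, ?_⟩, ?_⟩
    · have := Finset.min'_mem _ hne
      simpa using this
    · intro h
      obtain ⟨j, hj⟩ := mem_iUnion.1 h
      obtain ⟨hjk, hxj⟩ := mem_iUnion.1 hj
      exact absurd (Finset.min'_le _ j (by simpa using hxj)) (not_le.2 hjk)
  let E : Fin n → Set ℝ := fun k => Ioo (ch k).a (ch k).b ∩ (ch k).γ ⁻¹' (P k)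
  have hE : ∀ k, E k ⊆ Ioo (ch k).a (ch k).b := fun k => inter_subset_left
  have hEm : ∀ k, MeasurableSet (E k) := fun k => measurableSet_Ioo.inter ((ch k).mγ (hPm k))
  have hγP : ∀ k, ∀ s ∈ E k, (ch k).γ s ∈ P k := fun k s hs => hs.2
  have hγK : ∀ k, ∀ s ∈ E k, (ch k).γ s ∈ K := fun k s hs => hΓK (hPΓ k hs.2)
  have hEP : ∀ k, (ch k).γ '' E k = P k := by
    intro k
    ext x
    constructor
    · rintro ⟨s, hs, rfl⟩; exact hs.2
    · intro hx
      obtain ⟨s, hs, rfl⟩ := hWs _ (heΓ k) ⟨hx.1.1, hx.1.2⟩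
      exact ⟨s, ⟨hs, hx⟩, rfl⟩
  have hΓsum : μH[1] Γ = ∑ k, μH[1] (P k) := by
    have : Γ = ⋃ k, P k := by
      ext x
      exact ⟨fun hx => mem_iUnion.2 (hPu x hx), fun hx => by
        obtain ⟨k, hk⟩ := mem_iUnion.1 hx; exact hPΓ k hk⟩
    rw [this, measure_iUnion _ hPm, tsum_fintype]
    intro j k hjk
    exact Set.disjoint_left.2 fun x hj hk => hPd j k hjk x hj hk
  -- decomposition of level sets
  have hdec : ∀ T ⊆ Ioi (0:ℝ), {x | Metric.infDist x K ∈ T} =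
      (⋃ k, (ch k).Phi '' ((ch k).So (E k) ∩ Prod.snd ⁻¹' T)) ∪
      ⋃ k, (ch k).Phi '' (((ch k).S (E k) \ (ch k).So (E k)) ∩ Prod.snd ⁻¹' T) := by
    intro T hT
    ext x
    constructor
    · intro hx
      have hx0 : 0 < Metric.infDist x K := hT hx
      obtain ⟨z, hz, hzd⟩ := hK.exists_infDist_eq_dist hKn x
      obtain ⟨k, hk⟩ := hPu z (hnear x hx0 z hz hzd.symm)
      rw [← hEP k] at hk
      obtain ⟨s, hs, rfl⟩ := hk
      have hx2 := (ch k).np x hx0 s (hE k hs) hzd.symm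
      have hS : (s, Metric.infDist x K) ∈ (ch k).S (E k) := by
        refine ⟨hs, hx0, ?_⟩
        show Metric.infDist ((ch k).γ s + Metric.infDist x K • (ch k).ν s) K = Metric.infDist x K
        rw [← hx2]
      by_cases ho : (s, Metric.infDist x K) ∈ (ch k).So (E k)
      · exact Or.inl (mem_iUnion.2 ⟨k, _, ⟨ho, hx⟩, hx2.symm⟩)
      · exact Or.inr (mem_iUnion.2 ⟨k, _, ⟨⟨hS, ho⟩, hx⟩, hx2.symm⟩)
    · rintro (hx | hx)
      · obtain ⟨k, p, ⟨hp, hpT⟩, rfl⟩ := mem_iUnion.1 hx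
        have := ((ch k).So_sub_S (hE k) (hγK k) hp).2.2
        simp only [mem_ofPred_eq, this]
        exact hpT
      · obtain ⟨k, p, ⟨hp, hpT⟩, rfl⟩ := mem_iUnion.1 hx
        have := hp.1.2.2
        simp only [mem_ofPred_eq, this]
        exact hpT
  have hdisj : ∀ T, Pairwise (Function.onFun Disjoint
      fun k => (ch k).Phi '' ((ch k).So (E k) ∩ Prod.snd ⁻¹' T)) := by
    intro T j k hjk
    refine Set.disjoint_left.2 ?_
    rintro x ⟨⟨s, t⟩, ⟨h, -⟩, rfl⟩ ⟨⟨s', t'⟩, ⟨h', -⟩, hh⟩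
    have h1 := ((ch j).So_sub_S (hE j) (hγK j) h)
    have h1' := ((ch k).So_sub_S (hE k) (hγK k) h')
    have e : t = t' := by
      have e1 := h1.2.2
      have e2 := h1'.2.2
      simp only at e1 e2
      rw [← e1, ← e2, hh]
    have := (ch j).So_uniq (hE j) (hγK j) h (hγK k s' h'.1) (by
      rw [← hh, (ch k).dist_Phi (hE k) h'.1 h'.2.1, e])
    exact hPd j k hjk _ (hγP j s h.1) (this ▸ hγP k s' h'.1)
  have hmeas : ∀ (μ : Measure E2) (T : Set ℝ), MeasurableSet T → T ⊆ Ioi 0 →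
      (∀ k, μ ((ch k).Phi '' (((ch k).S (E k) \ (ch k).So (E k)) ∩ Prod.snd ⁻¹' T)) = 0) →
      μ {x | Metric.infDist x K ∈ T} =
        ∑ k, μ ((ch k).Phi '' ((ch k).So (E k) ∩ Prod.snd ⁻¹' T)) := by
    intro μ T hT hT0 h0
    have hun : ∀ A B : Set E2, μ B = 0 → μ (A ∪ B) = μ A := fun A B h =>
      le_antisymm ((measure_union_le A B).trans (by rw [h, add_zero]))
        (measure_mono subset_union_left)
    rw [hdec T hT0, hun _ _ (measure_iUnion_null h0), measure_iUnion (hdisj T)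
      (fun k => (ch k).measurableSet_image_So (hE k) (hγK k) (hEm k) hT), tsum_fintype]
  refine ⟨fun t => ∑ k, (ch k).len (E k) t, ∑ k, (|(ch k).C| * |(ch k).b - (ch k).a|),
    ?_, ?_, ?_, ?_, ?_, ?_⟩
  · exact Finset.measurable_sum _ fun k _ => (ch k).measurable_len (hEm k)
  · positivity
  · intro T hT hT0
    rw [hmeas volume T hT hT0 fun k => measure_mono_null (image_mono inter_subset_left)
      ((ch k).vol_null (hE k) (hγK k) (hEm k)), lintegral_finsetSum _
        fun k _ => (ch k).measurable_len (hEm k)]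
    exact Finset.sum_congr rfl fun k _ => (ch k).vol_So (hE k) (hγK k) (hEm k) hT
  · have h0 := ae_all_iff.2 fun k => (ch k).haus_null (hE k) (hγK k) (hEm k)
    filter_upwards [h0] with t ht ht0
    have := hmeas μH[1] {t} (measurableSet_singleton t) (by simpa using ht0) ht
    simp only [mem_singleton_iff] at this
    rw [this]
    exact Finset.sum_congr rfl fun k _ => (ch k).haus_So (hE k) (hγK k) (hEm k) t
  · intro t ht
    rw [hΓsum, Finset.mul_sum, ENNReal.ofReal_sum_of_nonneg fun k _ => by positivity,
      ← Finset.sum_add_distrib]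
    refine Finset.sum_le_sum fun k _ => ?_
    rw [← hEP k]
    exact (ch k).len_le (hE k) (hEm k) ht
  · rw [hΓsum]
    refine ENNReal.sum_lt_top.2 fun k _ => ?_
    rw [← hEP k]
    exact (ch k).haus_E_lt (hE k) (hEm k)

/-! ### Smooth boundaries give charts -/

lemma normal_nearest {Ω U : Set E2} {f : E2 → ℝ} {x z D : E2} (hU : IsOpen U) (hzU : z ∈ U)
    (hfz : f z = 0) (hD : HasFDerivAt f (innerSL ℝ D) z) (hD0 : D ≠ 0)
    (hΩ : Ω ∩ U = {y | y ∈ U ∧ f y < 0})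
    (hx : dist x z = Metric.infDist x (closure Ω)) :
    x = z + Metric.infDist x (closure Ω) • (‖D‖⁻¹ • D) := by
  set v := x - z with hv
  have hvn : ‖v‖ = Metric.infDist x (closure Ω) := by rw [← hx, dist_eq_norm]
  have key : ∀ w : E2, inner ℝ D w < 0 → inner ℝ v w ≤ 0 := by
    intro w hw
    have hd : HasDerivAt (fun e : ℝ => f (z + e • w)) (inner ℝ D w) 0 := by
      have h1 : HasDerivAt (fun e : ℝ => z + e • w) w 0 := by
        simpa using ((hasDerivAt_id (0:ℝ)).smul_const w).const_add z
      have h2 : HasFDerivAt f (innerSL ℝ D) (z + (0:ℝ) • w) := by simpa using hD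
      exact h2.comp_hasDerivAt (0:ℝ) h1
    have hev1 : ∀ᶠ e : ℝ in 𝓝[>] 0, f (z + e • w) < 0 := by
      have := (hasDerivAt_iff_tendsto_slope.1 hd).mono_left
        (nhdsWithin_mono 0 (show Ioi (0:ℝ) ⊆ {0}ᶜ from fun e he => ne_of_gt he))
      filter_upwards [this.eventually_lt_const hw, self_mem_nhdsWithin] with e he he0
      have he0 : 0 < e := he0
      simp only [slope_def_field, zero_smul, add_zero, hfz, sub_zero] at he
      by_contra hcon
      exact absurd he (not_lt.2 (div_nonneg (not_lt.1 hcon) he0.le))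
    have hev2 : ∀ᶠ e : ℝ in 𝓝[>] 0, z + e • w ∈ U := by
      have hc : Continuous (fun e : ℝ => z + e • w) := by fun_prop
      have := hc.tendsto 0
      simp only [zero_smul, add_zero] at this
      exact (this.mono_left nhdsWithin_le_nhds) (hU.mem_nhds hzU)
    have hev3 : ∀ᶠ e : ℝ in 𝓝[>] 0, inner ℝ v w ≤ e * ‖w‖ ^ 2 / 2 := by
      filter_upwards [hev1, hev2, self_mem_nhdsWithin] with e h1 h2 h3
      have h3 : 0 < e := h3
      have hm : z + e • w ∈ Ω := by
        have : z + e • w ∈ Ω ∩ U := by rw [hΩ]; exact ⟨h2, h1⟩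
        exact this.1
      have h4 : ‖v‖ ≤ ‖v - e • w‖ := by
        rw [hvn]
        refine (Metric.infDist_le_dist_of_mem (subset_closure hm)).trans (le_of_eq ?_)
        rw [dist_eq_norm]; congr 1; rw [hv]; abel
      have h5 : ‖v‖ ^ 2 ≤ ‖v - e • w‖ ^ 2 := by gcongr
      rw [norm_sub_sq_real v, inner_smul_right, norm_smul, mul_pow, Real.norm_eq_abs, sq_abs] at h5
      have : e * (2 * inner ℝ v w) ≤ e * (e * ‖w‖ ^ 2) := by nlinarith
      have := le_of_mul_le_mul_left this h3
      linarith
    have hlim : Filter.Tendsto (fun e : ℝ => e * ‖w‖ ^ 2 / 2) (𝓝[>] 0) (𝓝 0) := by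
      have hc : Continuous (fun e : ℝ => e * ‖w‖ ^ 2 / 2) := by fun_prop
      have := hc.tendsto 0
      simp only [zero_mul, zero_div] at this
      exact this.mono_left nhdsWithin_le_nhds
    exact ge_of_tendsto hlim hev3
  have hDn : 0 < ‖D‖ := norm_pos_iff.2 hD0
  have h1 : 0 ≤ inner ℝ v D := by
    have := key (-D) (by rw [inner_neg_right, real_inner_self_eq_norm_sq]; nlinarith)
    rw [inner_neg_right] at this; linarith
  have h2 : ‖v‖ ^ 2 * ‖D‖ ^ 2 ≤ inner ℝ v D ^ 2 := by
    have h3 : ∀ δ : ℝ, 0 < δ → ‖v‖ ^ 2 * ‖D‖ ^ 2 - inner ℝ v D ^ 2 ≤ δ * inner ℝ v D := by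
      intro δ hδ
      have := key (‖D‖ ^ 2 • v - (inner ℝ v D + δ) • D) (by
        rw [inner_sub_right, inner_smul_right, inner_smul_right, real_inner_self_eq_norm_sq,
          real_inner_comm]
        have : 0 < δ * ‖D‖ ^ 2 := by positivity
        nlinarith)
      rw [inner_sub_right, inner_smul_right, inner_smul_right, real_inner_self_eq_norm_sq] at this
      nlinarith
    by_contra hcon
    push Not at hcon
    have h4 := h3 ((‖v‖ ^ 2 * ‖D‖ ^ 2 - inner ℝ v D ^ 2) / (2 * (inner ℝ v D + 1)))
      (div_pos (by linarith) (by linarith))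
    rw [div_mul_eq_mul_div, le_div_iff₀ (by linarith)] at h4
    nlinarith
  have h3 : inner ℝ v D = ‖v‖ * ‖D‖ := by
    refine le_antisymm (real_inner_le_norm v D) ?_
    refine le_of_sq_le_sq ?_ h1
    rw [mul_pow]; exact h2
  have h4 := inner_eq_norm_mul_iff_real.1 h3
  have h5 : v = ‖v‖ • (‖D‖⁻¹ • D) := by
    rw [smul_comm, ← h4, smul_smul, inv_mul_cancel₀ hDn.ne', one_smul]
  rw [← hvn, ← h5, hv]; abel

/-- The gradient in coordinates. -/
def grad2 (f : E2 → ℝ) (y : E2) : E2 :=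
  fderiv ℝ f y (EuclideanSpace.single 0 1) • EuclideanSpace.single 0 1 +
  fderiv ℝ f y (EuclideanSpace.single 1 1) • EuclideanSpace.single 1 1

lemma grad2_inner (f : E2 → ℝ) (y : E2) : innerSL ℝ (grad2 f y) = fderiv ℝ f y := by
  ext w
  have hw : w = w 0 • EuclideanSpace.single 0 (1:ℝ) + w 1 • EuclideanSpace.single 1 (1:ℝ) := by
    ext i; fin_cases i <;> simp
  conv_rhs => rw [hw, map_add, map_smul, map_smul]
  rw [innerSL_apply_apply, inner_E2]
  simp [grad2, mul_comm]

lemma grad2_contDiff {f : E2 → ℝ} (hf : ContDiff ℝ (⊤ : ℕ∞) f) : ContDiff ℝ 1 (grad2 f) := by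
  have h : ContDiff ℝ 1 (fderiv ℝ f) :=
    hf.fderiv_right (m := 1) (WithTop.coe_le_coe.2 (le_top (a := (1 + 1 : ℕ∞))))
  unfold grad2
  exact ((h.clm_apply contDiff_const).smul contDiff_const).add
    ((h.clm_apply contDiff_const).smul contDiff_const)

lemma eventually_deriv_bound {F : ℝ → E2} {s₀ : ℝ} (hF : ContDiffAt ℝ 1 F s₀) :
    ∀ᶠ s in 𝓝 s₀, DifferentiableAt ℝ F s ∧ ‖deriv F s‖ ≤ ‖deriv F s₀‖ + 1 := by
  have h1 : ∀ᶠ s in 𝓝 s₀, DifferentiableAt ℝ F s :=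
    (hF.eventually (by simp)).mono fun s hs => hs.differentiableAt (by simp)
  have h2 : ContinuousAt (deriv F) s₀ := by
    have := (hF.fderiv_right (m := 0) (by simp)).continuousAt
    exact (this.clm_apply continuousAt_const : ContinuousAt (fun s => fderiv ℝ F s 1) s₀)
  have h3 := (h2.norm).eventually_lt_const (lt_add_one ‖deriv F s₀‖)
  exact h1.and (h3.mono fun s hs => hs.le)

/-- Local parametrisation of a regular level set. -/
lemma local_param {f : E2 → ℝ} (hf : ContDiff ℝ (⊤ : ℕ∞) f) {p : E2} (hfp : f p = 0)
    (hD : grad2 f p ≠ 0) : ∃ (γ : ℝ → E2) (τ : E2) (V : Set E2), IsOpen V ∧ p ∈ V ∧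
      ContDiffAt ℝ 1 γ (inner ℝ p τ) ∧ γ (inner ℝ p τ) = p ∧
      (∀ᶠ s in 𝓝 (inner ℝ p τ), f (γ s) = 0) ∧
      (∃ σ : E2 → ℝ, ∀ᶠ s in 𝓝 (inner ℝ p τ), σ (γ s) = s) ∧
      (∀ y ∈ V, f y = 0 → y = γ (inner ℝ y τ)) := by
  set a := grad2 f p with ha
  have ha0 : 0 < ‖a‖ := norm_pos_iff.2 hD
  set u : E2 := ‖a‖⁻¹ • a with hu
  have hu1 : ‖u‖ = 1 := by rw [hu, norm_smul, norm_inv, norm_norm, inv_mul_cancel₀ ha0.ne']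
  have huu : u 0 * u 0 + u 1 * u 1 = 1 := by
    rw [← inner_E2, real_inner_self_eq_norm_sq, hu1, one_pow]
  set τ : E2 := !₂[-u 1, u 0] with hτ
  have hτ0 : τ 0 = -u 1 := by simp [hτ]
  have hτ1 : τ 1 = u 0 := by simp [hτ]
  have hdec : ∀ y : E2, y - (inner ℝ u y) • u = (inner ℝ y τ) • τ := by
    intro y
    ext i
    fin_cases i
    · simp [inner_E2, hτ0, hτ1]; linear_combination (-y 0) * huu
    · simp [inner_E2, hτ0, hτ1]; linear_combination (-y 1) * huu
  have huτ : inner ℝ u τ = 0 := by rw [inner_E2, hτ0, hτ1]; ring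
  have hττ : inner ℝ τ τ = 1 := by rw [inner_E2, hτ0, hτ1]; linarith
  let G : E2 → E2 := fun y => y + (‖a‖⁻¹ * f y - inner ℝ u y) • u
  have hGu : ∀ y, inner ℝ u (G y) = ‖a‖⁻¹ * f y := by
    intro y
    simp only [G]
    rw [inner_add_right, inner_smul_right, real_inner_self_eq_norm_sq, hu1]; ring
  have hG0 : ∀ y, f y = 0 → G y = (inner ℝ y τ) • τ := by
    intro y hy
    rw [← hdec y]; simp only [G, hy, mul_zero, zero_sub, neg_smul]; abel
  have hGc : ContDiffAt ℝ 1 G p := by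
    have h1 : ContDiff ℝ 1 f := hf.of_le (by exact_mod_cast le_top)
    have h2 : ContDiff ℝ 1 (fun y : E2 => inner ℝ u y) := contDiff_const.inner ℝ contDiff_id
    exact (contDiff_id.add (((contDiff_const.mul h1).sub h2).smul contDiff_const)).contDiffAt
  have hGd : HasFDerivAt G ((ContinuousLinearEquiv.refl ℝ E2 : E2 ≃L[ℝ] E2) : E2 →L[ℝ] E2) p := by
    have h1 : HasFDerivAt f (innerSL ℝ a) p := by
      rw [ha, grad2_inner]
      exact (hf.differentiable (by simp)).differentiableAt.hasFDerivAt
    have h2 : HasFDerivAt (fun y : E2 => inner ℝ u y) (innerSL ℝ u) p :=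
      (innerSL ℝ u).hasFDerivAt
    have h3 := (hasFDerivAt_id p).add (((h1.const_mul ‖a‖⁻¹).sub h2).smul_const u)
    refine h3.congr_fderiv ?_
    ext w : 1
    simp [hu]
  let P := hGc.toOpenPartialHomeomorph G hGd one_ne_zero
  have hPp : p ∈ P.source := hGc.mem_toOpenPartialHomeomorph_source hGd one_ne_zero
  have hPG : ∀ y, P y = G y := fun y => rfl
  have hinv : ContDiffAt ℝ 1 P.symm (G p) := hGc.to_localInverse hGd one_ne_zero
  have hGp : G p = (inner ℝ p τ) • τ := hG0 p hfp
  have hev : ∀ᶠ s in 𝓝 (inner ℝ p τ : ℝ), G (P.symm (s • τ)) = s • τ := by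
    have hc : Continuous (fun s : ℝ => s • τ) := by fun_prop
    have ht : (inner ℝ p τ : ℝ) • τ ∈ P.target := by
      rw [← hGp, ← hPG]; exact P.map_source hPp
    filter_upwards [hc.continuousAt.preimage_mem_nhds (P.open_target.mem_nhds ht)] with s hs
    rw [← hPG]; exact P.right_inv hs
  refine ⟨fun s => P.symm (s • τ), τ, P.source, P.open_source, hPp, ?_, ?_, ?_, ?_, ?_⟩
  · rw [hGp] at hinv
    exact hinv.comp (inner ℝ p τ : ℝ) ((contDiff_id.smul contDiff_const).contDiffAt)
  · show P.symm _ = p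
    rw [← hGp, ← hPG]; exact P.left_inv hPp
  · filter_upwards [hev] with s hs
    have h1 := hGu (P.symm (s • τ))
    rw [hs, inner_smul_right, huτ, mul_zero] at h1
    rcases mul_eq_zero.1 h1.symm with h | h
    · exact absurd h (inv_ne_zero ha0.ne')
    · exact h
  · refine ⟨fun y => inner ℝ (G y) τ, hev.mono fun s hs => ?_⟩
    show inner ℝ (G (P.symm (s • τ))) τ = s
    rw [hs, real_inner_smul_left, hττ, mul_one]
  · intro y hy hfy
    show y = P.symm _
    rw [← hG0 y hfy, ← hPG]
    exact (P.left_inv hy).symm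

lemma frontier_level {Ω U : Set E2} {f : E2 → ℝ} (hop : IsOpen Ω) (hU : IsOpen U)
    (hf : Continuous f) (hΩ : Ω ∩ U = {y | y ∈ U ∧ f y < 0}) {y : E2} (hy : y ∈ frontier Ω)
    (hyU : y ∈ U) : f y = 0 := by
  rw [hop.frontier_eq] at hy
  refine le_antisymm ?_ ?_
  · have h1 : y ∈ closure (Ω ∩ U) := by
      rw [inter_comm]; exact hU.inter_closure ⟨hyU, hy.1⟩
    have h2 : Ω ∩ U ⊆ {y | f y ≤ 0} := by
      rw [hΩ]; exact fun z hz => hz.2.le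
    exact closure_minimal h2 (isClosed_le hf continuous_const) h1
  · by_contra hcon
    have : y ∈ Ω ∩ U := by rw [hΩ]; exact ⟨hyU, not_le.1 hcon⟩
    exact hy.2 this.1

lemma exists_chart {Ω : Set E2} (hop : IsOpen Ω) (hsm : HasSmoothBoundary Ω) {p : E2}
    (hp : p ∈ frontier Ω) : ∃ (c : Chart (closure Ω)) (W : Set E2), IsOpen W ∧ p ∈ W ∧
      frontier Ω ∩ W ⊆ c.γ '' Ioo c.a c.b := by
  obtain ⟨U, f, hU, hpU, hf, hdf, hΩ⟩ := hsm p hp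
  have hfc : Continuous f := hf.continuous
  have hD : ∀ y ∈ U, grad2 f y ≠ 0 := by
    intro y hy h
    refine hdf y hy ?_
    rw [← grad2_inner, h, map_zero]
  have hDd : ∀ y, HasFDerivAt f (innerSL ℝ (grad2 f y)) y := by
    intro y
    rw [grad2_inner]
    exact (hf.differentiable (by simp)).differentiableAt.hasFDerivAt
  obtain ⟨γ, τ, V, hV, hpV, hγc, hγp, hγ0, ⟨σ, hσ⟩, hγV⟩ :=
    local_param hf (frontier_level hop hU hfc hΩ hp hpU) (hD p hpU)
  set s₀ : ℝ := inner ℝ p τ with hs₀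
  let ν : ℝ → E2 := fun s => ‖grad2 f (γ s)‖⁻¹ • grad2 f (γ s)
  have hνc : ContDiffAt ℝ 1 ν s₀ := by
    have h1 : ContDiffAt ℝ 1 (fun s => grad2 f (γ s)) s₀ :=
      (grad2_contDiff hf).contDiffAt.comp s₀ hγc
    have h0 : grad2 f (γ s₀) ≠ 0 := by rw [hγp]; exact hD p hpU
    exact ((h1.norm ℝ h0).inv (norm_ne_zero_iff.2 h0)).smul h1
  have hγU : ∀ᶠ s in 𝓝 s₀, γ s ∈ U :=
    hγc.continuousAt.preimage_mem_nhds (hU.mem_nhds (by rw [hγp]; exact hpU))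
  have hall := (eventually_deriv_bound hγc).and ((eventually_deriv_bound hνc).and
    (hγU.and (hγ0.and hσ)))
  obtain ⟨ε, hε, hball⟩ := Metric.eventually_nhds_iff_ball.1 hall
  rw [Real.ball_eq_Ioo] at hball
  set I := Ioo (s₀ - ε) (s₀ + ε) with hI
  have hIo : IsOpen I := isOpen_Ioo
  have hνn : ∀ s ∈ I, ‖ν s‖ = 1 := by
    intro s hs
    have : ‖grad2 f (γ s)‖ ≠ 0 := norm_ne_zero_iff.2 (hD _ (hball s hs).2.2.1)
    simp only [ν]
    rw [norm_smul, norm_inv, norm_norm, inv_mul_cancel₀ this]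
  have hmeas : ∀ F : ℝ → E2, (∀ s ∈ I, DifferentiableAt ℝ F s) → Measurable (I.indicator F) := by
    intro F hF
    have h1 : ContinuousOn F I := fun s hs => (hF s hs).continuousAt.continuousWithinAt
    classical
    rw [← piecewise_eq_indicator]
    exact h1.measurable_piecewise continuousOn_const measurableSet_Ioo
  have hevI : ∀ F : ℝ → E2, ∀ s ∈ I, I.indicator F =ᶠ[𝓝 s] F := by
    intro F s hs
    filter_upwards [hIo.mem_nhds hs] with t ht
    exact indicator_of_mem ht F
  have hderI : ∀ F : ℝ → E2, ∀ s ∈ I, deriv (I.indicator F) s = deriv F s :=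
    fun F s hs => (hevI F s hs).deriv_eq
  refine ⟨{
    a := s₀ - ε
    b := s₀ + ε
    C := max (‖deriv γ s₀‖ + 1) (‖deriv ν s₀‖ + 1)
    γ := I.indicator γ
    ν := I.indicator ν
    mγ := hmeas γ fun s hs => (hball s hs).1.1
    mν := hmeas ν fun s hs => (hball s hs).2.1.1
    dγ := fun s hs => (hball s hs).1.1.congr_of_eventuallyEq (hevI γ s hs)
    dν := fun s hs => (hball s hs).2.1.1.congr_of_eventuallyEq (hevI ν s hs)
    bγ := fun s hs => by
      rw [hderI γ s hs]; exact (hball s hs).1.2.trans (le_max_left _ _)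
    bν := fun s hs => by
      rw [hderI ν s hs]; exact (hball s hs).2.1.2.trans (le_max_right _ _)
    inj := ?_
    nν := fun s hs => by
      rw [indicator_of_mem (show s ∈ I from hs)]; exact hνn s hs
    oγ := ?_
    oν := ?_
    np := ?_ }, U ∩ V ∩ {y | inner ℝ y τ ∈ I}, ?_, ?_, ?_⟩
  · intro s hs t ht hst
    rw [indicator_of_mem (show s ∈ I from hs), indicator_of_mem (show t ∈ I from ht)] at hst
    rw [← (hball s hs).2.2.2.2, hst, (hball t ht).2.2.2.2]
  · intro s hs
    rw [hderI γ s hs, indicator_of_mem (show s ∈ I from hs)]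
    have h1 : HasDerivAt (fun t => f (γ t)) (inner ℝ (grad2 f (γ s)) (deriv γ s)) s :=
      (hDd (γ s)).comp_hasDerivAt s (hball s hs).1.1.hasDerivAt
    have h2 : HasDerivAt (fun t => f (γ t)) 0 s := by
      refine (hasDerivAt_const s (0:ℝ)).congr_of_eventuallyEq ?_
      filter_upwards [hIo.mem_nhds hs] with t ht
      exact (hball t ht).2.2.2.1
    simp only [ν]
    rw [inner_smul_right, real_inner_comm, h1.unique h2, mul_zero]
  · intro s hs
    rw [hderI ν s hs, indicator_of_mem (show s ∈ I from hs)]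
    have hd := (hball s hs).2.1.1.hasDerivAt
    have h1 := hd.inner ℝ hd
    have h2 : HasDerivAt (fun t => (inner ℝ (ν t) (ν t) : ℝ)) 0 s := by
      refine (hasDerivAt_const s (1:ℝ)).congr_of_eventuallyEq ?_
      filter_upwards [hIo.mem_nhds hs] with t ht
      rw [real_inner_self_eq_norm_sq, hνn t ht, one_pow]
    have h3 := h1.unique h2
    rw [real_inner_comm] at h3
    linarith
  · intro x hx s hs hd
    rw [indicator_of_mem (show s ∈ I from hs)] at hd ⊢
    rw [indicator_of_mem (show s ∈ I from hs)]
    obtain ⟨-, -, hsU, hs0, -⟩ := hball s hs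
    exact normal_nearest hU hsU hs0 (hDd _) (hD _ hsU) hΩ hd
  · have hc : Continuous fun y : E2 => (inner ℝ y τ : ℝ) := by fun_prop
    exact (hU.inter hV).inter (hIo.preimage hc)
  · exact ⟨⟨hpU, hpV⟩, by show s₀ ∈ I; simp [hI, hε]⟩
  · rintro y ⟨hy, ⟨hyU, hyV⟩, hyI⟩
    refine ⟨inner ℝ y τ, hyI, ?_⟩
    show I.indicator γ _ = y
    rw [indicator_of_mem (show (inner ℝ y τ : ℝ) ∈ I from hyI)]
    exact (hγV y hyV (frontier_level hop hU hfc hΩ hy hyU)).symm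

lemma nearest_frontier {Ω : Set E2} (hop : IsOpen Ω) {x : E2}
    (hx : 0 < Metric.infDist x (closure Ω)) {z : E2} (hz : z ∈ closure Ω)
    (hd : dist x z = Metric.infDist x (closure Ω)) : z ∈ frontier Ω := by
  rw [hop.frontier_eq]
  refine ⟨hz, fun hzΩ => ?_⟩
  have hc : Continuous (fun e : ℝ => z + e • (x - z)) := by fun_prop
  have h1 : ∀ᶠ e : ℝ in 𝓝[>] 0, z + e • (x - z) ∈ Ω := by
    have := hc.tendsto 0
    simp only [zero_smul, add_zero] at this
    exact (this.mono_left nhdsWithin_le_nhds) (hop.mem_nhds hzΩ)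
  have h2 : ∀ᶠ e : ℝ in 𝓝[>] 0, e ∈ Ioo (0:ℝ) 1 := Ioo_mem_nhdsGT one_pos
  obtain ⟨e, he, he1⟩ := (h1.and h2).exists
  have h3 := Metric.infDist_le_dist_of_mem (x := x) (subset_closure he)
  have h4 : dist x (z + e • (x - z)) = (1 - e) * dist x z := by
    rw [dist_eq_norm, dist_eq_norm,
      show x - (z + e • (x - z)) = (1 - e) • (x - z) by rw [sub_smul, one_smul]; abel,
      norm_smul, Real.norm_eq_abs, abs_of_pos (by linarith [he1.2])]
  rw [h4, hd] at h3
  nlinarith [he1.1]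

/-! ### Assembly -/

lemma deriv_bound {F : ℝ → ℝ} {r L C B D : ℝ} (hr : 0 < r) (hF : HasDerivAt F D r)
    (h1 : ∀ h > 0, ∀ n : ℕ, F ((n + 1) * h) - F (n * h) ≤ F h + B * (n * h) * h)
    (h2 : ∀ h > 0, F h ≤ h * (L + h * C)) : D ≤ L + B * r := by
  have hs := hasDerivAt_iff_tendsto_slope_zero.1 hF
  have hu : Filter.Tendsto (fun n : ℕ => r / ((n : ℝ) + 1)) Filter.atTop (𝓝 0) := by
    have := (tendsto_one_div_add_atTop_nhds_zero_nat (𝕜 := ℝ)).const_mul r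
    simpa [mul_zero, div_eq_mul_inv] using this
  have hu' : Filter.Tendsto (fun n : ℕ => r / ((n : ℝ) + 1)) Filter.atTop (𝓝[≠] 0) := by
    refine tendsto_nhdsWithin_iff.2 ⟨hu, Filter.Eventually.of_forall fun n => ?_⟩
    have : 0 < r / ((n : ℝ) + 1) := by positivity
    exact this.ne'
  have hl := hs.comp hu'
  have hr2 : Filter.Tendsto (fun n : ℕ => L + r / ((n : ℝ) + 1) * C + B * r) Filter.atTop
      (𝓝 (L + B * r)) := by
    have := ((hu.mul_const C).const_add L).add_const (B * r)
    simpa using this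
  refine le_of_tendsto_of_tendsto' hl hr2 fun n => ?_
  have hh : 0 < r / ((n : ℝ) + 1) := by positivity
  set h := r / ((n : ℝ) + 1) with hh'
  have hn : ((n + 1 : ℕ) : ℝ) * h = r := by rw [hh']; push_cast; field_simp
  have e1 := h1 h hh (n + 1)
  rw [add_mul, hn, one_mul] at e1
  have e2 := h2 h hh
  simp only [Function.comp, smul_eq_mul]
  rw [inv_mul_le_iff₀ hh]
  nlinarith

lemma cthick_eq {K : Set E2} (hK : IsCompact K) (hKn : K.Nonempty) {t : ℝ} (ht : 0 ≤ t) :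
    Metric.cthickening t K = K ∪ {x | Metric.infDist x K ∈ Ioc 0 t} := by
  ext x
  rw [Metric.mem_cthickening_iff, ENNReal.le_ofReal_iff_toReal_le (Metric.infEDist_ne_top hKn) ht]
  change Metric.infDist x K ≤ t ↔ _
  have h0 : x ∈ K ↔ Metric.infDist x K = 0 := hK.isClosed.mem_iff_infDist_zero hKn
  have h1 : 0 ≤ Metric.infDist x K := Metric.infDist_nonneg
  rw [mem_union, h0]
  change _ ↔ _ ∨ (0 < Metric.infDist x K ∧ Metric.infDist x K ≤ t)
  constructor
  · intro h
    rcases h1.eq_or_lt with h2 | h2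
    · exact Or.inl h2.symm
    · exact Or.inr ⟨h2, h⟩
  · rintro (h | h)
    · rw [h]; exact ht
    · exact h.2

lemma infDist_frontier {Ω : Set E2} (hop : IsOpen Ω) (hK : IsCompact (closure Ω))
    (hne : Ω.Nonempty) {x : E2} (hx : x ∉ closure Ω) :
    Metric.infDist x (frontier Ω) = Metric.infDist x (closure Ω) := by
  have hx0 : 0 < Metric.infDist x (closure Ω) :=
    (isClosed_closure.notMem_iff_infDist_pos hne.closure).1 hx
  obtain ⟨z, hz, hzd⟩ := hK.exists_infDist_eq_dist hne.closure x
  have hzf := nearest_frontier hop hx0 hz hzd.symm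
  refine le_antisymm ?_ ?_
  · rw [hzd]; exact Metric.infDist_le_dist_of_mem hzf
  · exact Metric.infDist_le_infDist_of_subset frontier_subset_closure ⟨z, hzf⟩

lemma main_aux {K Γ : Set E2} (hKn : K.Nonempty) {N : ℕ} (hNC : NC N K) {g : ℝ → ℝ≥0∞} {C : ℝ}
    (hg : Measurable g) (hC : 0 ≤ C)
    (hvol : ∀ T : Set ℝ, MeasurableSet T → T ⊆ Ioi 0 →
        volume {x | Metric.infDist x K ∈ T} = ∫⁻ t in T, g t)
    (hgb : ∀ t, 0 ≤ t → g t ≤ μH[1] Γ + ENNReal.ofReal (t * C)) (hΓ : μH[1] Γ < ⊤) :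
    ∀ᵐ r : ℝ, 0 < r →
      HasDerivAt (fun ρ => (volume {x | Metric.infDist x K ∈ Ioo 0 ρ}).toReal) (g r).toReal r ∧
      (g r).toReal ≤ (μH[1] Γ).toReal + 2 * π * N * r := by
  set L := (μH[1] Γ).toReal with hL
  have hK := hNC.compact
  have hgr : ∀ t, 0 ≤ t → (g t).toReal ≤ L + t * C := by
    intro t ht
    have := ENNReal.toReal_mono (by simp [hΓ.ne]) (hgb t ht)
    rwa [ENNReal.toReal_add hΓ.ne (by simp), ENNReal.toReal_ofReal (by positivity)] at this
  have hgt : ∀ t, 0 ≤ t → g t < ⊤ := fun t ht =>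
    (hgb t ht).trans_lt (by simp [hΓ])
  have hL0 : 0 ≤ L := ENNReal.toReal_nonneg
  let φ : ℝ → ℝ := (Ioi (0:ℝ)).indicator fun t => (g t).toReal
  have hφm : Measurable φ := hg.ennreal_toReal.indicator measurableSet_Ioi
  have hφ0 : ∀ t, 0 ≤ φ t := fun t => indicator_nonneg (fun _ _ => ENNReal.toReal_nonneg) t
  have hφe : ∀ t, 0 < t → φ t = (g t).toReal := fun t ht => indicator_of_mem (show t ∈ Ioi 0 from ht) _
  have hφb : ∀ t, φ t ≤ L + |t| * C := by
    intro t
    by_cases ht : 0 < t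
    · rw [hφe t ht, abs_of_pos ht]; exact hgr t ht.le
    · have : φ t = 0 := indicator_of_notMem (by simpa using ht) _
      rw [this]; positivity
  have hφl : LocallyIntegrable φ volume := by
    have hc : Continuous fun t : ℝ => L + |t| * C := by fun_prop
    refine (hc.locallyIntegrable (μ := volume)).mono hφm.aestronglyMeasurable
      (Filter.Eventually.of_forall fun t => ?_)
    rw [Real.norm_eq_abs, Real.norm_eq_abs, abs_of_nonneg (hφ0 t)]
    exact (hφb t).trans (le_abs_self _)
  let F : ℝ → ℝ := fun ρ => ∫ t in (0:ℝ)..ρ, φ t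
  have hFI : ∀ ρ, 0 ≤ ρ → F ρ = (∫⁻ t in Ioc 0 ρ, g t).toReal := by
    intro ρ hρ
    simp only [F]
    rw [intervalIntegral.integral_of_le hρ, ← integral_toReal hg.aemeasurable]
    · exact setIntegral_congr_fun measurableSet_Ioc fun t ht => hφe t ht.1
    · exact (ae_restrict_iff' measurableSet_Ioc).2
        (Filter.Eventually.of_forall fun t ht => hgt t ht.1.le)
  have hFo : ∀ ρ, 0 ≤ ρ → (volume {x | Metric.infDist x K ∈ Ioo 0 ρ}).toReal = F ρ := by
    intro ρ hρ
    rw [hvol _ measurableSet_Ioo Ioo_subset_Ioi_self, hFI ρ hρ,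
      setLIntegral_congr Ioo_ae_eq_Ioc]
  have htube : ∀ ρ, 0 ≤ ρ → tube K ρ = volume.real K + F ρ := by
    intro ρ hρ
    have hm : MeasurableSet {x : E2 | Metric.infDist x K ∈ Ioc 0 ρ} :=
      (Metric.continuous_infDist_pt K).measurable measurableSet_Ioc
    have hfin : volume {x : E2 | Metric.infDist x K ∈ Ioc 0 ρ} ≠ ⊤ := by
      refine ne_top_of_le_ne_top (hK.cthickening (r := ρ)).measure_lt_top.ne (measure_mono ?_)
      rw [cthick_eq hK hKn hρ]; exact subset_union_right
    rw [tube_eq hK hρ, cthick_eq hK hKn hρ, measureReal_union ?_ hm hK.measure_lt_top.ne hfin]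
    · congr 1
      rw [hFI ρ hρ, ← hvol _ measurableSet_Ioc Ioc_subset_Ioi_self]; rfl
    · refine Set.disjoint_left.2 fun x hx hx' => ?_
      have := (hK.isClosed.mem_iff_infDist_zero hKn).1 hx
      exact hx'.1.ne' this
  have hF0 : F 0 = 0 := by simp [F]
  have hF1 : ∀ h > 0, ∀ n : ℕ, F ((n + 1) * h) - F (n * h) ≤ F h + (2 * π * N) * (n * h) * h := by
    intro h hh n
    have := hNC.tube_telescope hh n
    rw [htube _ (by positivity), htube _ (by positivity), htube _ hh.le, htube _ le_rfl, hF0] at this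
    linarith
  have hF2 : ∀ h > 0, F h ≤ h * (L + h * C) := by
    intro h hh
    have := intervalIntegral.integral_mono_on (μ := volume) hh.le (f := φ)
      (g := fun _ => L + h * C) ?_ (by simp) ?_
    · simp only [intervalIntegral.integral_const, sub_zero, smul_eq_mul] at this
      exact this
    · exact intervalIntegrable_iff.mpr
        ((hφl.integrableOn_isCompact isCompact_uIcc).mono_set uIoc_subset_uIcc)
    · intro t ht
      refine (hφb t).trans ?_
      rw [abs_of_nonneg ht.1]
      have := mul_le_mul_of_nonneg_right ht.2 hC
      linarith
  filter_upwards [_root_.LocallyIntegrable.ae_hasDerivAt_integral hφl] with r hr hr0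
  have hd := hr 0
  rw [hφe r hr0] at hd
  refine ⟨?_, deriv_bound hr0 hd hF1 hF2⟩
  refine hd.congr_of_eventuallyEq ?_
  filter_upwards [lt_mem_nhds hr0] with ρ hρ
  exact hFo ρ hρ.le

end Helpers

/-- Let `Ω ⊂ ℝ²` be a smooth bounded open set consisting of `N` disjoint simply connected
components, and let `A(r)` be the area of `{x ∈ Ω^ext : dist(x, ∂Ω) < r}`. Then for almost
every `r > 0`, `A'(r) = |{x ∈ Ω^ext : dist(x, ∂Ω) = r}|` (1-dimensional Hausdorff measure)
and `A'(r) ≤ |∂Ω| + 2πNr`. -/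
theorem statement10 (Ω : Set (EuclideanSpace ℝ (Fin 2)))
    (hop : IsOpen Ω) (hbd : Bornology.IsBounded Ω) (hne : Ω.Nonempty)
    (hsm : HasSmoothBoundary Ω)
    (N : ℕ) (hN : 0 < N) (Ωc : Fin N → Set (EuclideanSpace ℝ (Fin 2)))
    (hcop : ∀ i, IsOpen (Ωc i)) (hcne : ∀ i, (Ωc i).Nonempty)
    (hcconn : ∀ i, IsConnected (Ωc i)) (hcsc : ∀ i, SimplyConnectedSpace (Ωc i))
    (hdisj : ∀ i j, i ≠ j → closure (Ωc i) ∩ closure (Ωc j) = ∅)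
    (hunion : Ω = ⋃ i, Ωc i) :
    ∀ᵐ r ∂(volume.restrict (Ioi (0 : ℝ))),
      HasDerivAt
        (fun ρ : ℝ => (volume {x ∈ (closure Ω)ᶜ | Metric.infDist x (frontier Ω) < ρ}).toReal)
        ((μH[1] {x ∈ (closure Ω)ᶜ | Metric.infDist x (frontier Ω) = r}).toReal) r ∧
      (μH[1] {x ∈ (closure Ω)ᶜ | Metric.infDist x (frontier Ω) = r}).toReal ≤
        (μH[1] (frontier Ω)).toReal + 2 * π * N * r := by
  have hK : IsCompact (closure Ω) := hbd.isCompact_closure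
  have hKn : (closure Ω).Nonempty := hne.closure
  have hNC : NC N (closure Ω) := by
    refine ⟨fun i => closure (Ωc i), fun i => ?_, fun i => ?_, ?_⟩
    · refine (hbd.subset ?_).isCompact_closure
      rw [hunion]; exact subset_iUnion Ωc i
    · exact (hcconn i).isPreconnected.closure
    · rw [hunion, closure_iUnion_of_finite]
  have hΓ : IsCompact (frontier Ω) :=
    hK.of_isClosed_subset isClosed_frontier frontier_subset_closure
  obtain ⟨g, C, hg, hC, hvol, hlev, hgb, hfin⟩ := coarea hK hKn hΓ frontier_subset_closure
    (fun x hx z hz hd => nearest_frontier hop hx hz hd) (fun p hp => exists_chart hop hsm hp)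
  have hset : ∀ (P : ℝ → Prop), {x ∈ (closure Ω)ᶜ | P (Metric.infDist x (frontier Ω))} =
      {x | 0 < Metric.infDist x (closure Ω) ∧ P (Metric.infDist x (closure Ω))} := by
    intro P
    ext x
    have hpos : x ∉ closure Ω ↔ 0 < Metric.infDist x (closure Ω) :=
      isClosed_closure.notMem_iff_infDist_pos hKn
    constructor
    · rintro ⟨h1, h2⟩
      refine ⟨hpos.1 h1, ?_⟩
      rw [← infDist_frontier hop hK hne h1]; exact h2
    · rintro ⟨h1, h2⟩
      refine ⟨hpos.2 h1, ?_⟩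
      rw [infDist_frontier hop hK hne (hpos.2 h1)]; exact h2
  have hA : ∀ ρ : ℝ, {x ∈ (closure Ω)ᶜ | Metric.infDist x (frontier Ω) < ρ} =
      {x | Metric.infDist x (closure Ω) ∈ Ioo 0 ρ} := fun ρ => hset (fun d => d < ρ)
  have hB : ∀ r : ℝ, 0 < r → {x ∈ (closure Ω)ᶜ | Metric.infDist x (frontier Ω) = r} =
      {x | Metric.infDist x (closure Ω) = r} := by
    intro r hr
    rw [hset (fun d => d = r)]
    ext x
    exact ⟨fun h => h.2, fun h => ⟨by rw [show Metric.infDist x (closure Ω) = r from h]; exact hr, h⟩⟩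
  rw [ae_restrict_iff' measurableSet_Ioi]
  filter_upwards [hlev, main_aux hKn hNC hg hC hvol hgb hfin] with r h1 h2 hr
  have hr : 0 < r := hr
  simp only [hA]
  rw [hB r hr, h1 hr]
  exact h2 hr
end
end
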